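/- arXiv:1209.5840 — 4 statements merged into one kernel-verified Lean document; each statement's English description precedes it below -/
import Mathlib

section
/- Let S ⊆ ℝⁿ (n ≥ 2) be a d-set with n−1 < d < n, let 1 < p < ∞ and s > (n−d)/p, and set k = [s]+1. Then there is a constant c > 0 (depending on n, d, p, s and S) such that for every f ∈ L^p(ℝⁿ) whose trace satisfies Tr_S f = 0 ℋᵈ-almost everywhere on S, one has (∫_{ℝⁿ} |f(x)|^p / dist(x,S)^{sp} dx)^{1/p} ≤ c (‖f‖_{L^p(ℝⁿ)} + ‖f♯_{s,p}‖_{L^p(ℝⁿ)}), where f♯_{s,p}(x) := sup_{0<r≤1} r^{−s} ℰ_k(f, Q(x,r))_{L^p}. -/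
open MeasureTheory Metric Set Filter
open scoped ENNReal NNReal Topology

noncomputable section

/-- ℝⁿ, with the sup-norm (given by the product metric on `Fin n → ℝ`). -/
abbrev Rn (n : ℕ) := Fin n → ℝ

/-- `S` is an (Ahlfors) `d`-set with regularity constant `C`. -/
def IsDSet {n : ℕ} (S : Set (Rn n)) (d C : ℝ) : Prop :=
  IsClosed S ∧ 1 < C ∧ ∀ w ∈ S, ∀ r : ℝ, 0 < r → r ≤ 1 →
    ENNReal.ofReal (C⁻¹ * r ^ d) ≤ μH[d] (closedBall w r ∩ S) ∧
      μH[d] (closedBall w r ∩ S) ≤ ENNReal.ofReal (C * r ^ d)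

/-- `Tr_S f = 0` pointwise ℋᵈ-almost everywhere on `S`. -/
def TraceZero {n : ℕ} (S : Set (Rn n)) (d : ℝ) (f : Rn n → ℝ) : Prop :=
  ∀ᵐ x ∂(μH[d]).restrict S,
    Tendsto (fun r : ℝ => ⨍ y in closedBall x r, f y) (𝓝[>] 0) (𝓝 0)

/-- The normalized local best approximation `ℰ_k(f, Q(x,r))_{L^u}`. -/
def localApprox {n : ℕ} (k : ℕ) (u : ℝ) (f : Rn n → ℝ) (x : Rn n) (r : ℝ) : ℝ≥0∞ :=
  ⨅ (P : MvPolynomial (Fin n) ℝ) (_ : P.totalDegree ≤ k - 1),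
    ((volume (closedBall x r))⁻¹ *
      ∫⁻ y in closedBall x r, ENNReal.ofReal |f y - MvPolynomial.eval y P| ^ u) ^ (1 / u)

/-- The sharp maximal-type function
`f♯_{s,p}(x) = sup_{0<r≤1} r^{−s} ℰ_k(f,Q(x,r))_{L^p}` with `k = [s]+1`. -/
def fSharp {n : ℕ} (s p : ℝ) (f : Rn n → ℝ) (x : Rn n) : ℝ≥0∞ :=
  ⨆ (r : ℝ) (_ : r ∈ Set.Ioc (0:ℝ) 1),
    ENNReal.ofReal (r ^ (-s)) * localApprox (⌊s⌋₊ + 1) p f x r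

/-- The left hand side of the Hardy inequality, with distance in the sup-norm. -/
def hardyLHS {n : ℕ} (S : Set (Rn n)) (s p : ℝ) (f : Rn n → ℝ) : ℝ≥0∞ :=
  (∫⁻ x, ENNReal.ofReal (|f x| ^ p / infDist x S ^ (s * p))) ^ (1 / p)


lemma aux_affine {n : ℕ} (m : ℕ) (P : MvPolynomial (Fin n) ℝ) (hP : P.totalDegree ≤ m)
    (w : Rn n) (r : ℝ) : ∃ Q : MvPolynomial (Fin n) ℝ, Q.totalDegree ≤ m ∧
      ∀ z, MvPolynomial.eval z Q = MvPolynomial.eval (w + r • z) P := by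
  refine ⟨∑ a ∈ P.support, MvPolynomial.C (P.coeff a) *
    ∏ i, (MvPolynomial.C (w i) + MvPolynomial.C r * MvPolynomial.X i) ^ (a i), ?_, ?_⟩
  · refine (MvPolynomial.totalDegree_finsetSum _ _).trans (Finset.sup_le fun a ha => ?_)
    refine (MvPolynomial.totalDegree_mul _ _).trans ?_
    rw [MvPolynomial.totalDegree_C, zero_add]
    refine (MvPolynomial.totalDegree_finsetProd _ _).trans ?_
    have h1 : (a.sum fun _ e => e) ≤ m := (MvPolynomial.le_totalDegree ha).trans hP
    rw [Finsupp.sum_fintype _ _ (by simp)] at h1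
    refine le_trans (Finset.sum_le_sum fun i _ => ?_) h1
    refine (MvPolynomial.totalDegree_pow _ _).trans ?_
    have : (MvPolynomial.C (w i) + MvPolynomial.C r * MvPolynomial.X i :
        MvPolynomial (Fin n) ℝ).totalDegree ≤ 1 := by
      refine (MvPolynomial.totalDegree_add _ _).trans (max_le (by simp) ?_)
      refine (MvPolynomial.totalDegree_mul _ _).trans ?_
      simp
    calc _ ≤ a i * 1 := Nat.mul_le_mul_left _ this
      _ = a i := by simp
  · intro z
    rw [MvPolynomial.eval_eq' (w + r • z) P]
    simp

lemma aux_line {n : ℕ} (m : ℕ) (P : MvPolynomial (Fin n) ℝ) (hP : P.totalDegree ≤ m)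
    (y v : Rn n) : ∃ q : Polynomial ℝ, q.natDegree ≤ m ∧
      ∀ t, q.eval t = MvPolynomial.eval (y + t • v) P := by
  refine ⟨∑ a ∈ P.support, Polynomial.C (P.coeff a) *
    ∏ i, (Polynomial.C (y i) + Polynomial.X * Polynomial.C (v i)) ^ (a i), ?_, ?_⟩
  · refine Polynomial.natDegree_sum_le_of_forall_le _ _ fun a ha => ?_
    refine (Polynomial.natDegree_C_mul_le _ _).trans ?_
    refine (Polynomial.natDegree_prod_le _ _).trans ?_
    have h1 : (a.sum fun _ e => e) ≤ m := (MvPolynomial.le_totalDegree ha).trans hP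
    rw [Finsupp.sum_fintype _ _ (by simp)] at h1
    refine le_trans (Finset.sum_le_sum fun i _ => ?_) h1
    refine (Polynomial.natDegree_pow_le).trans ?_
    have : (Polynomial.C (y i) + Polynomial.X * Polynomial.C (v i) : Polynomial ℝ).natDegree ≤ 1 := by
      compute_degree
    calc _ ≤ a i * 1 := Nat.mul_le_mul_left _ this
      _ = a i := by simp
  · intro t
    rw [MvPolynomial.eval_eq' (y + t • v) P]
    simp only [Polynomial.eval_finsetSum, Polynomial.eval_prod, Polynomial.eval_mul, Polynomial.eval_C, Polynomial.eval_pow, Polynomial.eval_add, Polynomial.eval_X, Pi.add_apply, Pi.smul_apply, smul_eq_mul]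

lemma aux_richardson (n m : ℕ) : ∃ lam : ℕ → ℝ, ∀ P : MvPolynomial (Fin n) ℝ, P.totalDegree ≤ m →
    ∀ y v : Rn n, ∑ l ∈ Finset.range (m+1), lam l * MvPolynomial.eval (y + ((1/2:ℝ)^l) • v) P
      = MvPolynomial.eval y P := by
  refine ⟨fun l => (Lagrange.basis (Finset.range (m+1)) (fun l : ℕ => (1/2:ℝ)^l) l).eval 0, ?_⟩
  intro P hP y v
  obtain ⟨q, hq, hq'⟩ := aux_line m P hP y v
  have hinj : Set.InjOn (fun l : ℕ => (1/2:ℝ)^l) (Finset.range (m+1)) := by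
    intro a _ b _ hab
    exact pow_right_injective₀ (by norm_num : (0:ℝ) < 1/2) (by norm_num) hab
  have h := Lagrange.eq_interpolate (f := q) hinj (by
    rw [Finset.card_range]
    exact lt_of_le_of_lt Polynomial.degree_le_natDegree (by exact_mod_cast Nat.lt_succ_of_le hq))
  have h2 := congrArg (Polynomial.eval 0) h
  rw [Lagrange.interpolate_apply, Polynomial.eval_finsetSum, hq'] at h2
  simp only [zero_smul, add_zero] at h2
  rw [h2]
  refine Finset.sum_congr rfl fun l _ => ?_
  rw [Polynomial.eval_mul, Polynomial.eval_C, hq', mul_comm]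

lemma aux_deriv {n : ℕ} (P : MvPolynomial (Fin n) ℝ) (x : Rn n) :
    HasStrictFDerivAt (fun z : Rn n => MvPolynomial.eval z P)
      (∑ i, MvPolynomial.eval x (MvPolynomial.pderiv i P) •
        (ContinuousLinearMap.proj i : Rn n →L[ℝ] ℝ)) x := by
  induction P using MvPolynomial.induction_on with
  | C a => simpa using hasStrictFDerivAt_const a x
  | add p q hp hq =>
    have := hp.add hq
    simpa [add_smul, Finset.sum_add_distrib] using! this
  | mul_X p i hp =>
    have := hp.mul (hasStrictFDerivAt_apply i x)
    refine (this.congr_fderiv ?_).congr_of_eventuallyEq (by simp; rfl)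
    ext v
    simp [MvPolynomial.pderiv_X, Pi.single_apply, Finset.mul_sum, add_mul, Finset.sum_add_distrib]
    congr 1
    · rw [Finset.sum_eq_single i]
      · simp
      · intro b _ hb; simp [hb.symm]
      · simp
    · refine Finset.sum_congr rfl fun j _ => by ring


lemma aux_pderiv_degree {n : ℕ} (P : MvPolynomial (Fin n) ℝ) (m : ℕ) (hP : P.totalDegree ≤ m + 1)
    (i : Fin n) : (MvPolynomial.pderiv i P).totalDegree ≤ m := by
  refine Finset.sup_le fun a ha => ?_
  rw [MvPolynomial.mem_support_iff, MvPolynomial.coeff_pderiv] at ha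
  have h0 : a + Finsupp.single i 1 ∈ P.support := by
    rw [MvPolynomial.mem_support_iff]
    intro h; simp [h] at ha
  have h1 := (MvPolynomial.le_totalDegree h0).trans hP
  rw [Finsupp.sum_add_index' (by simp) (by simp), Finsupp.sum_single_index rfl] at h1
  omega

lemma aux_pderiv_exists {n : ℕ} (P : MvPolynomial (Fin n) ℝ) (hP : ∀ i, MvPolynomial.pderiv i P = 0) :
    ∃ c, P = MvPolynomial.C c := by
  refine ⟨P.coeff 0, ?_⟩
  ext a
  rw [MvPolynomial.coeff_C]
  split_ifs with h
  · rw [h]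
  · have : ∃ i, a i ≠ 0 := by
      by_contra! h'
      exact h (Finsupp.ext fun i => (h' i).symm)
    obtain ⟨i, hi⟩ := this
    have h1 := congrArg (MvPolynomial.coeff (a - Finsupp.single i 1)) (hP i)
    rw [MvPolynomial.coeff_pderiv, tsub_add_cancel_of_le
      (by rw [Finsupp.single_le_iff]; omega)] at h1
    simp only [MvPolynomial.coeff_zero, mul_eq_zero] at h1
    rcases h1 with h1 | h1
    · exact h1
    · exact absurd h1 (by positivity)

def dropc {n : ℕ} (i : Fin n) (z : Rn n) : {j : Fin n // j ≠ i} → ℝ := fun j => z j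

lemma aux_antilip {n : ℕ} (f : Rn n → ℝ) (a : Fin n → ℝ) (x : Rn n) (i : Fin n) (hai : a i ≠ 0)
    (hd : HasStrictFDerivAt f (∑ i, a i • (ContinuousLinearMap.proj i : Rn n →L[ℝ] ℝ)) x) :
    ∃ K : ℝ, 0 ≤ K ∧ ∃ U ∈ 𝓝 x, ∀ z ∈ U, ∀ z' ∈ U, f z = 0 → f z' = 0 →
      dist z z' ≤ K * dist (dropc i z) (dropc i z') := by
  have hc : 0 < |a i| / 2 := by positivity
  have hev := hd.isLittleO.bound hc
  rw [nhds_prod_eq] at hev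
  obtain ⟨U, hU, V, hV, hUV⟩ := Filter.eventually_prod_iff.1 hev
  obtain ⟨M, hM⟩ : ∃ M : ℝ, M = ∑ j, |a j| := ⟨_, rfl⟩
  have hM0 : 0 ≤ M := hM ▸ Finset.sum_nonneg fun _ _ => abs_nonneg _
  refine ⟨2 * (M / |a i| + 1), by positivity, {z | U z ∧ V z}, hU.and hV, ?_⟩
  intro z hz z' hz' hfz hfz'
  have h1 := hUV hz.1 hz'.2
  simp only [hfz, hfz', sub_self, zero_sub, norm_neg] at h1
  obtain ⟨v, hv⟩ : ∃ v, v = z - z' := ⟨_, rfl⟩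
  rw [← hv] at h1
  obtain ⟨D, hDD⟩ : ∃ D, D = dist (dropc i z) (dropc i z') := ⟨_, rfl⟩
  have hD : 0 ≤ D := hDD ▸ dist_nonneg
  have hpv : ∀ j, j ≠ i → |v j| ≤ D := by
    intro j hj
    have := dist_le_pi_dist (dropc i z) (dropc i z') ⟨j, hj⟩
    rw [hDD]
    simpa [dropc, Real.dist_eq, hv] using this
  rw [← hDD, dist_eq_norm, ← hv]
  have h2 : |a i * v i| ≤ |a i| / 2 * ‖v‖ + M * D := by
    have e : a i * v i = (∑ j, a j * v j) - ∑ j ∈ Finset.univ.erase i, a j * v j := by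
      rw [← Finset.add_sum_erase _ _ (Finset.mem_univ i)]; ring
    have h3 : |∑ j, a j * v j| ≤ |a i| / 2 * ‖v‖ := by
      simpa [ContinuousLinearMap.sum_apply, Real.norm_eq_abs] using h1
    have h4 : |∑ j ∈ Finset.univ.erase i, a j * v j| ≤ M * D := by
      refine (Finset.abs_sum_le_sum_abs _ _).trans ?_
      rw [hM, Finset.sum_mul]
      refine le_trans (Finset.sum_le_sum (g := fun j => |a j| * D) fun j hj => ?_)
        (Finset.sum_le_sum_of_subset_of_nonneg (Finset.erase_subset _ _)
          fun _ _ _ => mul_nonneg (abs_nonneg _) hD)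
      rw [abs_mul]
      exact mul_le_mul_of_nonneg_left (hpv j (Finset.ne_of_mem_erase hj)) (abs_nonneg _)
    rw [e]
    exact (abs_sub _ _).trans (add_le_add h3 h4)
  have h5 : ‖v‖ ≤ |v i| + D := by
    refine (pi_norm_le_iff_of_nonneg (by positivity)).2 fun j => ?_
    by_cases hj : j = i
    · subst hj; simpa using hD
    · exact (hpv j hj).trans (by simp)
  rw [abs_mul] at h2
  have hai' : 0 < |a i| := abs_pos.2 hai
  have h6 : |v i| ≤ ‖v‖ / 2 + M / |a i| * D := by
    have : |a i| * |v i| ≤ |a i| * (‖v‖ / 2 + M / |a i| * D) := by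
      calc _ ≤ _ := h2
        _ = _ := by field_simp
    exact le_of_mul_le_mul_left this hai'
  linarith

lemma aux_dim {n : ℕ} (P : MvPolynomial (Fin n) ℝ) (i : Fin n) :
    dimH {z : Rn n | MvPolynomial.eval z P = 0 ∧ MvPolynomial.eval z (MvPolynomial.pderiv i P) ≠ 0}
      ≤ ((n - 1 : ℕ) : ℝ≥0∞) := by
  by_contra! hlt
  obtain ⟨x, hx, hx'⟩ := exists_mem_nhdsWithin_lt_dimH_of_lt_dimH hlt
  obtain ⟨K, hK0, U, hU, hkey⟩ := aux_antilip (fun z : Rn n => MvPolynomial.eval z P) _ x i hx.2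
    (aux_deriv P x)
  obtain ⟨T, hTT⟩ : ∃ T, T = {z : Rn n | MvPolynomial.eval z P = 0 ∧
    MvPolynomial.eval z (MvPolynomial.pderiv i P) ≠ 0} ∩ U := ⟨_, rfl⟩
  refine absurd (hx' T (hTT ▸ inter_mem_nhdsWithin _ hU)) (not_lt.2 ?_)
  have key : ∀ z ∈ T, ∀ z' ∈ T, dist z z' ≤ K * dist (dropc i z) (dropc i z') := by
    rw [hTT]
    intro z hz z' hz'
    exact hkey z hz.2 z' hz'.2 hz.1.1 hz'.1.1
  have hinj : InjOn (dropc i) T := by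
    intro z hz z' hz' h
    have := key z hz z' hz'
    rw [h, dist_self, mul_zero] at this
    exact dist_le_zero.1 this
  have : Nonempty (Rn n) := ⟨x⟩
  have hlip : LipschitzOnWith K.toNNReal (Function.invFunOn (dropc i) T) (dropc i '' T) := by
    refine LipschitzOnWith.of_dist_le_mul ?_
    rintro _ ⟨z, hz, rfl⟩ _ ⟨z', hz', rfl⟩
    rw [hinj.leftInvOn_invFunOn hz, hinj.leftInvOn_invFunOn hz', Real.coe_toNNReal _ hK0]
    exact key z hz z' hz'
  have h7 := hlip.dimH_image_le
  rw [hinj.leftInvOn_invFunOn.image_image] at h7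
  refine h7.trans ((dimH_mono (subset_univ _)).trans ?_)
  rw [Real.dimH_univ_pi, Fintype.card_subtype_compl]
  simp

lemma aux_null {n : ℕ} (hn : 1 ≤ n) (d : ℝ) (hd : (n:ℝ) - 1 < d) (m : ℕ) :
    ∀ P : MvPolynomial (Fin n) ℝ, P.totalDegree ≤ m → P ≠ 0 →
    (μH[d] : Measure (Rn n)) {z : Rn n | MvPolynomial.eval z P = 0} = 0 := by
  have hd0 : 0 < d := by
    have : (1:ℝ) ≤ n := by exact_mod_cast hn
    linarith
  have hconst : ∀ c : ℝ, (MvPolynomial.C c : MvPolynomial (Fin n) ℝ) ≠ 0 →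
      {z : Rn n | MvPolynomial.eval z (MvPolynomial.C c) = 0} = ∅ := by
    intro c hc
    ext z
    simp
    rintro rfl
    simp at hc
  induction m with
  | zero =>
    intro P hP h0
    obtain ⟨c, rfl⟩ : ∃ c, P = MvPolynomial.C c :=
      ⟨_, MvPolynomial.totalDegree_eq_zero_iff_eq_C.1 (Nat.le_zero.1 hP)⟩
    rw [hconst c h0]; simp
  | succ m ih =>
    intro P hP h0
    by_cases h : ∀ i, MvPolynomial.pderiv i P = 0
    · obtain ⟨c, rfl⟩ := aux_pderiv_exists P h
      rw [hconst c h0]; simp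
    · push Not at h
      obtain ⟨i, hi⟩ := h
      refine measure_mono_null (t := {z : Rn n | MvPolynomial.eval z P = 0 ∧ MvPolynomial.eval z (MvPolynomial.pderiv i P) ≠ 0} ∪ {z | MvPolynomial.eval z (MvPolynomial.pderiv i P) = 0}) ?_ ?_
      · intro z hz
        by_cases h : MvPolynomial.eval z (MvPolynomial.pderiv i P) = 0
        · exact Or.inr h
        · exact Or.inl ⟨hz, h⟩
      · refine measure_union_null ?_ (ih _ (aux_pderiv_degree P m hP i) hi)
        have h1 := aux_dim P i
        have h2 := hausdorffMeasure_of_dimH_lt (d := d.toNNReal) (lt_of_le_of_lt h1 (by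
          rw [← ENNReal.coe_natCast, ENNReal.coe_lt_coe, Real.lt_toNNReal_iff_coe_lt]
          rw [NNReal.coe_natCast, Nat.cast_sub hn, Nat.cast_one]; exact hd))
        rwa [Real.coe_toNNReal _ hd0.le] at h2


lemma aux_cover {n : ℕ} (d : ℝ) (hd : 0 < d) (Z : Set (Rn n))
    (hZ : (μH[d] : Measure (Rn n)) Z = 0) (ε : ℝ≥0∞) (hε : 0 < ε) :
    ∃ (z : ℕ → Rn n) (ρ : ℕ → ℝ), (∀ k, 0 < ρ k ∧ ρ k ≤ 1/2) ∧ Z ⊆ ⋃ k, ball (z k) (ρ k) ∧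
      ∑' k, ENNReal.ofReal (ρ k ^ d) ≤ ε := by
  have hε2 : 0 < ε / 2 := ENNReal.half_pos hε.ne'
  rw [Measure.hausdorffMeasure_apply, ENNReal.iSup_eq_zero] at hZ
  have h1 := hZ (1/8)
  rw [ENNReal.iSup_eq_zero] at h1
  have h2 := h1 (by norm_num)
  have h3 : _ < ε / 2 := lt_of_eq_of_lt h2 hε2
  simp only [iInf_lt_iff] at h3
  obtain ⟨t, ht, htd, hts⟩ := h3
  obtain ⟨e, he, hesum⟩ := ENNReal.exists_pos_sum_of_countable hε2.ne' ℕ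
  have hθ : ∀ k, ∃ ρ : ℝ, 0 < ρ ∧ ρ ≤ 1/2 ∧ (Metric.ediam (t k)).toReal < ρ ∧
      ρ ^ d ≤ (Metric.ediam (t k)).toReal ^ d + e k := by
    intro k
    set D := (Metric.ediam (t k)).toReal
    have hD0 : 0 ≤ D := ENNReal.toReal_nonneg
    have hD : D ≤ 1/8 := by
      have := ENNReal.toReal_mono (by finiteness) (htd k)
      simpa using this
    have hc : Tendsto (fun x : ℝ => x ^ d) (𝓝[>] D) (𝓝 (D ^ d)) :=
      ((Real.continuousAt_rpow_const D d (Or.inr hd.le)).tendsto).mono_left nhdsWithin_le_nhds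
    have ev1 : ∀ᶠ x in 𝓝[>] D, x ^ d < D ^ d + e k :=
      hc.eventually_lt_const (by have := he k; simpa using this)
    have ev2 : ∀ᶠ x in 𝓝[>] D, x ∈ Ioo D (1/2) := Ioo_mem_nhdsGT (by linarith)
    obtain ⟨x, hx1, hx2⟩ := (ev1.and ev2).exists
    exact ⟨x, lt_of_le_of_lt hD0 hx2.1, hx2.2.le, hx2.1, hx1.le⟩
  choose ρ hρ0 hρ1 hρD hρe using hθ
  -- nonempty ones use a point; empty ones: tiny radius
  have hzc : ∀ k, ∃ (z : Rn n) (σ : ℝ), 0 < σ ∧ σ ≤ 1/2 ∧ t k ⊆ ball z σ ∧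
      ENNReal.ofReal (σ ^ d) ≤ (⨆ _ : (t k).Nonempty, Metric.ediam (t k) ^ d) + e k := by
    intro k
    rcases (t k).eq_empty_or_nonempty with h | h
    · refine ⟨0, ρ k, hρ0 k, hρ1 k, by simp [h], ?_⟩
      have := hρe k
      rw [h] at this ⊢
      simp [Real.zero_rpow hd.ne'] at this ⊢
      exact_mod_cast this
    · obtain ⟨z, hz⟩ := h
      refine ⟨z, ρ k, hρ0 k, hρ1 k, ?_, ?_⟩
      · intro y hy
        rw [mem_ball]
        refine lt_of_le_of_lt ?_ (hρD k)
        rw [dist_edist]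
        refine ENNReal.toReal_mono ?_ (Metric.edist_le_ediam_of_mem hy hz)
        exact ne_top_of_le_ne_top (by finiteness) (htd k)
      · have hne : (t k).Nonempty := ⟨z, hz⟩
        simp only [hne, iSup_pos]
        have hft : Metric.ediam (t k) ≠ ⊤ := ne_top_of_le_ne_top (by finiteness) (htd k)
        refine (ENNReal.ofReal_le_ofReal (hρe k)).trans ?_
        rw [ENNReal.ofReal_add (by positivity) (by positivity), ENNReal.ofReal_coe_nnreal,
          ← ENNReal.ofReal_rpow_of_nonneg (by positivity) hd.le, ENNReal.ofReal_toReal hft]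
  choose z σ hσ0 hσ1 hσt hσe using hzc
  refine ⟨z, σ, fun k => ⟨hσ0 k, hσ1 k⟩, ht.trans (iUnion_mono hσt), ?_⟩
  refine (ENNReal.tsum_le_tsum hσe).trans ?_
  rw [ENNReal.tsum_add]
  calc _ ≤ ε / 2 + ε / 2 := add_le_add hts.le hesum.le
    _ = ε := ENNReal.add_halves ε

/-- admissible measures -/
def Adm {n : ℕ} (d a C : ℝ) (ν : Measure (Rn n)) : Prop :=
  ENNReal.ofReal a ≤ ν (closedBall 0 1) ∧
    ∀ z, ∀ ρ : ℝ, 0 < ρ → ρ ≤ 1/2 → ν (closedBall z ρ) ≤ ENNReal.ofReal (C * ρ ^ d)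

lemma aux_single {n : ℕ} (hn : 1 ≤ n) (d : ℝ) (hd : (n:ℝ) - 1 < d) (a C : ℝ) (ha : 0 < a)
    (hC : 0 < C) (P : MvPolynomial (Fin n) ℝ) (hP : P ≠ 0) :
    ∃ τ > 0, ∀ ν : Measure (Rn n), Adm d a C ν →
      ν {z ∈ closedBall (0 : Rn n) 1 | |MvPolynomial.eval z P| < τ} ≤ ENNReal.ofReal (a / 2) := by
  have hd0 : 0 < d := by
    have : (1:ℝ) ≤ n := by exact_mod_cast hn
    linarith
  have hε : 0 < ENNReal.ofReal (a / 2 / C) := by rw [ENNReal.ofReal_pos]; positivity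
  obtain ⟨z, ρ, hρ, hZ, hsum⟩ := aux_cover d hd0 _ (aux_null hn d hd _ P le_rfl hP) _ hε
  set U := ⋃ k, ball (z k) (ρ k) with hU
  have hUo : IsOpen U := isOpen_iUnion fun k => isOpen_ball
  have hcomp : IsCompact (closedBall (0 : Rn n) 1 \ U) := (isCompact_closedBall 0 1).diff hUo
  have hcont : Continuous (fun z : Rn n => |MvPolynomial.eval z P|) :=
    (MvPolynomial.continuous_eval P).abs
  obtain ⟨τ, hτ, hτ'⟩ : ∃ τ > 0, ∀ y ∈ closedBall (0 : Rn n) 1 \ U, τ ≤ |MvPolynomial.eval y P| := by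
    rcases (closedBall (0 : Rn n) 1 \ U).eq_empty_or_nonempty with h | h
    · exact ⟨1, one_pos, by simp [h]⟩
    · obtain ⟨y, hy, hy'⟩ := hcomp.exists_isMinOn h hcont.continuousOn
      refine ⟨|MvPolynomial.eval y P|, abs_pos.2 fun h0 => hy.2 (hZ h0), fun y' h' => hy' h'⟩
  refine ⟨τ, hτ, fun ν hν => ?_⟩
  calc _ ≤ ν U := by
        refine measure_mono fun y hy => ?_
        by_contra h
        exact absurd (hτ' y ⟨hy.1, h⟩) (not_le.2 hy.2)
    _ ≤ ∑' k, ν (ball (z k) (ρ k)) := measure_iUnion_le _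
    _ ≤ ∑' k, ENNReal.ofReal C * ENNReal.ofReal (ρ k ^ d) := by
        refine ENNReal.tsum_le_tsum fun k => ?_
        rw [← ENNReal.ofReal_mul hC.le]
        exact (measure_mono ball_subset_closedBall).trans (hν.2 _ _ (hρ k).1 (hρ k).2)
    _ ≤ ENNReal.ofReal C * ENNReal.ofReal (a / 2 / C) := by
        rw [ENNReal.tsum_mul_left]; gcongr
    _ = ENNReal.ofReal (a / 2) := by
        rw [← ENNReal.ofReal_mul hC.le]; congr 1; field_simp

lemma aux_remez_unit {n : ℕ} (hn : 1 ≤ n) (d : ℝ) (hd : (n:ℝ) - 1 < d) (a C : ℝ) (ha : 0 < a)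
    (hC : 0 < C) (m : ℕ) (p : ℝ) (hp : 0 < p) :
    ∃ K : ℝ≥0∞, K ≠ ⊤ ∧ ∀ ν : Measure (Rn n), Adm d a C ν →
      ∀ P : MvPolynomial (Fin n) ℝ, P.totalDegree ≤ m → ∀ z ∈ closedBall (0 : Rn n) 1,
        ENNReal.ofReal |MvPolynomial.eval z P| ^ p ≤
          K * ∫⁻ y in closedBall (0 : Rn n) 1, ENNReal.ofReal |MvPolynomial.eval y P| ^ p ∂ν := by
  let V := MvPolynomial.restrictTotalDegree (Fin n) ℝ m
  let b := Module.finBasis ℝ V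
  let N := Module.finrank ℝ V
  let Φ : (Fin N → ℝ) → MvPolynomial (Fin n) ℝ := fun c => (b.equivFun.symm c : V)
  have hΦeval : ∀ c z, MvPolynomial.eval z (Φ c) = ∑ i, c i * MvPolynomial.eval z (b i : MvPolynomial (Fin n) ℝ) := by
    intro c z
    simp only [Φ, Module.Basis.equivFun_symm_apply, Submodule.coe_sum, Submodule.coe_smul, map_sum,
      MvPolynomial.smul_eval]
    rfl
  have hΦ0 : ∀ c, Φ c = 0 → c = 0 := by
    intro c hc
    have : b.equivFun.symm c = 0 := Subtype.ext hc
    exact (LinearEquiv.map_eq_zero_iff _).1 this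
  have hbd : ∀ i, ∃ B : ℝ, ∀ z ∈ closedBall (0 : Rn n) 1, |MvPolynomial.eval z (b i : MvPolynomial (Fin n) ℝ)| ≤ B := by
    intro i
    obtain ⟨B, hB⟩ := (isCompact_closedBall (0 : Rn n) 1).exists_bound_of_continuousOn
      (MvPolynomial.continuous_eval (b i : MvPolynomial (Fin n) ℝ)).continuousOn
    exact ⟨B, hB⟩
  choose B hB using hbd
  have h01 : (0 : Rn n) ∈ closedBall (0 : Rn n) 1 := by simp
  have hB0 : ∀ i, 0 ≤ B i := fun i => (abs_nonneg _).trans (hB i 0 h01)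
  obtain ⟨β, hβ⟩ : ∃ β, β = 1 + ∑ i, B i := ⟨_, rfl⟩
  have hβ0 : 0 < β := by
    have : 0 ≤ ∑ i, B i := Finset.sum_nonneg fun i _ => hB0 i
    linarith
  have hΦbd : ∀ c, ∀ z ∈ closedBall (0 : Rn n) 1, |MvPolynomial.eval z (Φ c)| ≤ β * ‖c‖ := by
    intro c z hz
    rw [hΦeval]
    refine (Finset.abs_sum_le_sum_abs _ _).trans ?_
    calc _ ≤ ∑ i, ‖c‖ * B i := by
          refine Finset.sum_le_sum fun i _ => ?_
          rw [abs_mul]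
          exact mul_le_mul (norm_le_pi_norm c i) (hB i z hz) (abs_nonneg _) (norm_nonneg _)
      _ = (∑ i, B i) * ‖c‖ := by rw [← Finset.mul_sum, mul_comm]
      _ ≤ β * ‖c‖ := by
          refine mul_le_mul_of_nonneg_right (by linarith) (norm_nonneg _)
  have hΦsub : ∀ c c' z, MvPolynomial.eval z (Φ c) - MvPolynomial.eval z (Φ c') =
      MvPolynomial.eval z (Φ (c - c')) := by
    intro c c' z
    rw [hΦeval, hΦeval, hΦeval, ← Finset.sum_sub_distrib]
    refine Finset.sum_congr rfl fun i _ => by simp [sub_mul]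
  have hunif : ∃ τ > 0, ∀ c ∈ sphere (0 : Fin N → ℝ) 1, ∀ ν : Measure (Rn n), Adm d a C ν →
      ν {z ∈ closedBall (0 : Rn n) 1 | |MvPolynomial.eval z (Φ c)| < τ} ≤ ENNReal.ofReal (a / 2) := by
    refine (isCompact_sphere (0 : Fin N → ℝ) 1).induction_on
      (p := fun s => ∃ τ > 0, ∀ c ∈ s, ∀ ν : Measure (Rn n), Adm d a C ν →
      ν {z ∈ closedBall (0 : Rn n) 1 | |MvPolynomial.eval z (Φ c)| < τ} ≤ ENNReal.ofReal (a / 2))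
      ⟨1, one_pos, by simp⟩ ?_ ?_ ?_
    · rintro s t hst ⟨τ, hτ, h⟩
      exact ⟨τ, hτ, fun c hc => h c (hst hc)⟩
    · rintro s t ⟨τ, hτ, h⟩ ⟨τ', hτ', h'⟩
      refine ⟨min τ τ', lt_min hτ hτ', ?_⟩
      rintro c (hc | hc) ν hν
      · refine (measure_mono ?_).trans (h c hc ν hν)
        exact fun z hz => ⟨hz.1, hz.2.trans_le (min_le_left _ _)⟩
      · refine (measure_mono ?_).trans (h' c hc ν hν)
        exact fun z hz => ⟨hz.1, hz.2.trans_le (min_le_right _ _)⟩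
    · intro c hc
      have hc0 : Φ c ≠ 0 := by
        intro h
        rw [hΦ0 c h] at hc
        simp at hc
      obtain ⟨τ, hτ, h⟩ := aux_single hn d hd a C ha hC (Φ c) hc0
      refine ⟨ball c (τ / 2 / β), mem_nhdsWithin_of_mem_nhds (ball_mem_nhds _ (by positivity)),
        τ / 2, by positivity, ?_⟩
      intro c' hc' ν hν
      refine (measure_mono ?_).trans (h ν hν)
      rintro z ⟨hz, hz'⟩
      refine ⟨hz, ?_⟩
      have h1 := hΦbd (c - c') z hz
      rw [← hΦsub] at h1
      have h2 : β * ‖c - c'‖ < τ / 2 := by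
        rw [mem_ball, dist_comm, dist_eq_norm, lt_div_iff₀ hβ0] at hc'
        linarith
      have := abs_sub_abs_le_abs_sub (MvPolynomial.eval z (Φ c)) (MvPolynomial.eval z (Φ c'))
      linarith
  obtain ⟨τ, hτ, hτu⟩ := hunif
  refine ⟨ENNReal.ofReal ((β / τ) ^ p * (2 / a)), by finiteness, ?_⟩
  intro ν hν P hP z hz
  obtain ⟨c, rfl⟩ : ∃ c, P = Φ c :=
    ⟨b.equivFun ⟨P, (MvPolynomial.mem_restrictTotalDegree _ _ _).2 hP⟩, by
      simp only [Φ, LinearEquiv.symm_apply_apply]⟩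
  by_cases hc : c = 0
  · have : MvPolynomial.eval z (Φ c) = 0 := by rw [hΦeval]; simp [hc]
    rw [this]; simp [hp]
  have hl : 0 < ‖c‖ := norm_pos_iff.2 hc
  have hscale : ∀ z, |MvPolynomial.eval z (Φ c)| = ‖c‖ * |MvPolynomial.eval z (Φ (‖c‖⁻¹ • c))| := by
    intro z
    have : MvPolynomial.eval z (Φ c) = ‖c‖ * MvPolynomial.eval z (Φ (‖c‖⁻¹ • c)) := by
      rw [hΦeval, hΦeval, Finset.mul_sum]
      refine Finset.sum_congr rfl fun i _ => ?_
      simp only [Pi.smul_apply, smul_eq_mul]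
      field_simp
    rw [this, abs_mul, abs_norm]
  have hmem : ‖c‖⁻¹ • c ∈ sphere (0 : Fin N → ℝ) 1 := by
    simp [norm_smul, hl.ne']
  have hsmall := hτu _ hmem ν hν
  set G := {z ∈ closedBall (0 : Rn n) 1 | τ ≤ |MvPolynomial.eval z (Φ (‖c‖⁻¹ • c))|} with hG
  have hGm : MeasurableSet G :=
    (measurableSet_closedBall).inter
      (measurableSet_le measurable_const (MvPolynomial.continuous_eval _).abs.measurable)
  have hbig : ENNReal.ofReal (a / 2) ≤ ν G := by
    have h1 : ENNReal.ofReal a ≤ ENNReal.ofReal (a / 2) + ν G := by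
      refine hν.1.trans ?_
      refine le_trans (measure_mono (t := {z ∈ closedBall (0 : Rn n) 1 | |MvPolynomial.eval z (Φ (‖c‖⁻¹ • c))| < τ} ∪ G) ?_) ((measure_union_le _ _).trans (add_le_add hsmall le_rfl))
      intro y hy
      rcases lt_or_ge (|MvPolynomial.eval y (Φ (‖c‖⁻¹ • c))|) τ with h | h
      · exact Or.inl ⟨hy, h⟩
      · exact Or.inr ⟨hy, h⟩
    have h2 : ENNReal.ofReal a = ENNReal.ofReal (a / 2) + ENNReal.ofReal (a / 2) := by
      rw [← ENNReal.ofReal_add (by positivity) (by positivity)]; congr 1; ring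
    rw [h2] at h1
    exact (ENNReal.add_le_add_iff_left ENNReal.ofReal_ne_top).1 h1
  have hint : ENNReal.ofReal ((τ * ‖c‖) ^ p * (a / 2)) ≤
      ∫⁻ y in closedBall (0 : Rn n) 1, ENNReal.ofReal |MvPolynomial.eval y (Φ c)| ^ p ∂ν := by
    calc _ ≤ ENNReal.ofReal ((τ * ‖c‖) ^ p) * ν G := by
          rw [ENNReal.ofReal_mul (by positivity)]; gcongr
      _ = ∫⁻ y in G, ENNReal.ofReal ((τ * ‖c‖) ^ p) ∂ν := by simp
      _ ≤ ∫⁻ y in G, ENNReal.ofReal |MvPolynomial.eval y (Φ c)| ^ p ∂ν := by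
          refine setLIntegral_mono' hGm fun y hy => ?_
          rw [ENNReal.ofReal_rpow_of_nonneg (abs_nonneg _) hp.le]
          refine ENNReal.ofReal_le_ofReal (Real.rpow_le_rpow (by positivity) ?_ hp.le)
          rw [hscale, mul_comm]
          exact mul_le_mul_of_nonneg_left hy.2 hl.le
      _ ≤ _ := lintegral_mono_set fun y hy => hy.1
  calc _ ≤ ENNReal.ofReal ((β * ‖c‖) ^ p) := by
        rw [ENNReal.ofReal_rpow_of_nonneg (abs_nonneg _) hp.le]
        exact ENNReal.ofReal_le_ofReal (Real.rpow_le_rpow (abs_nonneg _) (hΦbd c z hz) hp.le)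
    _ = ENNReal.ofReal ((β / τ) ^ p * (2 / a)) * ENNReal.ofReal ((τ * ‖c‖) ^ p * (a / 2)) := by
        rw [← ENNReal.ofReal_mul (by positivity)]
        congr 1
        rw [Real.mul_rpow (by positivity) (by positivity), Real.mul_rpow (by positivity) (by positivity), Real.div_rpow (by positivity) (by positivity)]
        have : τ ^ p ≠ 0 := by positivity
        field_simp
    _ ≤ _ := by gcongr


lemma aux_remez {n : ℕ} (hn : 1 ≤ n) (d : ℝ) (hd : (n:ℝ) - 1 < d) (a C : ℝ) (ha : 0 < a)
    (hC : 0 < C) (m : ℕ) (p : ℝ) (hp : 0 < p) :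
    ∃ K : ℝ≥0∞, K ≠ ⊤ ∧ ∀ μ : Measure (Rn n), ∀ w : Rn n, ∀ r : ℝ, 0 < r →
      ENNReal.ofReal (a * r ^ d) ≤ μ (closedBall w r) →
      (∀ z, ∀ ρ : ℝ, 0 < ρ → ρ ≤ r/2 → μ (closedBall z ρ) ≤ ENNReal.ofReal (C * ρ ^ d)) →
      ∀ P : MvPolynomial (Fin n) ℝ, P.totalDegree ≤ m → ∀ x ∈ closedBall w r,
        ENNReal.ofReal |MvPolynomial.eval x P| ^ p ≤
          K * (ENNReal.ofReal (r ^ (-d)) *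
            ∫⁻ y in closedBall w r, ENNReal.ofReal |MvPolynomial.eval y P| ^ p ∂μ) := by
  obtain ⟨K, hK, h⟩ := aux_remez_unit hn d hd a C ha hC m p hp
  refine ⟨K, hK, ?_⟩
  intro μ w r hr hlow hup P hP x hx
  let φ : Rn n → Rn n := fun z => r⁻¹ • (z - w)
  have hφ : Measurable φ := by fun_prop
  have hpre : ∀ z ρ, φ ⁻¹' (closedBall z ρ) = closedBall (w + r • z) (r * ρ) := by
    intro z ρ
    ext y
    simp only [φ, mem_preimage, mem_closedBall, dist_eq_norm]
    have : r⁻¹ • (y - w) - z = r⁻¹ • (y - (w + r • z)) := by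
      rw [smul_sub, smul_sub, smul_add, smul_smul, inv_mul_cancel₀ hr.ne', one_smul]; abel
    rw [this, norm_smul, norm_inv, Real.norm_of_nonneg hr.le, inv_mul_le_iff₀ hr]
  have hpre1 : φ ⁻¹' (closedBall 0 1) = closedBall w r := by rw [hpre]; simp
  obtain ⟨Q, hQ, hQe⟩ := aux_affine m P hP w r
  have hφe : ∀ y, MvPolynomial.eval (φ y) Q = MvPolynomial.eval y P := by
    intro y
    rw [hQe]
    congr 1
    simp [φ, smul_smul, mul_inv_cancel₀ hr.ne']
  have hrd : 0 < r ^ (-d) := by positivity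
  have hadm : Adm d a C (ENNReal.ofReal (r ^ (-d)) • μ.map φ) := by
    constructor
    · rw [Measure.smul_apply, Measure.map_apply hφ measurableSet_closedBall, hpre1, smul_eq_mul]
      calc ENNReal.ofReal a = ENNReal.ofReal (r ^ (-d)) * ENNReal.ofReal (a * r ^ d) := by
            rw [← ENNReal.ofReal_mul hrd.le]; congr 1
            rw [Real.rpow_neg hr.le]
            have : r ^ d ≠ 0 := by positivity
            field_simp
        _ ≤ _ := by gcongr
    · intro z ρ hρ hρ'
      rw [Measure.smul_apply, Measure.map_apply hφ measurableSet_closedBall, hpre, smul_eq_mul]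
      calc _ ≤ ENNReal.ofReal (r ^ (-d)) * ENNReal.ofReal (C * (r * ρ) ^ d) := by
            gcongr
            exact hup _ _ (by positivity) (by nlinarith)
        _ = _ := by
            rw [← ENNReal.ofReal_mul hrd.le]; congr 1
            rw [Real.rpow_neg hr.le, Real.mul_rpow hr.le hρ.le]
            have : r ^ d ≠ 0 := by positivity
            field_simp
  have hx1 : φ x ∈ closedBall (0 : Rn n) 1 := by
    rw [← mem_preimage, hpre1]; exact hx
  have := h _ hadm Q hQ (φ x) hx1
  rw [hφe, Measure.restrict_smul, lintegral_smul_measure,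
    setLIntegral_map measurableSet_closedBall (by
      have := (MvPolynomial.continuous_eval Q).abs.measurable
      fun_prop) hφ, hpre1] at this
  simpa only [hφe, smul_eq_mul] using this

lemma aux_jensen {n : ℕ} (p : ℝ) (hp : 1 ≤ p) (u : Rn n → ℝ) (hu : Measurable u)
    (y : Rn n) (ρ : ℝ) (hρ : 0 < ρ) :
    ENNReal.ofReal |⨍ x in closedBall y ρ, u x| ^ p ≤ (volume (closedBall y ρ))⁻¹ *
      ∫⁻ x in closedBall y ρ, ENNReal.ofReal |u x| ^ p := by
  have h0 : volume (closedBall y ρ) ≠ 0 := (measure_closedBall_pos volume y hρ).ne'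
  have ht : volume (closedBall y ρ) ≠ ⊤ := measure_closedBall_lt_top.ne
  have hp0 : 0 < p := by linarith
  set ν := (volume (closedBall y ρ))⁻¹ • volume.restrict (closedBall y ρ) with hν
  have : IsProbabilityMeasure ν := ⟨by
    simp [hν, ENNReal.inv_mul_cancel h0 ht]⟩
  have h1 : ENNReal.ofReal |⨍ x in closedBall y ρ, u x| ≤ ∫⁻ x, ‖u x‖ₑ ∂ν := by
    rw [average, Measure.restrict_apply_univ, ← hν, ← Real.norm_eq_abs, ofReal_norm]
    exact enorm_integral_le_lintegral_enorm _
  have h2 := eLpNorm'_le_eLpNorm'_of_exponent_le (μ := ν) (f := u) one_pos hp hu.aestronglyMeasurable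
  rw [eLpNorm'_eq_lintegral_enorm, eLpNorm'_eq_lintegral_enorm] at h2
  simp only [ENNReal.rpow_one, div_one] at h2
  calc _ ≤ ((∫⁻ x, ‖u x‖ₑ ^ p ∂ν) ^ (1 / p)) ^ p := by
        gcongr; exact h1.trans h2
    _ = ∫⁻ x, ‖u x‖ₑ ^ p ∂ν := by
        rw [← ENNReal.rpow_mul, one_div_mul_cancel hp0.ne', ENNReal.rpow_one]
    _ = _ := by
        rw [hν, lintegral_smul_measure, smul_eq_mul]
        simp only [← ofReal_norm, Real.norm_eq_abs]

lemma aux_avg_scale {n : ℕ} (g : Rn n → ℝ) (y : Rn n) (ρ : ℝ) (hρ : 0 < ρ) :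
    ⨍ x in closedBall y ρ, g x = ⨍ z in closedBall (0 : Rn n) 1, g (y + ρ • z) := by
  rw [setAverage_eq, setAverage_eq]
  have h1 := Measure.setIntegral_comp_smul_of_pos volume (fun v => g (y + v)) (closedBall (0:Rn n) 1) hρ
  rw [h1, smul_unitClosedBall, Real.norm_of_nonneg hρ.le]
  have h2 : ∫ x in closedBall (0:Rn n) ρ, g (y + x) = ∫ x in closedBall y ρ, g x := by
    rw [← integral_indicator measurableSet_closedBall, ← integral_indicator measurableSet_closedBall,
      ← integral_add_left_eq_self (indicator (closedBall y ρ) fun x => g x) y]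
    congr 1
    ext x
    simp [indicator, dist_eq_norm]
  rw [h2, smul_smul]
  congr 1
  simp only [Measure.real, Real.volume_pi_closedBall _ hρ.le, Real.volume_pi_closedBall _ zero_le_one]
  rw [ENNReal.toReal_ofReal (by positivity), ENNReal.toReal_ofReal (by positivity)]
  simp [mul_pow]
  field_simp


def locE {n : ℕ} (m : ℕ) (p : ℝ) (f : Rn n → ℝ) (x : Rn n) (r : ℝ) : ℝ≥0∞ :=
  ⨅ (P : MvPolynomial (Fin n) ℝ) (_ : P.totalDegree ≤ m),
    ∫⁻ y in closedBall x r, ENNReal.ofReal |f y - MvPolynomial.eval y P| ^ p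

def Tavg {n : ℕ} (m : ℕ) (lam : ℕ → ℝ) (f : Rn n → ℝ) (y : Rn n) (ρ : ℝ) : ℝ :=
  ∑ l ∈ Finset.range (m+1), lam l * ⨍ x in closedBall y (ρ * (1/2)^l), f x

lemma aux_Tavg_poly {n : ℕ} (m : ℕ) (lam : ℕ → ℝ)
    (hlam : ∀ P : MvPolynomial (Fin n) ℝ, P.totalDegree ≤ m →
    ∀ y v : Rn n, ∑ l ∈ Finset.range (m+1), lam l * MvPolynomial.eval (y + ((1/2:ℝ)^l) • v) P
      = MvPolynomial.eval y P) (P : MvPolynomial (Fin n) ℝ) (hP : P.totalDegree ≤ m) (y : Rn n)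
    (ρ : ℝ) (hρ : 0 < ρ) : Tavg m lam (fun x => MvPolynomial.eval x P) y ρ = MvPolynomial.eval y P := by
  unfold Tavg
  have h1 : ∀ l : ℕ, ⨍ x in closedBall y (ρ * (1/2)^l), MvPolynomial.eval x P =
      ⨍ z in closedBall (0 : Rn n) 1, MvPolynomial.eval (y + ((1/2:ℝ)^l) • (ρ • z)) P := by
    intro l
    rw [aux_avg_scale _ _ _ (by positivity)]
    simp only [smul_smul, mul_comm]
  simp only [h1, setAverage_eq, smul_eq_mul]
  have hint : ∀ l : ℕ, IntegrableOn (fun z : Rn n => MvPolynomial.eval (y + ((1/2:ℝ)^l) • (ρ • z)) P)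
      (closedBall (0 : Rn n) 1) := by
    intro l
    refine ContinuousOn.integrableOn_compact (isCompact_closedBall 0 1) (Continuous.continuousOn ?_)
    exact (MvPolynomial.continuous_eval P).comp (by fun_prop)
  have h2 : ∀ l : ℕ, lam l * ((volume.real (closedBall (0:Rn n) 1))⁻¹ * ∫ z in closedBall (0 : Rn n) 1, MvPolynomial.eval (y + ((1/2:ℝ)^l) • (ρ • z)) P) = (volume.real (closedBall (0:Rn n) 1))⁻¹ * ∫ z in closedBall (0 : Rn n) 1, lam l * MvPolynomial.eval (y + ((1/2:ℝ)^l) • (ρ • z)) P := by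
    intro l
    rw [integral_const_mul]; ring
  simp only [h2]
  rw [← Finset.mul_sum, ← integral_finsetSum]
  · simp only [hlam P hP]
    rw [setIntegral_const, smul_eq_mul, ← mul_assoc, inv_mul_cancel₀, one_mul]
    rw [Measure.real, ENNReal.toReal_ne_zero]
    exact ⟨(measure_closedBall_pos volume _ one_pos).ne', measure_closedBall_lt_top.ne⟩
  · intro l _
    exact (hint l).const_mul _

lemma aux_Tavg_sub {n : ℕ} (m : ℕ) (lam : ℕ → ℝ) (f g : Rn n → ℝ) (hf : LocallyIntegrable f)
    (hg : LocallyIntegrable g) (y : Rn n) (ρ : ℝ) :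
    Tavg m lam (fun x => f x - g x) y ρ = Tavg m lam f y ρ - Tavg m lam g y ρ := by
  unfold Tavg
  rw [← Finset.sum_sub_distrib]
  refine Finset.sum_congr rfl fun l _ => ?_
  rw [setAverage_eq, setAverage_eq, setAverage_eq, integral_sub]
  · simp only [smul_eq_mul]; ring
  · exact hf.integrableOn_isCompact (isCompact_closedBall _ _)
  · exact hg.integrableOn_isCompact (isCompact_closedBall _ _)

lemma aux_Tavg_bound (n m : ℕ) (lam : ℕ → ℝ) (p : ℝ) (hp : 1 ≤ p) :
    ∃ K : ℝ≥0∞, K ≠ ⊤ ∧ ∀ u : Rn n → ℝ, Measurable u → ∀ y ρ, 0 < ρ →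
      ENNReal.ofReal |Tavg m lam u y ρ| ^ p ≤ K * (ENNReal.ofReal (ρ ^ (-(n:ℝ))) *
        ∫⁻ x in closedBall y ρ, ENNReal.ofReal |u x| ^ p) := by
  have hp0 : 0 < p := by linarith
  obtain ⟨Λ, hΛ⟩ : ∃ Λ, Λ = ∑ l ∈ Finset.range (m+1), ENNReal.ofReal |lam l| := ⟨_, rfl⟩
  have hΛt : Λ ≠ ⊤ := by
    rw [hΛ]; exact ENNReal.sum_ne_top.2 fun _ _ => ENNReal.ofReal_ne_top
  refine ⟨Λ ^ p * ENNReal.ofReal (2 ^ (m * n)), by finiteness, ?_⟩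
  intro u hu y ρ hρ
  obtain ⟨A, hA⟩ : ∃ A, A = ENNReal.ofReal (2 ^ (m * n)) * (ENNReal.ofReal (ρ ^ (-(n:ℝ))) *
        ∫⁻ x in closedBall y ρ, ENNReal.ofReal |u x| ^ p) := ⟨_, rfl⟩
  have h1 : ∀ l ∈ Finset.range (m+1), ENNReal.ofReal |⨍ x in closedBall y (ρ * (1/2)^l), u x| ≤ A ^ (1/p) := by
    intro l hl
    have hl' : l ≤ m := by simpa [Nat.lt_succ_iff] using hl
    rw [one_div p, ENNReal.le_rpow_inv_iff hp0]
    refine (aux_jensen p hp u hu y (ρ * (1/2)^l) (by positivity)).trans ?_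
    rw [hA, ← mul_assoc]
    refine mul_le_mul' ?_ (lintegral_mono_set (closedBall_subset_closedBall ?_))
    · rw [Real.volume_pi_closedBall _ (by positivity), Fintype.card_fin,
        ← ENNReal.ofReal_inv_of_pos (by positivity), ← ENNReal.ofReal_mul (by positivity)]
      refine ENNReal.ofReal_le_ofReal ?_
      rw [Real.rpow_neg hρ.le, Real.rpow_natCast, pow_mul, ← inv_pow, ← inv_pow, ← mul_pow]
      refine pow_le_pow_left₀ (by positivity) ?_ _
      rw [mul_inv, mul_inv, ← inv_pow]
      have : (2:ℝ)^l ≤ 2^m := pow_le_pow_right₀ (by norm_num) hl'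
      have hr : 0 < ρ⁻¹ := by positivity
      norm_num
      nlinarith [mul_le_mul_of_nonneg_left this hr.le, pow_pos (two_pos : (0:ℝ)<2) l, mul_pos hr (pow_pos (two_pos : (0:ℝ)<2) l)]
    · exact mul_le_of_le_one_right hρ.le (pow_le_one₀ (by norm_num) (by norm_num))
  calc _ ≤ (Λ * A ^ (1/p)) ^ p := by
        gcongr
        unfold Tavg
        calc _ ≤ ENNReal.ofReal (∑ l ∈ Finset.range (m+1), |lam l * ⨍ x in closedBall y (ρ * (1/2)^l), u x|) :=
              ENNReal.ofReal_le_ofReal (Finset.abs_sum_le_sum_abs _ _)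
          _ = ∑ l ∈ Finset.range (m+1), ENNReal.ofReal (|lam l * ⨍ x in closedBall y (ρ * (1/2)^l), u x|) :=
              ENNReal.ofReal_sum_of_nonneg fun _ _ => abs_nonneg _
          _ ≤ ∑ l ∈ Finset.range (m+1), ENNReal.ofReal |lam l| * A ^ (1/p) := by
              refine Finset.sum_le_sum fun l hl => ?_
              rw [abs_mul, ENNReal.ofReal_mul (abs_nonneg _)]
              gcongr
              exact h1 l hl
          _ = Λ * A ^ (1/p) := by rw [hΛ, Finset.sum_mul]
    _ = Λ ^ p * A := by
        rw [ENNReal.mul_rpow_of_nonneg _ _ hp0.le, ← ENNReal.rpow_mul, one_div_mul_cancel hp0.ne',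
          ENNReal.rpow_one]
    _ = _ := by rw [hA, mul_assoc]

lemma aux_Tavg_tendsto {n : ℕ} (m : ℕ) (lam : ℕ → ℝ) (hlam : ∑ l ∈ Finset.range (m+1), lam l = 1)
    (f : Rn n → ℝ) (y : Rn n) (L : ℝ)
    (h : Tendsto (fun r : ℝ => ⨍ x in closedBall y r, f x) (𝓝[>] 0) (𝓝 L)) (r : ℝ) (hr : 0 < r) :
    Tendsto (fun i : ℕ => Tavg m lam f y (r * (1/2)^i)) atTop (𝓝 L) := by
  unfold Tavg
  have : L = ∑ l ∈ Finset.range (m+1), lam l * L := by rw [← Finset.sum_mul, hlam, one_mul]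
  rw [this]
  refine tendsto_finsetSum _ fun l _ => Tendsto.const_mul _ ?_
  refine h.comp ?_
  refine tendsto_nhdsWithin_iff.2 ⟨?_, Eventually.of_forall fun i => by
    simp only [mem_Ioi]; positivity⟩
  have : Tendsto (fun i : ℕ => r * (1/2:ℝ)^i * (1/2)^l) atTop (𝓝 (r * 0 * (1/2)^l)) :=
    ((tendsto_pow_atTop_nhds_zero_of_lt_one (by norm_num) (by norm_num)).const_mul r).mul_const _
  simpa using this

lemma aux_le_locE {n : ℕ} (m : ℕ) (p : ℝ) (f : Rn n → ℝ) (x : Rn n) (r : ℝ) (A X R : ℝ≥0∞)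
    (hA : A ≠ ⊤) (h : ∀ P : MvPolynomial (Fin n) ℝ, P.totalDegree ≤ m →
      X ≤ A * (∫⁻ y in closedBall x r, ENNReal.ofReal |f y - MvPolynomial.eval y P| ^ p) + R) :
    X ≤ A * locE m p f x r + R := by
  rcases eq_or_ne A 0 with h0 | h0
  · have := h 0 (by simp)
    simpa [h0] using this
  · rw [← tsub_le_iff_right]
    rw [mul_comm, ← ENNReal.div_le_iff h0 hA]
    refine le_iInf₂ fun P hP => ?_
    rw [ENNReal.div_le_iff h0 hA, mul_comm, tsub_le_iff_right]
    exact h P hP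

lemma aux_tri (p : ℝ) (hp : 1 ≤ p) (x y z : ℝ) :
    ENNReal.ofReal |x - z| ^ p ≤ (2:ℝ≥0∞) ^ (p - 1) *
      (ENNReal.ofReal |x - y| ^ p + ENNReal.ofReal |z - y| ^ p) := by
  refine le_trans ?_ (ENNReal.rpow_add_le_mul_rpow_add_rpow _ _ hp)
  refine ENNReal.rpow_le_rpow ?_ (by linarith)
  rw [← ENNReal.ofReal_add (abs_nonneg _) (abs_nonneg _)]
  refine ENNReal.ofReal_le_ofReal ?_
  rw [abs_sub_comm z y]
  exact abs_sub_le _ _ _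

lemma aux_telescope (n m : ℕ) (p : ℝ) (hp : 1 ≤ p) (η : ℝ) (hη : 0 < η) :
    ∃ K : ℝ≥0∞, K ≠ ⊤ ∧ ∀ f : Rn n → ℝ, Measurable f → LocallyIntegrable f →
      ∀ y L, Tendsto (fun r : ℝ => ⨍ x in closedBall y r, f x) (𝓝[>] 0) (𝓝 L) →
      ∀ r, 0 < r → ∀ P : MvPolynomial (Fin n) ℝ, P.totalDegree ≤ m →
      ENNReal.ofReal |L - MvPolynomial.eval y P| ^ p ≤
        K * (ENNReal.ofReal (r ^ (-(n:ℝ))) *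
          (∫⁻ x in closedBall y r, ENNReal.ofReal |f x - MvPolynomial.eval x P| ^ p) +
          ∑' i : ℕ, ENNReal.ofReal ((2:ℝ) ^ (η * i) * (r * (1/2)^i) ^ (-(n:ℝ))) *
            locE m p f y (r * (1/2)^i)) := by
  have hp0 : 0 < p := by linarith
  obtain ⟨lam, hlam⟩ := aux_richardson n m
  obtain ⟨K, hK, hb⟩ := aux_Tavg_bound n m lam p hp
  have hlam1 : ∑ l ∈ Finset.range (m+1), lam l = 1 := by
    have := hlam 1 (by simp) 0 0
    simpa using this
  have hTP : ∀ f : Rn n → ℝ, Measurable f → LocallyIntegrable f → ∀ y r, 0 < r →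
      ∀ P : MvPolynomial (Fin n) ℝ, P.totalDegree ≤ m →
      ENNReal.ofReal |Tavg m lam f y r - MvPolynomial.eval y P| ^ p ≤ K * (ENNReal.ofReal (r ^ (-(n:ℝ))) *
          (∫⁻ x in closedBall y r, ENNReal.ofReal |f x - MvPolynomial.eval x P| ^ p)) := by
    intro f hf hfl y r hr P hP
    have hPc := MvPolynomial.continuous_eval P
    rw [← aux_Tavg_poly m lam hlam P hP y r hr, ← aux_Tavg_sub m lam f _ hfl hPc.locallyIntegrable]
    exact hb _ (hf.sub hPc.measurable) y r hr
  obtain ⟨K₂, hK₂⟩ : ∃ K₂, K₂ = (2:ℝ≥0∞) ^ (p - 1) * (K + K * ENNReal.ofReal (2 ^ n)) := ⟨_, rfl⟩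
  have hK₂t : K₂ ≠ ⊤ := by
    have : 0 ≤ p - 1 := by linarith
    rw [hK₂]; finiteness
  have hdiff : ∀ f : Rn n → ℝ, Measurable f → LocallyIntegrable f → ∀ y r, 0 < r →
      ENNReal.ofReal |Tavg m lam f y r - Tavg m lam f y (r * (1/2))| ^ p ≤
        K₂ * (ENNReal.ofReal (r ^ (-(n:ℝ))) * locE m p f y r) := by
    intro f hf hfl y r hr
    have key := aux_le_locE m p f y r (K₂ * ENNReal.ofReal (r ^ (-(n:ℝ))))
      (ENNReal.ofReal |Tavg m lam f y r - Tavg m lam f y (r * (1/2))| ^ p) 0 (by finiteness) (by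
      intro P hP
      refine (aux_tri p hp _ (MvPolynomial.eval y P) _).trans ?_
      have h1 := hTP f hf hfl y r hr P hP
      have h2 := hTP f hf hfl y (r * (1/2)) (by positivity) P hP
      have h3 : K * (ENNReal.ofReal ((r * (1/2)) ^ (-(n:ℝ))) *
          (∫⁻ x in closedBall y (r * (1/2)), ENNReal.ofReal |f x - MvPolynomial.eval x P| ^ p)) ≤
          K * ENNReal.ofReal (2 ^ n) * (ENNReal.ofReal (r ^ (-(n:ℝ))) *
          (∫⁻ x in closedBall y r, ENNReal.ofReal |f x - MvPolynomial.eval x P| ^ p)) := by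
        rw [mul_assoc, ← mul_assoc (ENNReal.ofReal (2 ^ n))]
        refine mul_le_mul' le_rfl (mul_le_mul' ?_ (lintegral_mono_set (closedBall_subset_closedBall (by linarith))))
        rw [← ENNReal.ofReal_mul (by positivity)]
        refine ENNReal.ofReal_le_ofReal (le_of_eq ?_)
        rw [Real.mul_rpow hr.le (by norm_num), Real.rpow_neg (by norm_num : (0:ℝ) ≤ 1/2), Real.rpow_natCast]
        rw [mul_comm]; congr 1; simp
      refine (mul_le_mul' le_rfl (add_le_add h1 (h2.trans h3))).trans (le_of_eq ?_)
      rw [hK₂]; ring)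
    rw [add_zero, mul_assoc] at key
    exact key
  obtain ⟨q, hq⟩ : ∃ q : ℝ, q = (2:ℝ) ^ (-η/p) := ⟨_, rfl⟩
  have hq0 : 0 < q := by rw [hq]; positivity
  have hq1 : q < 1 := by
    rw [hq]; exact Real.rpow_lt_one_of_one_lt_of_neg (by norm_num) (div_neg_of_neg_of_pos (by linarith) hp0)
  have hq2 : 0 < 1 - q := by linarith
  obtain ⟨c, hc⟩ : ∃ c : ℝ, c = ((1 - q)⁻¹) ^ p := ⟨_, rfl⟩
  have hc0 : 0 < c := by rw [hc]; positivity
  refine ⟨(2:ℝ≥0∞) ^ (p - 1) * (K + K₂ * ENNReal.ofReal c), ?_, ?_⟩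
  · have : 0 ≤ p - 1 := by linarith
    finiteness
  intro f hf hfl y L hL r hr P hP
  obtain ⟨X, hX⟩ : ∃ X, X = ∑' i : ℕ, ENNReal.ofReal ((2:ℝ) ^ (η * i) * (r * (1/2)^i) ^ (-(n:ℝ))) *
            locE m p f y (r * (1/2)^i) := ⟨_, rfl⟩
  rw [← hX]
  have hTL : ENNReal.ofReal |L - Tavg m lam f y r| ^ p ≤ K₂ * X * ENNReal.ofReal c := by
    rcases eq_or_ne (K₂ * X) ⊤ with ht | ht
    · rw [ht, ENNReal.top_mul (by simpa using hc0)]; exact le_top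
    obtain ⟨Y, hY⟩ : ∃ Y, Y = (K₂ * X).toReal := ⟨_, rfl⟩
    have hY0 : 0 ≤ Y := by rw [hY]; positivity
    have hYX : K₂ * X = ENNReal.ofReal Y := by rw [hY, ENNReal.ofReal_toReal ht]
    have hb : ∀ i : ℕ, dist (Tavg m lam f y (r * (1/2)^i)) (Tavg m lam f y (r * (1/2)^(i+1))) ≤ Y ^ (1/p) * q ^ i := by
      intro i
      have h1 := hdiff f hf hfl y (r * (1/2)^i) (by positivity)
      rw [mul_assoc r, ← pow_succ] at h1
      rw [Real.dist_eq]
      set D := |Tavg m lam f y (r * (1/2)^i) - Tavg m lam f y (r * (1/2)^(i+1))| with hD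
      have hD0 : 0 ≤ D := abs_nonneg _
      have h2 : ENNReal.ofReal ((2:ℝ) ^ (η * i)) * ENNReal.ofReal D ^ p ≤ K₂ * X := by
        refine (mul_le_mul' le_rfl h1).trans ?_
        rw [mul_left_comm, ← mul_assoc (ENNReal.ofReal ((2:ℝ) ^ (η * i))), ← ENNReal.ofReal_mul (by positivity)]
        refine mul_le_mul' le_rfl ?_
        rw [hX]
        exact ENNReal.le_tsum (f := fun i : ℕ => ENNReal.ofReal ((2:ℝ) ^ (η * i) * (r * (1/2)^i) ^ (-(n:ℝ))) *
            locE m p f y (r * (1/2)^i)) i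
      rw [hYX, ENNReal.ofReal_rpow_of_nonneg hD0 hp0.le, ← ENNReal.ofReal_mul (by positivity),
        ENNReal.ofReal_le_ofReal_iff hY0] at h2
      have h3 : D ^ p ≤ Y * (q ^ i) ^ p := by
        have : (q ^ i) ^ p = ((2:ℝ) ^ (η * i))⁻¹ := by
          rw [hq, ← Real.rpow_natCast, ← Real.rpow_mul (by positivity), ← Real.rpow_mul (by positivity),
            ← Real.rpow_neg (by norm_num)]
          congr 1; field_simp
        rw [this, ← div_eq_mul_inv, le_div_iff₀ (by positivity), mul_comm]
        exact h2
      have h4 : Y * (q ^ i) ^ p = (Y ^ (1/p) * q ^ i) ^ p := by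
        rw [Real.mul_rpow (by positivity) (by positivity), ← Real.rpow_mul hY0, one_div_mul_cancel hp0.ne', Real.rpow_one]
      rw [h4] at h3
      exact (Real.rpow_le_rpow_iff hD0 (by positivity) hp0).1 h3
    have h5 := dist_le_of_le_geometric_of_tendsto₀ q (Y ^ (1/p)) hq1 hb (aux_Tavg_tendsto m lam hlam1 f y L hL r hr)
    simp only [pow_zero, mul_one] at h5
    rw [dist_comm, Real.dist_eq] at h5
    rw [hYX, ← ENNReal.ofReal_mul hY0, ENNReal.ofReal_rpow_of_nonneg (abs_nonneg _) hp0.le]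
    refine ENNReal.ofReal_le_ofReal ?_
    refine (Real.rpow_le_rpow (abs_nonneg _) h5 hp0.le).trans (le_of_eq ?_)
    rw [div_eq_mul_inv, Real.mul_rpow (by positivity) (by positivity), ← Real.rpow_mul hY0, one_div_mul_cancel hp0.ne', Real.rpow_one, hc]
  have h6 := hTP f hf hfl y r hr P hP
  refine (aux_tri p hp L (Tavg m lam f y r) _).trans ?_
  rw [abs_sub_comm (MvPolynomial.eval y P), mul_assoc]
  refine mul_le_mul' le_rfl ?_
  rw [add_comm]
  refine (add_le_add h6 hTL).trans ?_
  rw [add_mul, mul_add K, mul_add (K₂ * _)]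
  refine add_le_add le_self_add ?_
  refine le_trans (le_of_eq ?_) le_add_self
  ring


lemma aux_locE_mono {n : ℕ} (m : ℕ) (p : ℝ) (f : Rn n → ℝ) (x y : Rn n) (r r' : ℝ)
    (h : closedBall x r ⊆ closedBall y r') : locE m p f x r ≤ locE m p f y r' := by
  unfold locE
  gcongr

lemma aux_usc {n : ℕ} (ν : Measure (Rn n)) (hν : ∀ x r, ν (closedBall x r) ≠ ⊤) (r : ℝ) :
    UpperSemicontinuous fun x => ν (closedBall x r) := by
  intro x y hy
  have h1 : Tendsto (ν ∘ (fun t => closedBall x t)) (𝓝[>] r) (𝓝 (ν (⋂ t > r, closedBall x t))) := by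
    refine tendsto_measure_biInter_gt (fun t _ => measurableSet_closedBall.nullMeasurableSet)
      (fun i j _ hij => closedBall_subset_closedBall hij) ⟨r + 1, by simp, hν _ _⟩
  have h2 : (⋂ t > r, closedBall x t) = closedBall x r := by
    ext z
    simp only [mem_iInter, mem_closedBall]
    exact ⟨fun h => le_of_forall_gt_imp_ge_of_dense h, fun h t ht => h.trans ht.le⟩
  rw [h2] at h1
  have h3 := (h1.eventually (gt_mem_nhds hy)).and self_mem_nhdsWithin
  obtain ⟨t, ht, htr⟩ := h3.exists
  filter_upwards [ball_mem_nhds x (sub_pos.2 htr)] with z hz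
  refine lt_of_le_of_lt (measure_mono ?_) ht
  refine closedBall_subset_closedBall' ?_
  rw [mem_ball] at hz
  linarith

lemma aux_fin {n : ℕ} (p : ℝ) (hp : 1 ≤ p) (f : Rn n → ℝ) (hfm : Measurable f)
    (hf : ∫⁻ x, ENNReal.ofReal |f x| ^ p < ⊤) (P : MvPolynomial (Fin n) ℝ) (x : Rn n) (r : ℝ) :
    ∫⁻ y in closedBall x r, ENNReal.ofReal |f y - MvPolynomial.eval y P| ^ p ≠ ⊤ := by
  have hp1 : 0 ≤ p - 1 := by linarith
  have h1 : ∫⁻ y in closedBall x r, ENNReal.ofReal |f y - MvPolynomial.eval y P| ^ p ≤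
      (2:ℝ≥0∞) ^ (p - 1) * ((∫⁻ y in closedBall x r, ENNReal.ofReal |f y| ^ p) +
        ∫⁻ y in closedBall x r, ENNReal.ofReal |MvPolynomial.eval y P| ^ p) := by
    rw [← lintegral_add_left (by fun_prop), ← lintegral_const_mul' _ _ (by finiteness)]
    refine lintegral_mono fun y => ?_
    have := aux_tri p hp (f y) 0 (MvPolynomial.eval y P)
    simpa using this
  refine ne_top_of_le_ne_top ?_ h1
  have h2 : ∫⁻ y in closedBall x r, ENNReal.ofReal |f y| ^ p ≠ ⊤ :=
    ne_top_of_le_ne_top hf.ne (setLIntegral_le_lintegral _ _)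
  have h3 : ∫⁻ y in closedBall x r, ENNReal.ofReal |MvPolynomial.eval y P| ^ p ≠ ⊤ := by
    obtain ⟨B, hB⟩ := (isCompact_closedBall x r).exists_bound_of_continuousOn
      (MvPolynomial.continuous_eval P).continuousOn
    have : ∫⁻ y in closedBall x r, ENNReal.ofReal |MvPolynomial.eval y P| ^ p ≤
        ∫⁻ y in closedBall x r, ENNReal.ofReal B ^ p := by
      refine setLIntegral_mono (by fun_prop) fun y hy => ?_
      gcongr
      exact hB y hy
    refine ne_top_of_le_ne_top ?_ this
    rw [setLIntegral_const]
    have : volume (closedBall x r) ≠ ⊤ := measure_closedBall_lt_top.ne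
    finiteness
  finiteness

lemma aux_locE_meas {n : ℕ} (m : ℕ) (p : ℝ) (hp : 1 ≤ p) (f : Rn n → ℝ) (hfm : Measurable f)
    (hf : ∫⁻ x, ENNReal.ofReal |f x| ^ p < ⊤) (r : ℝ) : Measurable fun x => locE m p f x r := by
  refine UpperSemicontinuous.measurable ?_
  unfold locE
  refine upperSemicontinuous_biInf fun P hP => ?_
  have h := aux_usc (volume.withDensity fun y => ENNReal.ofReal |f y - MvPolynomial.eval y P| ^ p) (by
    intro x r
    rw [withDensity_apply _ measurableSet_closedBall]
    exact aux_fin p hp f hfm hf P x r) r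
  simpa only [withDensity_apply _ measurableSet_closedBall] using h

def Gf {n : ℕ} (m : ℕ) (s p : ℝ) (f : Rn n → ℝ) (x : Rn n) : ℝ≥0∞ :=
  ⨆ j : ℕ, ENNReal.ofReal (((1/2:ℝ)^j) ^ (-(s*p) - n)) * locE m p f x ((1/2:ℝ)^j)

lemma aux_Gf_meas {n : ℕ} (m : ℕ) (s p : ℝ) (hp : 1 ≤ p) (f : Rn n → ℝ) (hfm : Measurable f)
    (hf : ∫⁻ x, ENNReal.ofReal |f x| ^ p < ⊤) : Measurable (Gf m s p f) := by
  unfold Gf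
  exact Measurable.iSup fun j => (aux_locE_meas m p hp f hfm hf _).const_mul _

lemma aux_locE_le_Gf {n : ℕ} (m : ℕ) (s p : ℝ) (f : Rn n → ℝ) (x : Rn n) (j : ℕ) :
    locE m p f x ((1/2:ℝ)^j) ≤ ENNReal.ofReal (((1/2:ℝ)^j) ^ (s*p + n)) * Gf m s p f x := by
  have h := le_iSup (fun j : ℕ => ENNReal.ofReal (((1/2:ℝ)^j) ^ (-(s*p) - n)) * locE m p f x ((1/2:ℝ)^j)) j
  refine le_trans (le_of_eq ?_) (mul_le_mul' le_rfl h)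
  rw [← mul_assoc, ← ENNReal.ofReal_mul (by positivity), ← Real.rpow_add (by positivity)]
  ring_nf
  simp

lemma aux_Gf_le {n : ℕ} (s p : ℝ) (hp : 1 ≤ p) (f : Rn n → ℝ) (x : Rn n) :
    Gf ⌊s⌋₊ s p f x ≤ ENNReal.ofReal (2 ^ n) * fSharp s p f x ^ p := by
  have hp0 : 0 < p := by linarith
  refine iSup_le fun j => ?_
  obtain ⟨r, hr⟩ : ∃ r, r = (1/2:ℝ)^j := ⟨_, rfl⟩
  have hr0 : 0 < r := by rw [hr]; positivity
  have hr1 : r ≤ 1 := by rw [hr]; exact pow_le_one₀ (by norm_num) (by norm_num)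
  rw [← hr]
  have h1 : ENNReal.ofReal (r ^ (-s)) * localApprox (⌊s⌋₊ + 1) p f x r ≤ fSharp s p f x :=
    le_iSup₂ (f := fun (r : ℝ) (_ : r ∈ Set.Ioc (0:ℝ) 1) =>
      ENNReal.ofReal (r ^ (-s)) * localApprox (⌊s⌋₊ + 1) p f x r) r ⟨hr0, hr1⟩
  have h2 : (volume (closedBall x r))⁻¹ * locE ⌊s⌋₊ p f x r ≤ localApprox (⌊s⌋₊ + 1) p f x r ^ p := by
    rw [← ENNReal.rpow_inv_le_iff hp0, ← one_div p]
    refine le_iInf₂ fun P hP => ?_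
    have hP2 : P.totalDegree ≤ ⌊s⌋₊ := by simpa using hP
    have h3 : locE ⌊s⌋₊ p f x r ≤ ∫⁻ y in closedBall x r, ENNReal.ofReal |f y - MvPolynomial.eval y P| ^ p :=
      iInf₂_le P hP2
    exact ENNReal.rpow_le_rpow (mul_le_mul' le_rfl h3) (by positivity)
  refine le_trans ?_ (mul_le_mul' le_rfl (ENNReal.rpow_le_rpow h1 hp0.le))
  rw [ENNReal.mul_rpow_of_nonneg _ _ hp0.le]
  refine le_trans ?_ (mul_le_mul' le_rfl (mul_le_mul' le_rfl h2))
  rw [Real.volume_pi_closedBall _ hr0.le, Fintype.card_fin, ← ENNReal.ofReal_inv_of_pos (by positivity),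
    ENNReal.ofReal_rpow_of_nonneg (by positivity) hp0.le, ← mul_assoc, ← mul_assoc,
    ← ENNReal.ofReal_mul (by positivity), ← ENNReal.ofReal_mul (by positivity)]
  refine mul_le_mul' (ENNReal.ofReal_le_ofReal (le_of_eq ?_)) le_rfl
  rw [← Real.rpow_mul hr0.le, Real.rpow_sub hr0, mul_pow, Real.rpow_natCast, neg_mul]
  field_simp

lemma aux_locInt {n : ℕ} (p : ℝ) (hp : 1 ≤ p) (f : Rn n → ℝ) (hfm : Measurable f)
    (hf : ∫⁻ x, ENNReal.ofReal |f x| ^ p < ⊤) : LocallyIntegrable f := by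
  have hp0 : 0 < p := by linarith
  have : MemLp f (ENNReal.ofReal p) := by
    refine ⟨hfm.aestronglyMeasurable, ?_⟩
    rw [eLpNorm_lt_top_iff_lintegral_rpow_enorm_lt_top (by simpa using hp0) ENNReal.ofReal_ne_top,
      ENNReal.toReal_ofReal hp0.le]
    simpa only [← ofReal_norm, Real.norm_eq_abs] using hf
  exact this.locallyIntegrable (by simpa using hp)


lemma aux_tonelli {n : ℕ} (ν μ : Measure (Rn n)) [SFinite ν] [SFinite μ] (A : Set (Rn n))
    (hA : MeasurableSet A) (g : Rn n → ℝ≥0∞) (hg : Measurable g) (R : ℝ) :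
    ∫⁻ x in A, (∫⁻ w in closedBall x R, g w ∂μ) ∂ν = ∫⁻ w, g w * ν (A ∩ closedBall w R) ∂μ := by
  have hD : MeasurableSet {q : Rn n × Rn n | dist q.2 q.1 ≤ R} :=
    measurableSet_le (by fun_prop) measurable_const
  have h1 : ∀ x, ∫⁻ w in closedBall x R, g w ∂μ =
      ∫⁻ w, {q : Rn n × Rn n | dist q.2 q.1 ≤ R}.indicator (fun q => g q.2) (x, w) ∂μ := by
    intro x
    rw [← lintegral_indicator measurableSet_closedBall]
    rfl
  simp only [h1]
  rw [lintegral_lintegral_swap]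
  · refine lintegral_congr fun w => ?_
    have h2 : ∀ x, {q : Rn n × Rn n | dist q.2 q.1 ≤ R}.indicator (fun q => g q.2) (x, w) =
        (closedBall w R).indicator (fun _ => g w) x := by
      intro x
      simp only [indicator, mem_setOf_eq, mem_closedBall, dist_comm w x]
    simp only [h2]
    rw [lintegral_indicator measurableSet_closedBall, setLIntegral_const,
      Measure.restrict_apply measurableSet_closedBall, inter_comm]
  · exact (Measurable.indicator (by fun_prop) hD).aemeasurable

lemma aux_porous {n : ℕ} (hn : 1 ≤ n) (S : Set (Rn n)) (hSc : IsClosed S) (μ : Measure (Rn n)) [SFinite μ]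
    (d a C : ℝ) (hd : d < n) (ha : 0 < a) (hC : 0 < C)
    (hU : ∀ z ρ, 0 < ρ → ρ ≤ 1/2 → μ (closedBall z ρ) ≤ ENNReal.ofReal (C * ρ ^ d))
    (hL : ∀ w ∈ S, ∀ ρ, 0 < ρ → ρ ≤ 1/2 → ENNReal.ofReal (a * ρ ^ d) ≤ μ (closedBall w ρ)) :
    ∃ M : ℕ, ∀ w ∈ S, ∀ t, 0 < t → t ≤ 1/4 →
      ENNReal.ofReal (t ^ n) ≤ volume (closedBall w t ∩ {y | (1/2:ℝ)^M * t < infDist y S}) := by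
  have hb1 : (1/2:ℝ) ^ ((n:ℝ) - d) < 1 := Real.rpow_lt_one (by norm_num) (by norm_num) (by linarith)
  obtain ⟨M', hM'⟩ := exists_pow_lt_of_lt_one (show 0 < a / (C * 2^d * 4^n) by positivity) hb1
  obtain ⟨κ, hκ⟩ : ∃ κ, κ = (1/2:ℝ)^(M'+1) := ⟨_, rfl⟩
  have hκ0 : 0 < κ := by rw [hκ]; positivity
  have hκ1 : κ ≤ 1/2 := by
    rw [hκ, pow_succ]
    have : (1/2:ℝ)^M' ≤ 1 := pow_le_one₀ (by norm_num) (by norm_num)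
    linarith
  have hκ2 : C * 2^d * 4^n * κ ^ ((n:ℝ) - d) ≤ a := by
    have h1 : κ ^ ((n:ℝ) - d) = ((1/2:ℝ) ^ ((n:ℝ) - d)) ^ (M'+1) := by
      rw [hκ, ← Real.rpow_natCast, ← Real.rpow_mul (by norm_num), mul_comm, Real.rpow_mul (by norm_num),
        Real.rpow_natCast]
    have h2 : κ ^ ((n:ℝ) - d) ≤ a / (C * 2^d * 4^n) := by
      rw [h1]
      exact (pow_le_pow_of_le_one (by positivity) hb1.le (Nat.le_succ _)).trans hM'.le
    rw [le_div_iff₀ (by positivity)] at h2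
    linarith
  refine ⟨M'+1, fun w hw t ht ht4 => ?_⟩
  rw [← hκ]
  set V := closedBall w t ∩ {y | infDist y S ≤ κ * t} with hV
  have hVm : MeasurableSet V := measurableSet_closedBall.inter
    (measurableSet_le (by fun_prop) measurable_const)
  have hV1 : ENNReal.ofReal (a * (κ*t)^d) * volume V ≤ ENNReal.ofReal (C * (2*t)^d * (4*κ*t)^n) := by
    calc _ = ∫⁻ y in V, ENNReal.ofReal (a * (κ*t)^d) := by rw [setLIntegral_const]
      _ ≤ ∫⁻ y in V, (∫⁻ z in closedBall y (2*κ*t), 1 ∂μ) := by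
          refine setLIntegral_mono' hVm fun y hy => ?_
          rw [setLIntegral_one]
          obtain ⟨z, hz, hzd⟩ := hSc.exists_infDist_eq_dist ⟨w, hw⟩ y
          have h3 : dist y z ≤ κ * t := hzd ▸ hy.2
          refine (hL z hz (κ*t) (by positivity) (by nlinarith)).trans (measure_mono ?_)
          refine closedBall_subset_closedBall' ?_
          rw [dist_comm]; linarith
      _ = ∫⁻ z, 1 * volume (V ∩ closedBall z (2*κ*t)) ∂μ := aux_tonelli volume μ V hVm _ measurable_const _
      _ ≤ ∫⁻ z, (closedBall w (2*t)).indicator (fun _ => ENNReal.ofReal ((4*κ*t)^n)) z ∂μ := by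
          refine lintegral_mono fun z => ?_
          simp only [one_mul]
          by_cases hz : z ∈ closedBall w (2*t)
          · rw [indicator_of_mem hz]
            refine (measure_mono inter_subset_right).trans (le_of_eq ?_)
            rw [Real.volume_pi_closedBall _ (by positivity), Fintype.card_fin]
            congr 2; ring
          · rw [indicator_of_notMem hz]
            have : V ∩ closedBall z (2*κ*t) = ∅ := by
              rw [eq_empty_iff_forall_notMem]
              rintro y ⟨hy1, hy2⟩
              refine hz ?_
              rw [mem_closedBall] at *
              have h4 : dist y w ≤ t := hy1.1
              have := dist_triangle_left z w y
              nlinarith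
            simp [this]
      _ = ENNReal.ofReal ((4*κ*t)^n) * μ (closedBall w (2*t)) := by
          rw [lintegral_indicator measurableSet_closedBall, setLIntegral_const]
      _ ≤ ENNReal.ofReal ((4*κ*t)^n) * ENNReal.ofReal (C * (2*t)^d) := by
          gcongr
          exact hU w (2*t) (by positivity) (by linarith)
      _ = _ := by
          rw [← ENNReal.ofReal_mul (by positivity), mul_comm]
  have hVt : volume V ≠ ⊤ :=
    ne_top_of_le_ne_top measure_closedBall_lt_top.ne (measure_mono (inter_subset_left : V ⊆ closedBall w t))
  have hV2 : volume V ≤ ENNReal.ofReal (t^n) := by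
    rw [← ENNReal.ofReal_toReal hVt, ← ENNReal.ofReal_mul (by positivity),
      ENNReal.ofReal_le_ofReal_iff (by positivity)] at hV1
    rw [← ENNReal.ofReal_toReal hVt]
    refine ENNReal.ofReal_le_ofReal ?_
    have h5 : C * (2*t)^d * (4*κ*t)^n = (C * 2^d * 4^n * κ ^ ((n:ℝ) - d)) * (κ * t)^d * t^n := by
      rw [Real.mul_rpow (by norm_num) ht.le, Real.mul_rpow hκ0.le ht.le, Real.rpow_sub hκ0, Real.rpow_natCast,
        mul_pow, mul_pow]
      have : κ^d ≠ 0 := by positivity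
      field_simp
    rw [h5] at hV1
    have h6 : (C * 2^d * 4^n * κ ^ ((n:ℝ) - d)) * (κ * t)^d * t^n ≤ a * (κ * t)^d * t^n := by
      gcongr
    exact le_of_mul_le_mul_left (hV1.trans h6) (by positivity)
  have h7 : volume (closedBall w t) ≤ volume (closedBall w t ∩ {y | κ * t < infDist y S}) + volume V := by
    refine (measure_mono ?_).trans (measure_union_le _ _)
    intro y hy
    rcases lt_or_ge (κ * t) (infDist y S) with h | h
    · exact Or.inl ⟨hy, h⟩
    · exact Or.inr ⟨hy, h⟩
  have h8 : ENNReal.ofReal (t^n) + ENNReal.ofReal (t^n) ≤ volume (closedBall w t) := by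
    rw [Real.volume_pi_closedBall _ ht.le, Fintype.card_fin, ← ENNReal.ofReal_add (by positivity) (by positivity)]
    refine ENNReal.ofReal_le_ofReal ?_
    rw [mul_pow]
    have : (2:ℝ)^1 ≤ 2^n := pow_le_pow_right₀ (by norm_num) hn
    have : 0 < t^n := by positivity
    nlinarith
  have h9 := h8.trans (h7.trans (add_le_add le_rfl hV2))
  exact (ENNReal.add_le_add_iff_right ENNReal.ofReal_ne_top).1 h9

lemma aux_meas {n : ℕ} (S : Set (Rn n)) (d C₀ : ℝ) (hS : IsDSet S d C₀) (hd : 0 ≤ d) :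
    SFinite ((μH[d] : Measure (Rn n)).restrict S) ∧
    (∀ z ρ, 0 < ρ → ρ ≤ 1/2 → ((μH[d] : Measure (Rn n)).restrict S) (closedBall z ρ) ≤ ENNReal.ofReal (C₀ * 2^d * ρ ^ d)) ∧
    (∀ w ∈ S, ∀ ρ, 0 < ρ → ρ ≤ 1/2 → ENNReal.ofReal (C₀⁻¹ * ρ ^ d) ≤ ((μH[d] : Measure (Rn n)).restrict S) (closedBall w ρ)) := by
  obtain ⟨hSc, hC, h⟩ := hS
  have hU : ∀ z ρ, 0 < ρ → ρ ≤ 1/2 → ((μH[d] : Measure (Rn n)).restrict S) (closedBall z ρ) ≤ ENNReal.ofReal (C₀ * 2^d * ρ ^ d) := by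
    intro z ρ h0 h1
    rw [Measure.restrict_apply measurableSet_closedBall]
    rcases eq_empty_or_nonempty (closedBall z ρ ∩ S) with he | ⟨w, hw1, hw2⟩
    · rw [he]; simp
    · have := (h w hw2 (2*ρ) (by linarith) (by linarith)).2
      rw [Real.mul_rpow (by norm_num) h0.le, ← mul_assoc] at this
      refine le_trans (measure_mono (inter_subset_inter_left _ ?_)) this
      refine closedBall_subset_closedBall' ?_
      rw [dist_comm]
      rw [mem_closedBall] at hw1
      linarith
  refine ⟨?_, hU, ?_⟩
  · have : IsLocallyFiniteMeasure ((μH[d] : Measure (Rn n)).restrict S) := ⟨fun x =>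
      ⟨closedBall x (1/2), closedBall_mem_nhds _ (by norm_num),
        (hU x (1/2) (by norm_num) le_rfl).trans_lt ENNReal.ofReal_lt_top⟩⟩
    infer_instance
  · intro w hw ρ h0 h1
    rw [Measure.restrict_apply measurableSet_closedBall]
    exact (h w hw ρ h0 (by linarith)).1


def Ts {n : ℕ} (m : ℕ) (p η r : ℝ) (f : Rn n → ℝ) (y : Rn n) : ℝ≥0∞ :=
  ∑' i : ℕ, ENNReal.ofReal ((2:ℝ) ^ (η * i) * (r * (1/2)^i) ^ (-(n:ℝ))) * locE m p f y (r * (1/2)^i)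

lemma aux_point {n : ℕ} (hn : 1 ≤ n) (d : ℝ) (hd : (n:ℝ) - 1 < d) (a C : ℝ) (ha : 0 < a)
    (hC : 0 < C) (m : ℕ) (p : ℝ) (hp : 1 ≤ p) (η : ℝ) (hη : 0 < η) :
    ∃ K : ℝ≥0∞, K ≠ ⊤ ∧ ∀ (S : Set (Rn n)) (μ : Measure (Rn n)),
      (∀ z ρ, 0 < ρ → ρ ≤ 1/2 → μ (closedBall z ρ) ≤ ENNReal.ofReal (C * ρ ^ d)) →
      (∀ w ∈ S, ∀ ρ, 0 < ρ → ρ ≤ 1/2 → ENNReal.ofReal (a * ρ ^ d) ≤ μ (closedBall w ρ)) →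
      ∀ f : Rn n → ℝ, Measurable f → LocallyIntegrable f →
      (∀ᵐ w ∂μ, Tendsto (fun r : ℝ => ⨍ y in closedBall w r, f y) (𝓝[>] 0) (𝓝 0)) →
      ∀ x, Tendsto (fun r : ℝ => ⨍ y in closedBall x r, f y) (𝓝[>] 0) (𝓝 (f x)) →
      ∀ r, 0 < r → r ≤ 1/2 → ∀ w₀ ∈ S, dist x w₀ ≤ r →
      ENNReal.ofReal |f x| ^ p ≤ K * (ENNReal.ofReal (r ^ (-(n:ℝ)))) * locE m p f x (4*r) +
        K * (Ts m p η r f x + ENNReal.ofReal (r ^ (-d)) * ∫⁻ w in closedBall x (2*r), Ts m p η r f w ∂μ) := by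
  have hp0 : 0 < p := by linarith
  obtain ⟨K1, hK1, htel⟩ := aux_telescope n m p hp η hη
  obtain ⟨K2, hK2, hrem⟩ := aux_remez hn d hd a C ha hC m p hp0
  have hp1 : 0 ≤ p - 1 := by linarith
  obtain ⟨B, hB⟩ : ∃ B, B = (2:ℝ≥0∞) ^ (p - 1) := ⟨_, rfl⟩
  have hBt : B ≠ ⊤ := by rw [hB]; finiteness
  refine ⟨B * (K1 + K1 * K2 * ENNReal.ofReal C + K1 * K2), by finiteness, ?_⟩
  intro S μ hU hL f hf hfl htr x hx r hr hr2 w₀ hw₀ hxw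
  have hxw' : dist w₀ x ≤ r := by rwa [dist_comm]
  refine aux_le_locE m p f x (4*r) _ _ _ (by finiteness) ?_
  intro P hP
  obtain ⟨I, hI⟩ : ∃ I, I = ∫⁻ y in closedBall x (4*r), ENNReal.ofReal |f y - MvPolynomial.eval y P| ^ p := ⟨_, rfl⟩
  obtain ⟨N, hN⟩ : ∃ N, N = ENNReal.ofReal (r ^ (-(n:ℝ))) := ⟨_, rfl⟩
  obtain ⟨T2, hT2⟩ : ∃ T2, T2 = ∫⁻ w in closedBall x (2*r), Ts m p η r f w ∂μ := ⟨_, rfl⟩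
  rw [← hI, ← hN, ← hT2]
  have htel' : ∀ y L, Tendsto (fun r : ℝ => ⨍ x in closedBall y r, f x) (𝓝[>] 0) (𝓝 L) →
      dist y x ≤ 2*r → ENNReal.ofReal |L - MvPolynomial.eval y P| ^ p ≤ K1 * (N * I + Ts m p η r f y) := by
    intro y L hy hyx
    refine (htel f hf hfl y L hy r hr P hP).trans ?_
    rw [hN, hI]
    refine mul_le_mul' le_rfl (add_le_add (mul_le_mul' le_rfl (lintegral_mono_set ?_)) le_rfl)
    refine closedBall_subset_closedBall' ?_
    linarith
  have h1 := htel' x (f x) hx (by simp; positivity)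
  have h2 : ∫⁻ y in closedBall w₀ r, ENNReal.ofReal |MvPolynomial.eval y P| ^ p ∂μ ≤
      K1 * (N * I * ENNReal.ofReal (C * r^d) + T2) := by
    calc _ ≤ ∫⁻ y in closedBall w₀ r, K1 * (N * I + Ts m p η r f y) ∂μ := by
          refine lintegral_mono_ae ?_
          refine (ae_restrict_iff' measurableSet_closedBall).2 ?_
          filter_upwards [htr] with y hy hyw
          have := htel' y 0 hy (by
            rw [mem_closedBall] at hyw
            linarith [dist_triangle y w₀ x])
          simpa using this
      _ = K1 * (N * I * μ (closedBall w₀ r) + ∫⁻ y in closedBall w₀ r, Ts m p η r f y ∂μ) := by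
          rw [lintegral_const_mul' _ _ hK1, lintegral_add_left measurable_const, setLIntegral_const]
      _ ≤ _ := by
          rw [hT2]
          refine mul_le_mul' le_rfl (add_le_add (mul_le_mul' le_rfl (hU _ _ hr hr2)) (lintegral_mono_set ?_))
          refine closedBall_subset_closedBall' ?_
          linarith
  have h3 := hrem μ w₀ r hr (hL w₀ hw₀ r hr hr2) (fun z ρ h0 h1 => hU z ρ h0 (by linarith)) P hP x
    (by rw [mem_closedBall]; exact hxw)
  have h4 := h3.trans (mul_le_mul' le_rfl (mul_le_mul' le_rfl h2))
  have h5 := aux_tri p hp (f x) (MvPolynomial.eval x P) 0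
  rw [sub_zero, zero_sub, abs_neg, ← hB] at h5
  refine h5.trans ?_
  refine (mul_le_mul' le_rfl (add_le_add h1 h4)).trans ?_
  have h6 : ENNReal.ofReal (r ^ (-d)) * ENNReal.ofReal (C * r^d) = ENNReal.ofReal C := by
    rw [← ENNReal.ofReal_mul (by positivity)]
    congr 1
    rw [Real.rpow_neg hr.le]
    have : r^d ≠ 0 := by positivity
    field_simp
  generalize ENNReal.ofReal (r ^ (-d)) = D at *
  generalize ENNReal.ofReal (C * r^d) = D' at *
  generalize Ts m p η r f x = T1 at *
  have h7 : B * (K1 * (N * I + T1) + K2 * (D * (K1 * (N * I * D' + T2)))) =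
      B * (K1 + K1 * K2 * (D * D')) * N * I + B * (K1 * T1 + K1 * K2 * (D * T2)) := by ring
  rw [h7, h6]
  refine add_le_add ?_ ?_
  · exact mul_le_mul' (mul_le_mul' (mul_le_mul' le_rfl le_self_add) le_rfl) le_rfl
  · have h8 : K1 ≤ K1 + K1 * K2 * ENNReal.ofReal C + K1 * K2 := by rw [add_assoc]; exact le_self_add
    have h9 : K1 * K2 ≤ K1 + K1 * K2 * ENNReal.ofReal C + K1 * K2 := le_add_self
    rw [mul_assoc B, mul_add (K1 + K1 * K2 * ENNReal.ofReal C + K1 * K2)]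
    exact mul_le_mul' le_rfl (add_le_add (mul_le_mul' h8 le_rfl) (mul_le_mul' h9 le_rfl))


def Ann {n : ℕ} (S : Set (Rn n)) (M k : ℕ) : Set (Rn n) :=
  {y | (1/2:ℝ)^(k+M) < infDist y S ∧ infDist y S ≤ (1/2:ℝ)^k}

lemma aux_Ann_meas {n : ℕ} (S : Set (Rn n)) (M k : ℕ) : MeasurableSet (Ann S M k) :=
  MeasurableSet.inter (s₁ := {y : Rn n | (1/2:ℝ)^(k+M) < infDist y S}) (s₂ := {y : Rn n | infDist y S ≤ (1/2:ℝ)^k})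
    (measurableSet_lt measurable_const (by fun_prop)) (measurableSet_le (by fun_prop) measurable_const)

lemma aux_geo (θ : ℝ) (hθ : 0 < θ) : ∑' i : ℕ, ENNReal.ofReal ((2:ℝ) ^ (-θ * i)) ≠ ⊤ := by
  have h : ∀ i : ℕ, (2:ℝ) ^ (-θ * i) = ((2:ℝ) ^ (-θ)) ^ i := by
    intro i
    rw [Real.rpow_mul (by norm_num), Real.rpow_natCast]
  simp only [h]
  have h1 : (2:ℝ) ^ (-θ) < 1 := Real.rpow_lt_one_of_one_lt_of_neg (by norm_num) (by linarith)
  exact (summable_geometric_of_lt_one (by positivity) h1).tsum_ofReal_ne_top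

lemma aux_Ts_x {n : ℕ} (m : ℕ) (s p η : ℝ) (hη : η < s * p) : ∃ K : ℝ≥0∞, K ≠ ⊤ ∧
    ∀ (f : Rn n → ℝ) (x : Rn n) (j : ℕ),
      Ts m p η ((1/2:ℝ)^j) f x ≤ K * ENNReal.ofReal (((1/2:ℝ)^j) ^ (s*p)) * Gf m s p f x := by
  refine ⟨_, aux_geo (s*p - η) (by linarith), fun f x j => ?_⟩
  unfold Ts
  rw [mul_assoc, ← ENNReal.tsum_mul_right]
  refine ENNReal.tsum_le_tsum fun i => ?_
  rw [← pow_add]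
  refine (mul_le_mul' le_rfl (aux_locE_le_Gf m s p f x (j+i))).trans ?_
  rw [← mul_assoc, ← mul_assoc, ← ENNReal.ofReal_mul (by positivity), ← ENNReal.ofReal_mul (by positivity)]
  refine mul_le_mul' (ENNReal.ofReal_le_ofReal (le_of_eq ?_)) le_rfl
  rw [mul_assoc, ← Real.rpow_add (by positivity), pow_add, Real.mul_rpow (by positivity) (by positivity)]
  have h1 : ((1/2:ℝ)^i) ^ (-(n:ℝ) + (s*p + n)) = 2 ^ (-(s*p) * i) := by
    rw [one_div, inv_pow, Real.inv_rpow (by positivity), ← Real.rpow_natCast, ← Real.rpow_mul (by norm_num),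
      ← Real.rpow_neg (by norm_num)]
    congr 1; ring
  have h2 : -(n:ℝ) + (s*p + n) = s * p := by ring
  rw [h1, h2, mul_left_comm, ← Real.rpow_add (by norm_num), mul_comm]
  congr 2; ring

lemma aux_locE_por {n : ℕ} (S : Set (Rn n)) (M : ℕ)
    (hM : ∀ w ∈ S, ∀ t, 0 < t → t ≤ 1/4 →
      ENNReal.ofReal (t ^ n) ≤ volume (closedBall w t ∩ {y | (1/2:ℝ)^M * t < infDist y S}))
    (m : ℕ) (s p : ℝ) (hp : 1 ≤ p) (f : Rn n → ℝ) (hfm : Measurable f)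
    (hf : ∫⁻ x, ENNReal.ofReal |f x| ^ p < ⊤) (w : Rn n) (hw : w ∈ S) (k : ℕ) (hk : 2 ≤ k) :
    locE m p f w ((1/2:ℝ)^k) ≤ ENNReal.ofReal ((2:ℝ) ^ (s*p+n)) * ENNReal.ofReal (((1/2:ℝ)^k) ^ (s*p)) *
      ∫⁻ y in closedBall w ((1/2:ℝ)^k), (Ann S M k).indicator (Gf m s p f) y := by
  obtain ⟨k', rfl⟩ : ∃ k', k = k' + 1 := ⟨k - 1, by omega⟩
  have hG := aux_Gf_meas m s p hp f hfm hf
  obtain ⟨t, ht⟩ : ∃ t, t = (1/2:ℝ)^(k'+1) := ⟨_, rfl⟩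
  have ht0 : 0 < t := by rw [ht]; positivity
  have ht4 : t ≤ 1/4 := by
    rw [ht]
    calc (1/2:ℝ)^(k'+1) ≤ (1/2)^2 := pow_le_pow_of_le_one (by norm_num) (by norm_num) hk
      _ = 1/4 := by norm_num
  have h2t : (1/2:ℝ)^k' = 2 * t := by rw [ht, pow_succ]; ring
  rw [← ht]
  set V := closedBall w t ∩ {y | (1/2:ℝ)^M * t < infDist y S} with hV
  have hVm : MeasurableSet V := measurableSet_closedBall.inter
    (measurableSet_lt measurable_const (by fun_prop))
  have hVA : V ⊆ closedBall w t ∩ Ann S M (k'+1) := by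
    rintro y ⟨hy1, hy2⟩
    refine ⟨hy1, ?_, ?_⟩
    · rw [pow_add, ← ht, mul_comm]; exact hy2
    · rw [← ht]; exact (infDist_le_dist_of_mem hw).trans hy1
  have h1 : ENNReal.ofReal (t^n) * locE m p f w t ≤ ENNReal.ofReal ((2*t) ^ (s*p+n)) *
      ∫⁻ y in closedBall w t, (Ann S M (k'+1)).indicator (Gf m s p f) y := by
    calc _ ≤ volume V * locE m p f w t := mul_le_mul' (hM w hw t ht0 ht4) le_rfl
      _ = ∫⁻ y in V, locE m p f w t := by rw [setLIntegral_const, mul_comm]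
      _ ≤ ∫⁻ y in V, ENNReal.ofReal ((2*t) ^ (s*p+n)) * Gf m s p f y := by
          refine setLIntegral_mono' hVm fun y hy => ?_
          have := aux_locE_le_Gf m s p f y k'
          rw [h2t] at this
          refine (aux_locE_mono m p f w y t (2*t) ?_).trans this
          refine closedBall_subset_closedBall' ?_
          have h3 : dist y w ≤ t := hy.1
          rw [dist_comm]; linarith
      _ = ENNReal.ofReal ((2*t) ^ (s*p+n)) * ∫⁻ y in V, Gf m s p f y := lintegral_const_mul _ hG
      _ ≤ ENNReal.ofReal ((2*t) ^ (s*p+n)) * ∫⁻ y in closedBall w t ∩ Ann S M (k'+1), Gf m s p f y :=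
          mul_le_mul' le_rfl (lintegral_mono_set hVA)
      _ = _ := by
          rw [lintegral_indicator (aux_Ann_meas _ _ _), Measure.restrict_restrict (aux_Ann_meas _ _ _), inter_comm]
  have h2 : locE m p f w t = ENNReal.ofReal ((t^n)⁻¹) * (ENNReal.ofReal (t^n) * locE m p f w t) := by
    rw [← mul_assoc, ← ENNReal.ofReal_mul (by positivity), inv_mul_cancel₀ (by positivity)]; simp
  rw [h2]
  refine (mul_le_mul' le_rfl h1).trans (le_of_eq ?_)
  rw [← mul_assoc, ← ENNReal.ofReal_mul (by positivity), ← ENNReal.ofReal_mul (by positivity)]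
  congr 2
  rw [Real.mul_rpow (by norm_num) ht0.le, Real.rpow_add ht0, Real.rpow_natCast]
  field_simp

lemma aux_stepC {n : ℕ} (S : Set (Rn n)) (M : ℕ)
    (hM : ∀ w ∈ S, ∀ t, 0 < t → t ≤ 1/4 →
      ENNReal.ofReal (t ^ n) ≤ volume (closedBall w t ∩ {y | (1/2:ℝ)^M * t < infDist y S}))
    (μ : Measure (Rn n)) [SFinite μ] (hμS : ∀ᵐ w ∂μ, w ∈ S) (d C : ℝ) (hC : 0 < C)
    (hU : ∀ z ρ, 0 < ρ → ρ ≤ 1/2 → μ (closedBall z ρ) ≤ ENNReal.ofReal (C * ρ ^ d))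
    (m : ℕ) (s p : ℝ) (hp : 1 ≤ p) (η : ℝ) (hη : 2 * η = s * p + d - n)
    (f : Rn n → ℝ) (hfm : Measurable f)
    (hf : ∫⁻ x, ENNReal.ofReal |f x| ^ p < ⊤) (j : ℕ) (hj : 2 ≤ j) (A : Set (Rn n)) (hA : MeasurableSet A) :
    ENNReal.ofReal (((1/2:ℝ)^j) ^ (-d)) *
      ∫⁻ x in A, (∫⁻ w in closedBall x (2 * (1/2:ℝ)^j), Ts m p η ((1/2:ℝ)^j) f w ∂μ) ≤
    ENNReal.ofReal (4 ^ n * (2:ℝ) ^ (s*p+n) * C) * (ENNReal.ofReal (((1/2:ℝ)^j) ^ (s*p)) *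
      ∑' i : ℕ, ENNReal.ofReal ((2:ℝ) ^ (-η * i)) * ∫⁻ y in Ann S M (j+i), Gf m s p f y) := by
  have hG := aux_Gf_meas m s p hp f hfm hf
  obtain ⟨r, hr⟩ : ∃ r, r = (1/2:ℝ)^j := ⟨_, rfl⟩
  have hr0 : 0 < r := by rw [hr]; positivity
  have hTm : Measurable (Ts m p η r f) := by
    unfold Ts
    exact Measurable.tsum fun i => (aux_locE_meas m p hp f hfm hf _).const_mul _
  rw [← hr, aux_tonelli volume μ A hA _ hTm]
  have h1 : ∀ i : ℕ, ∫⁻ w, locE m p f w (r * (1/2)^i) ∂μ ≤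
      ENNReal.ofReal ((2:ℝ) ^ (s*p+n)) * ENNReal.ofReal ((r * (1/2)^i) ^ (s*p)) *
        (ENNReal.ofReal (C * (r * (1/2)^i) ^ d) * ∫⁻ y in Ann S M (j+i), Gf m s p f y) := by
    intro i
    have hri : r * (1/2)^i = (1/2:ℝ)^(j+i) := by rw [hr, pow_add]
    rw [hri]
    have h4 : (1/2:ℝ)^(j+i) ≤ 1/2 := by
      calc (1/2:ℝ)^(j+i) ≤ (1/2)^1 := pow_le_pow_of_le_one (by norm_num) (by norm_num) (by omega)
        _ = 1/2 := by norm_num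
    have hI : Measurable ((Ann S M (j+i)).indicator (Gf m s p f)) := hG.indicator (aux_Ann_meas _ _ _)
    calc _ ≤ ∫⁻ w, ENNReal.ofReal ((2:ℝ) ^ (s*p+n)) * ENNReal.ofReal (((1/2:ℝ)^(j+i)) ^ (s*p)) *
          (∫⁻ y in closedBall w ((1/2:ℝ)^(j+i)), (Ann S M (j+i)).indicator (Gf m s p f) y) ∂μ := by
          refine lintegral_mono_ae ?_
          filter_upwards [hμS] with w hw
          exact aux_locE_por S M hM m s p hp f hfm hf w hw (j+i) (by omega)
      _ = ENNReal.ofReal ((2:ℝ) ^ (s*p+n)) * ENNReal.ofReal (((1/2:ℝ)^(j+i)) ^ (s*p)) *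
          ∫⁻ w in univ, (∫⁻ y in closedBall w ((1/2:ℝ)^(j+i)), (Ann S M (j+i)).indicator (Gf m s p f) y) ∂μ := by
          rw [lintegral_const_mul' _ _ (by finiteness), Measure.restrict_univ]
      _ = ENNReal.ofReal ((2:ℝ) ^ (s*p+n)) * ENNReal.ofReal (((1/2:ℝ)^(j+i)) ^ (s*p)) *
          ∫⁻ y, (Ann S M (j+i)).indicator (Gf m s p f) y * μ (univ ∩ closedBall y ((1/2:ℝ)^(j+i))) := by
          rw [aux_tonelli μ volume univ MeasurableSet.univ _ hI]
      _ ≤ ENNReal.ofReal ((2:ℝ) ^ (s*p+n)) * ENNReal.ofReal (((1/2:ℝ)^(j+i)) ^ (s*p)) *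
          ∫⁻ y, (Ann S M (j+i)).indicator (Gf m s p f) y * ENNReal.ofReal (C * ((1/2:ℝ)^(j+i)) ^ d) := by
          refine mul_le_mul' le_rfl (lintegral_mono fun y => mul_le_mul' le_rfl ?_)
          rw [univ_inter]
          exact hU _ _ (by positivity) h4
      _ = _ := by
          rw [lintegral_mul_const' _ _ ENNReal.ofReal_ne_top, lintegral_indicator (aux_Ann_meas _ _ _), mul_comm (ENNReal.ofReal (C * _))]
  have h2 : ∫⁻ w, Ts m p η r f w * volume (A ∩ closedBall w (2*r)) ∂μ ≤
      (∫⁻ w, Ts m p η r f w ∂μ) * ENNReal.ofReal ((4*r)^n) := by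
    rw [← lintegral_mul_const' _ _ ENNReal.ofReal_ne_top]
    refine lintegral_mono fun w => mul_le_mul' le_rfl ((measure_mono inter_subset_right).trans (le_of_eq ?_))
    rw [Real.volume_pi_closedBall _ (by positivity), Fintype.card_fin]
    congr 2; ring
  have h3 : ∫⁻ w, Ts m p η r f w ∂μ = ∑' i : ℕ, ENNReal.ofReal ((2:ℝ) ^ (η * i) * (r * (1/2)^i) ^ (-(n:ℝ))) *
      ∫⁻ w, locE m p f w (r * (1/2)^i) ∂μ := by
    unfold Ts
    rw [lintegral_tsum fun i => ((aux_locE_meas m p hp f hfm hf _).const_mul _).aemeasurable]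
    refine tsum_congr fun i => ?_
    rw [lintegral_const_mul' _ _ ENNReal.ofReal_ne_top]
  refine (mul_le_mul' le_rfl h2).trans ?_
  rw [h3, mul_comm (∑' i : ℕ, _), ← mul_assoc, ← ENNReal.tsum_mul_left, ← ENNReal.tsum_mul_left, ← ENNReal.tsum_mul_left]
  refine ENNReal.tsum_le_tsum fun i => ?_
  refine (mul_le_mul' le_rfl (mul_le_mul' le_rfl (h1 i))).trans (le_of_eq ?_)
  simp only [← mul_assoc]
  congr 1
  rw [← ENNReal.ofReal_mul (by positivity), ← ENNReal.ofReal_mul (by positivity), ← ENNReal.ofReal_mul (by positivity),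
    ← ENNReal.ofReal_mul (by positivity), ← ENNReal.ofReal_mul (by positivity), ← ENNReal.ofReal_mul (by positivity),
    ← ENNReal.ofReal_mul (by positivity)]
  congr 1
  have hq : 0 < (1/2:ℝ)^i := by positivity
  have e1 : ∀ z : ℝ, ((1/2:ℝ)^i) ^ z = 2 ^ (-z * i) := by
    intro z
    rw [one_div, inv_pow, Real.inv_rpow (by positivity), ← Real.rpow_natCast, ← Real.rpow_mul (by norm_num),
      ← Real.rpow_neg (by norm_num)]
    congr 1; ring
  have e2 : r ^ (-d) * r ^ n * r ^ (-(n:ℝ)) * r ^ (s*p) * r ^ d = r ^ (s*p) := by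
    rw [← Real.rpow_natCast, ← Real.rpow_add hr0, ← Real.rpow_add hr0, ← Real.rpow_add hr0, ← Real.rpow_add hr0]
    congr 1; ring
  have e3 : (2:ℝ) ^ (η * i) * 2 ^ (-(-(n:ℝ)) * i) * 2 ^ (-(s*p) * i) * 2 ^ (-d * i) = 2 ^ (-η * i) := by
    rw [← Real.rpow_add two_pos, ← Real.rpow_add two_pos, ← Real.rpow_add two_pos]
    congr 1
    linear_combination (i:ℝ) * (hη)
  rw [mul_pow, Real.mul_rpow hr0.le hq.le, Real.mul_rpow hr0.le hq.le, Real.mul_rpow hr0.le hq.le, e1, e1, e1,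
    ← e3]
  linear_combination (4 ^ n * (2:ℝ) ^ (s*p+n) * C * ((2:ℝ) ^ (η * i) * 2 ^ (-(-(n:ℝ)) * i) * 2 ^ (-(s*p) * i) * 2 ^ (-d * i))) * e2


lemma aux_stepD {n : ℕ} (hn : 1 ≤ n) (S : Set (Rn n)) (hSc : IsClosed S) (M : ℕ)
    (hM : ∀ w ∈ S, ∀ t, 0 < t → t ≤ 1/4 →
      ENNReal.ofReal (t ^ n) ≤ volume (closedBall w t ∩ {y | (1/2:ℝ)^M * t < infDist y S}))
    (μ : Measure (Rn n)) [SFinite μ] (hμS : ∀ᵐ w ∂μ, w ∈ S) (d a C : ℝ) (hd : (n:ℝ) - 1 < d) (ha : 0 < a)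
    (hC : 0 < C)
    (hU : ∀ z ρ, 0 < ρ → ρ ≤ 1/2 → μ (closedBall z ρ) ≤ ENNReal.ofReal (C * ρ ^ d))
    (hL : ∀ w ∈ S, ∀ ρ, 0 < ρ → ρ ≤ 1/2 → ENNReal.ofReal (a * ρ ^ d) ≤ μ (closedBall w ρ))
    (m : ℕ) (s p : ℝ) (hp : 1 ≤ p) (η : ℝ) (hη0 : 0 < η) (hη : 2 * η = s * p + d - n) (hη2 : η < s * p) :
    ∃ K : ℝ≥0∞, K ≠ ⊤ ∧ ∀ f : Rn n → ℝ, Measurable f → ∫⁻ x, ENNReal.ofReal |f x| ^ p < ⊤ →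
      (∀ᵐ w ∂μ, Tendsto (fun r : ℝ => ⨍ y in closedBall w r, f y) (𝓝[>] 0) (𝓝 0)) →
      ∀ j, 2 ≤ j → ∫⁻ x in Ann S 1 j, ENNReal.ofReal |f x| ^ p ≤
        K * (ENNReal.ofReal (((1/2:ℝ)^j) ^ (s*p)) * ((∫⁻ x in Ann S 1 j, Gf m s p f x) +
          ∑' i : ℕ, ENNReal.ofReal ((2:ℝ) ^ (-η * i)) * ∫⁻ y in Ann S M (j+i), Gf m s p f y)) := by
  obtain ⟨K0, hK0, hpt⟩ := aux_point hn d hd a C ha hC m p hp η hη0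
  obtain ⟨K1, hK1, hTs⟩ := aux_Ts_x (n := n) m s p η hη2
  obtain ⟨K3, hK3⟩ : ∃ K3, K3 = ENNReal.ofReal (4 ^ n * (2:ℝ) ^ (s*p+n) * C) := ⟨_, rfl⟩
  have hK3t : K3 ≠ ⊤ := by rw [hK3]; exact ENNReal.ofReal_ne_top
  obtain ⟨K4, hK4⟩ : ∃ K4, K4 = ENNReal.ofReal ((4:ℝ) ^ (s*p+n)) := ⟨_, rfl⟩
  have hK4t : K4 ≠ ⊤ := by rw [hK4]; exact ENNReal.ofReal_ne_top
  refine ⟨K0 * (K4 + K1) + K0 * K3, by finiteness, ?_⟩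
  intro f hfm hf htr j hj
  have hfl := aux_locInt p hp f hfm hf
  have hG := aux_Gf_meas m s p hp f hfm hf
  have hC' := aux_stepC S M hM μ hμS d C hC hU m s p hp η hη f hfm hf j hj (Ann S 1 j) (aux_Ann_meas _ _ _)
  rw [← hK3] at hC'
  obtain ⟨k, rfl⟩ : ∃ k, j = k + 2 := ⟨j - 2, by omega⟩
  obtain ⟨r, hr⟩ : ∃ r, r = (1/2:ℝ)^(k+2) := ⟨_, rfl⟩
  have hr0 : 0 < r := by rw [hr]; positivity
  have hr2 : r ≤ 1/2 := by
    rw [hr]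
    calc (1/2:ℝ)^(k+2) ≤ (1/2)^1 := pow_le_pow_of_le_one (by norm_num) (by norm_num) (by omega)
      _ = 1/2 := by norm_num
  have h4r : (1/2:ℝ)^k = 4*r := by rw [hr, pow_add]; ring
  rw [← hr] at hC' ⊢
  obtain ⟨D, hD⟩ : ∃ D, D = ENNReal.ofReal (r ^ (-d)) := ⟨_, rfl⟩
  obtain ⟨W, hW⟩ : ∃ W, W = ENNReal.ofReal (r ^ (s*p)) := ⟨_, rfl⟩
  have hDt : D ≠ ⊤ := by rw [hD]; exact ENNReal.ofReal_ne_top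
  rw [← hD, ← hW] at hC'
  rw [← hW]
  have h1 : ∫⁻ x in Ann S 1 (k+2), ENNReal.ofReal |f x| ^ p ≤
      ∫⁻ x in Ann S 1 (k+2), (K0 * (K4 + K1) * W * Gf m s p f x +
        K0 * (D * ∫⁻ w in closedBall x (2*r), Ts m p η r f w ∂μ)) := by
    refine lintegral_mono_ae ?_
    refine (ae_restrict_iff' (aux_Ann_meas _ _ _)).2 ?_
    filter_upwards [IsUnifLocDoublingMeasure.ae_tendsto_average volume hfl 1] with x hx hxA
    have hx1 := hx (l := 𝓝[>] (0:ℝ)) (fun _ => x) (fun t => t) tendsto_id (by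
      filter_upwards [self_mem_nhdsWithin] with t ht
      have : 0 ≤ t := le_of_lt ht
      simp [this])
    have hpos : 0 < infDist x S := lt_trans (by positivity) hxA.1
    have hne : S.Nonempty := by
      rw [nonempty_iff_ne_empty]
      rintro rfl
      simp at hpos
    obtain ⟨w₀, hw₀, hdist⟩ := hSc.exists_infDist_eq_dist hne x
    have h2 := hpt S μ hU hL f hfm hfl htr x hx1 r hr0 hr2 w₀ hw₀ (by
      rw [← hdist, hr]; exact hxA.2)
    refine h2.trans ?_
    have h3 := aux_locE_le_Gf m s p f x k
    rw [h4r] at h3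
    have h5 := hTs f x (k+2)
    rw [← hr, ← hW] at h5
    have h6 : ENNReal.ofReal (r ^ (-(n:ℝ))) * locE m p f x (4*r) ≤ K4 * W * Gf m s p f x := by
      refine (mul_le_mul' le_rfl h3).trans (le_of_eq ?_)
      rw [hK4, hW, ← mul_assoc, ← ENNReal.ofReal_mul (by positivity), ← ENNReal.ofReal_mul (by positivity)]
      congr 2
      rw [Real.mul_rpow (by norm_num) hr0.le, mul_left_comm, ← Real.rpow_add hr0]
      congr 2; ring
    rw [mul_assoc K0, ← hD]
    calc _ ≤ K0 * (K4 * W * Gf m s p f x) + K0 * (K1 * W * Gf m s p f x +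
          D * ∫⁻ w in closedBall x (2*r), Ts m p η r f w ∂μ) :=
          add_le_add (mul_le_mul' le_rfl h6) (mul_le_mul' le_rfl (add_le_add h5 le_rfl))
      _ = _ := by ring
  refine h1.trans ?_
  rw [lintegral_add_left (hG.const_mul _), lintegral_const_mul _ hG, lintegral_const_mul' _ _ hK0,
    lintegral_const_mul' _ _ hDt]
  refine (add_le_add le_rfl (mul_le_mul' le_rfl hC')).trans ?_
  generalize (∫⁻ x in Ann S 1 (k+2), Gf m s p f x) = X
  generalize (∑' i : ℕ, ENNReal.ofReal ((2:ℝ) ^ (-η * i)) * ∫⁻ y in Ann S M (k+2+i), Gf m s p f y) = Y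
  generalize K0 * (K4 + K1) = A
  have h9 : (A + K0 * K3) * (W * (X + Y)) = (A * W * X + K0 * (K3 * (W * Y))) + (A * (W * Y) + K0 * K3 * (W * X)) := by
    ring
  rw [h9]
  exact le_self_add

lemma aux_Ann_le {n : ℕ} (S : Set (Rn n)) (G : Rn n → ℝ≥0∞) (M k : ℕ) :
    ∫⁻ y in Ann S M k, G y ≤ ∑ l ∈ Finset.range M, ∫⁻ y in Ann S 1 (k+l), G y := by
  induction M with
  | zero =>
    have : Ann S 0 k = ∅ := by
      rw [eq_empty_iff_forall_notMem]
      rintro y ⟨h1, h2⟩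
      simp at h1 h2
      linarith
    simp [this]
  | succ M ih =>
    rw [Finset.sum_range_succ]
    refine le_trans ?_ (add_le_add ih le_rfl)
    refine le_trans (lintegral_mono_set ?_) (lintegral_union_le _ _ _)
    rintro y ⟨h1, h2⟩
    rcases lt_or_ge ((1/2:ℝ)^(k+M)) (infDist y S) with h | h
    · exact Or.inl ⟨h, h2⟩
    · exact Or.inr ⟨h1, h⟩

lemma aux_Ann_sum {n : ℕ} (S : Set (Rn n)) (G : Rn n → ℝ≥0∞) :
    ∑' k : ℕ, ∫⁻ y in Ann S 1 k, G y ≤ ∫⁻ y, G y := by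
  rw [← lintegral_iUnion (fun k => aux_Ann_meas S 1 k)]
  · exact setLIntegral_le_lintegral _ _
  · intro i j hij
    rw [Function.onFun, Set.disjoint_left]
    have key : ∀ i j : ℕ, i < j → ∀ y ∈ Ann S 1 i, y ∉ Ann S 1 j := by
      rintro i j hij y ⟨h1, _⟩ ⟨_, h2⟩
      have : (1/2:ℝ)^j ≤ (1/2)^(i+1) := pow_le_pow_of_le_one (by norm_num) (by norm_num) hij
      linarith
    rcases lt_or_gt_of_ne hij with h | h
    · exact key i j h
    · intro y h1 h2
      exact key j i h y h2 h1

lemma aux_shift (g : ℕ → ℝ≥0∞) (c : ℕ) : ∑' j : ℕ, g (j + c) ≤ ∑' j, g j :=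
  ENNReal.tsum_comp_le_tsum_of_injective (fun a b h => by simpa using h) g

lemma aux_stepE {n : ℕ} (S : Set (Rn n)) (G : Rn n → ℝ≥0∞) (M : ℕ) (η : ℝ) :
    ∑' j : ℕ, ((∫⁻ x in Ann S 1 (j+3), G x) +
      ∑' i : ℕ, ENNReal.ofReal ((2:ℝ) ^ (-η * i)) * ∫⁻ y in Ann S M (j+3+i), G y) ≤
    (1 + (∑' i : ℕ, ENNReal.ofReal ((2:ℝ) ^ (-η * i))) * M) * ∫⁻ y, G y := by
  rw [ENNReal.tsum_add, ENNReal.tsum_comm, add_mul, one_mul]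
  refine add_le_add ((aux_shift (fun j => ∫⁻ x in Ann S 1 j, G x) 3).trans (aux_Ann_sum S G)) ?_
  rw [mul_assoc, ← ENNReal.tsum_mul_right]
  refine ENNReal.tsum_le_tsum fun i => ?_
  rw [ENNReal.tsum_mul_left]
  refine mul_le_mul' le_rfl ?_
  calc _ ≤ ∑' j : ℕ, ∑ l ∈ Finset.range M, ∫⁻ y in Ann S 1 (j+3+i+l), G y :=
        ENNReal.tsum_le_tsum fun j => aux_Ann_le S G M _
    _ = ∑ l ∈ Finset.range M, ∑' j : ℕ, ∫⁻ y in Ann S 1 (j+3+i+l), G y :=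
        Summable.tsum_finsetSum fun _ _ => ENNReal.summable
    _ ≤ ∑ l ∈ Finset.range M, ∫⁻ y, G y := by
        refine Finset.sum_le_sum fun l _ => ?_
        refine le_trans ?_ ((aux_shift (fun j => ∫⁻ x in Ann S 1 j, G x) (3+i+l)).trans (aux_Ann_sum S G))
        simp only [add_assoc]; exact le_rfl
    _ = _ := by simp


lemma aux_ptw {n : ℕ} (S : Set (Rn n)) (σ p : ℝ) (hσ : 0 < σ) (hp : 1 ≤ p) (f : Rn n → ℝ) (x : Rn n) :
    ENNReal.ofReal (|f x| ^ p / infDist x S ^ σ) ≤ ENNReal.ofReal (8 ^ σ) * ENNReal.ofReal |f x| ^ p +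
      ∑' j : ℕ, (Ann S 1 (j+3)).indicator
        (fun x => ENNReal.ofReal (2 ^ σ * ((1/2:ℝ)^(j+3)) ^ (-σ)) * ENNReal.ofReal |f x| ^ p) x := by
  have hp0 : 0 < p := by linarith
  have hδ : 0 ≤ infDist x S := infDist_nonneg
  rw [ENNReal.ofReal_rpow_of_nonneg (abs_nonneg _) hp0.le]
  rcases hδ.eq_or_lt with h0 | h0
  · rw [← h0, Real.zero_rpow hσ.ne', div_zero, ENNReal.ofReal_zero]
    exact zero_le
  have key : ∀ c : ℝ, 0 < c → c ≤ infDist x S →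
      ENNReal.ofReal (|f x| ^ p / infDist x S ^ σ) ≤ ENNReal.ofReal (c ^ (-σ)) * ENNReal.ofReal (|f x| ^ p) := by
    intro c hc hcx
    rw [← ENNReal.ofReal_mul (by positivity)]
    refine ENNReal.ofReal_le_ofReal ?_
    rw [Real.rpow_neg hc.le, div_eq_inv_mul]
    gcongr
  rcases lt_or_ge (1/8:ℝ) (infDist x S) with h8 | h8
  · refine le_trans (key (1/8) (by norm_num) h8.le) (le_trans (le_of_eq ?_) le_self_add)
    congr 2
    rw [one_div, Real.inv_rpow (by norm_num), Real.rpow_neg (by norm_num), inv_inv]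
  · obtain ⟨k, hk1, hk2⟩ := exists_nat_pow_near_of_lt_one h0 (by linarith) (show (0:ℝ) < 1/2 by norm_num)
      (by norm_num)
    have hk3 : 3 ≤ k := by
      by_contra hcon
      have : (1/2:ℝ)^3 ≤ (1/2)^(k+1) := pow_le_pow_of_le_one (by norm_num) (by norm_num) (by omega)
      have h9 : (1/2:ℝ)^3 = 1/8 := by norm_num
      linarith
    obtain ⟨j, rfl⟩ : ∃ j, k = j + 3 := ⟨k - 3, by omega⟩
    have hmem : x ∈ Ann S 1 (j+3) := ⟨hk1, hk2⟩
    refine le_trans ?_ le_add_self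
    refine le_trans ?_ (ENNReal.le_tsum j)
    rw [indicator_of_mem hmem, ENNReal.ofReal_rpow_of_nonneg (abs_nonneg _) hp0.le]
    refine (key _ (by positivity) hk1.le).trans (le_of_eq ?_)
    congr 2
    rw [pow_succ, Real.mul_rpow (by positivity) (by norm_num), mul_comm]
    congr 1
    rw [one_div, Real.inv_rpow (by norm_num), Real.rpow_neg (by norm_num), inv_inv]

/-- **Hardy inequality in terms of the sharp maximal function** (inequality (3.13) in
the proof of Theorem 3.9). If `S ⊆ ℝⁿ` (`n ≥ 2`) is a `d`-set with `n−1 < d < n`,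
`1 < p < ∞` and `s > (n−d)/p`, then there is `c > 0` such that every `f ∈ L^p(ℝⁿ)`
with `Tr_S f = 0` ℋᵈ-a.e. satisfies
`(∫ |f(x)|^p / dist(x,S)^{sp} dx)^{1/p} ≤ c (‖f‖_{L^p} + ‖f♯_{s,p}‖_{L^p})`. -/
theorem hardy_sharp_maximal {n : ℕ} (hn : 2 ≤ n) (S : Set (Rn n)) (d C₀ : ℝ)
    (hS : IsDSet S d C₀) (hd1 : (n : ℝ) - 1 < d) (hd2 : d < n)
    (p s : ℝ) (hp : 1 < p) (hs : ((n : ℝ) - d) / p < s) :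
    ∃ c > 0, ∀ f : Rn n → ℝ, Measurable f →
      (∫⁻ x, ENNReal.ofReal |f x| ^ p) < ⊤ →
      TraceZero S d f →
      hardyLHS S s p f ≤ ENNReal.ofReal c *
        ((∫⁻ x, ENNReal.ofReal |f x| ^ p) ^ (1 / p) +
          (∫⁻ x, fSharp s p f x ^ p) ^ (1 / p)) := by
  have hn2 : (2:ℝ) ≤ n := by exact_mod_cast hn
  have hp0 : 0 < p := by linarith
  have hd0 : 0 ≤ d := by linarith
  have hσ1 : (n:ℝ) - d < s * p := by rwa [div_lt_iff₀ hp0] at hs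
  have hσ : 0 < s * p := by linarith
  have hSc := hS.1
  have hC₀ : 0 < C₀ := by linarith [hS.2.1]
  obtain ⟨hfin, hU, hL⟩ := aux_meas S d C₀ hS hd0
  have hμS : ∀ᵐ w ∂(μH[d] : Measure (Rn n)).restrict S, w ∈ S := ae_restrict_mem hSc.measurableSet
  obtain ⟨M, hM⟩ := aux_porous (by omega) S hSc _ d C₀⁻¹ (C₀ * 2^d) hd2 (by positivity) (by positivity) hU hL
  obtain ⟨η, hη⟩ : ∃ η, η = (s * p + d - n) / 2 := ⟨_, rfl⟩
  obtain ⟨K, hK, hD⟩ := aux_stepD (by omega) S hSc M hM _ hμS d C₀⁻¹ (C₀ * 2^d) hd1 (by positivity) (by positivity)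
    hU hL ⌊s⌋₊ s p hp.le η (by linarith) (by linarith) (by linarith)
  have hgeo := aux_geo η (by linarith)
  obtain ⟨Q, hQ⟩ : ∃ Q : ℝ≥0∞, Q = 1 + (∑' i : ℕ, ENNReal.ofReal ((2:ℝ) ^ (-η * i))) * M := ⟨_, rfl⟩
  have hQt : Q ≠ ⊤ := by rw [hQ]; finiteness
  obtain ⟨K5, hK5⟩ : ∃ K5 : ℝ≥0∞, K5 = ENNReal.ofReal (8 ^ (s*p)) +
    ENNReal.ofReal (2 ^ (s*p)) * K * Q * ENNReal.ofReal (2 ^ n) := ⟨_, rfl⟩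
  have hK5t : K5 ≠ ⊤ := by rw [hK5]; finiteness
  have hK6t : K5 ^ (1/p) ≠ ⊤ := ENNReal.rpow_ne_top_of_nonneg (by positivity) hK5t
  refine ⟨(K5 ^ (1/p)).toReal + 1, by positivity, ?_⟩
  intro f hfm hf htr
  have hG := aux_Gf_meas ⌊s⌋₊ s p hp.le f hfm hf
  have hfp : Measurable fun x => ENNReal.ofReal |f x| ^ p := by fun_prop
  have hGs : ∫⁻ x, Gf ⌊s⌋₊ s p f x ≤ ENNReal.ofReal (2^n) * ∫⁻ x, fSharp s p f x ^ p := by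
    rw [← lintegral_const_mul' _ _ ENNReal.ofReal_ne_top]
    exact lintegral_mono fun x => aux_Gf_le s p hp.le f x
  have hmain : ∫⁻ x, ENNReal.ofReal (|f x| ^ p / infDist x S ^ (s * p)) ≤
      K5 * ((∫⁻ x, ENNReal.ofReal |f x| ^ p) + ∫⁻ x, fSharp s p f x ^ p) := by
    calc _ ≤ ∫⁻ x, (ENNReal.ofReal (8 ^ (s*p)) * ENNReal.ofReal |f x| ^ p +
          ∑' j : ℕ, (Ann S 1 (j+3)).indicator
          (fun x => ENNReal.ofReal (2 ^ (s*p) * ((1/2:ℝ)^(j+3)) ^ (-(s*p))) * ENNReal.ofReal |f x| ^ p) x) :=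
          lintegral_mono fun x => aux_ptw S (s*p) p hσ hp.le f x
      _ = ENNReal.ofReal (8 ^ (s*p)) * (∫⁻ x, ENNReal.ofReal |f x| ^ p) +
          ∑' j : ℕ, ENNReal.ofReal (2 ^ (s*p) * ((1/2:ℝ)^(j+3)) ^ (-(s*p))) *
            ∫⁻ x in Ann S 1 (j+3), ENNReal.ofReal |f x| ^ p := by
          rw [lintegral_add_left (hfp.const_mul _), lintegral_const_mul _ hfp, lintegral_tsum fun j =>
            ((hfp.const_mul _).indicator (aux_Ann_meas S 1 (j+3))).aemeasurable]
          congr 1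
          refine tsum_congr fun j => ?_
          rw [lintegral_indicator (aux_Ann_meas _ _ _), lintegral_const_mul _ hfp]
      _ ≤ ENNReal.ofReal (8 ^ (s*p)) * (∫⁻ x, ENNReal.ofReal |f x| ^ p) +
          ∑' j : ℕ, ENNReal.ofReal (2 ^ (s*p)) * K * ((∫⁻ x in Ann S 1 (j+3), Gf ⌊s⌋₊ s p f x) +
            ∑' i : ℕ, ENNReal.ofReal ((2:ℝ) ^ (-η * i)) * ∫⁻ y in Ann S M (j+3+i), Gf ⌊s⌋₊ s p f y) := by
          refine add_le_add le_rfl (ENNReal.tsum_le_tsum fun j => ?_)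
          refine (mul_le_mul' le_rfl (hD f hfm hf htr (j+3) (by omega))).trans (le_of_eq ?_)
          rw [ENNReal.ofReal_mul (by positivity)]
          have h1 : ENNReal.ofReal (((1/2:ℝ)^(j+3)) ^ (-(s*p))) * ENNReal.ofReal (((1/2:ℝ)^(j+3)) ^ (s*p)) = 1 := by
            rw [← ENNReal.ofReal_mul (by positivity), ← Real.rpow_add (by positivity)]
            simp
          generalize ENNReal.ofReal (((1/2:ℝ)^(j+3)) ^ (-(s*p))) = U at *
          generalize ENNReal.ofReal (((1/2:ℝ)^(j+3)) ^ (s*p)) = V at *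
          generalize ((∫⁻ x in Ann S 1 (j+3), Gf ⌊s⌋₊ s p f x) +
            ∑' i : ℕ, ENNReal.ofReal ((2:ℝ) ^ (-η * i)) * ∫⁻ y in Ann S M (j+3+i), Gf ⌊s⌋₊ s p f y) = X
          calc _ = ENNReal.ofReal (2 ^ (s*p)) * K * (U * V) * X := by ring
            _ = _ := by rw [h1, mul_one]
      _ ≤ ENNReal.ofReal (8 ^ (s*p)) * (∫⁻ x, ENNReal.ofReal |f x| ^ p) +
          ENNReal.ofReal (2 ^ (s*p)) * K * (Q * (ENNReal.ofReal (2^n) * ∫⁻ x, fSharp s p f x ^ p)) := by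
          rw [ENNReal.tsum_mul_left]
          refine add_le_add le_rfl (mul_le_mul' le_rfl ?_)
          rw [hQ]
          exact (aux_stepE S _ M η).trans (mul_le_mul' le_rfl hGs)
      _ ≤ _ := by
          rw [mul_add]
          refine add_le_add (mul_le_mul' ?_ le_rfl) ?_
          · rw [hK5]; exact le_self_add
          · rw [← mul_assoc, ← mul_assoc]
            refine mul_le_mul' ?_ le_rfl
            rw [hK5]; exact le_add_self
  unfold hardyLHS
  have hp1 : 1 / p ≤ 1 := by rw [div_le_one hp0]; exact hp.le
  calc _ ≤ (K5 * ((∫⁻ x, ENNReal.ofReal |f x| ^ p) + ∫⁻ x, fSharp s p f x ^ p)) ^ (1/p) :=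
        ENNReal.rpow_le_rpow hmain (by positivity)
    _ = K5 ^ (1/p) * ((∫⁻ x, ENNReal.ofReal |f x| ^ p) + ∫⁻ x, fSharp s p f x ^ p) ^ (1/p) :=
        ENNReal.mul_rpow_of_nonneg _ _ (by positivity)
    _ ≤ _ := by
        refine mul_le_mul' ?_ (ENNReal.rpow_add_le_add_rpow _ _ (by positivity) hp1)
        rw [← ENNReal.ofReal_toReal hK6t]
        refine ENNReal.ofReal_le_ofReal ?_
        rw [ENNReal.toReal_ofReal ENNReal.toReal_nonneg]
        linarith
end
end

section
/- Let 0 < p < ∞, σ > 0, and let (a_j)_{j≥0} be a sequence of nonnegative reals. Then there is a constant c > 0 depending only on p and σ such that Σ_{j=0}^∞ 2^{σj} (Σ_{i=j}^∞ a_i)^p ≤ c Σ_{j=0}^∞ 2^{σj} a_j^p (as an inequality in [0,∞]). -/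
open scoped ENNReal NNReal

lemma hardy_two_add (x y : ℝ) : (2 : ℝ≥0∞) ^ (x + y) = 2 ^ x * 2 ^ y :=
  ENNReal.rpow_add x y (by norm_num) (by norm_num)

lemma hardy_geom (s : ℝ) (hs : 0 < s) : ∑' i : ℕ, (2 : ℝ≥0∞) ^ (-s * (i : ℝ)) ≠ ⊤ := by
  have h : ∀ i : ℕ, (2 : ℝ≥0∞) ^ (-s * (i : ℝ)) = ((2 : ℝ≥0∞) ^ (-s)) ^ i := by
    intro i
    rw [ENNReal.rpow_mul, ENNReal.rpow_natCast]
  simp_rw [h]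
  rw [ENNReal.tsum_geometric]
  have h1 : (2 : ℝ≥0∞) ^ (-s) < 1 :=
    ENNReal.rpow_lt_one_of_one_lt_of_neg (by norm_num) (by linarith)
  exact ENNReal.inv_ne_top.2 (tsub_pos_of_lt h1).ne'

lemma hardy_pow (p σ : ℝ) (hp : 0 < p) (b : ℕ → ℝ≥0∞) :
    (∑' i, b i) ^ p ≤ (∑' i : ℕ, (2 : ℝ≥0∞) ^ (-(σ / (2 * p)) * (i : ℝ))) ^ p *
      ∑' i : ℕ, (2 : ℝ≥0∞) ^ (σ / 2 * (i : ℝ)) * b i ^ p := by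
  set M := ∑' i : ℕ, (2 : ℝ≥0∞) ^ (σ / 2 * (i : ℝ)) * b i ^ p with hM
  have key : ∀ i : ℕ, b i ≤ (2 : ℝ≥0∞) ^ (-(σ / (2 * p)) * (i : ℝ)) * M ^ p⁻¹ := by
    intro i
    have h1 : (2 : ℝ≥0∞) ^ (σ / (2 * p) * (i : ℝ)) * b i ≤ M ^ p⁻¹ := by
      rw [ENNReal.le_rpow_inv_iff hp, ENNReal.mul_rpow_of_nonneg _ _ hp.le, ← ENNReal.rpow_mul]
      have : σ / (2 * p) * (i : ℝ) * p = σ / 2 * i := by field_simp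
      rw [this]
      exact ENNReal.le_tsum i
    calc b i = (2 : ℝ≥0∞) ^ (-(σ / (2 * p)) * (i : ℝ)) *
          ((2 : ℝ≥0∞) ^ (σ / (2 * p) * (i : ℝ)) * b i) := by
            rw [← mul_assoc, ← hardy_two_add]
            simp
      _ ≤ _ := by gcongr
  calc (∑' i, b i) ^ p
      ≤ (∑' i : ℕ, (2 : ℝ≥0∞) ^ (-(σ / (2 * p)) * (i : ℝ)) * M ^ p⁻¹) ^ p :=
        ENNReal.rpow_le_rpow (ENNReal.tsum_le_tsum key) hp.le
    _ = _ := by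
      rw [ENNReal.tsum_mul_right, ENNReal.mul_rpow_of_nonneg _ _ hp.le,
        ENNReal.rpow_inv_rpow hp.ne']

/-- **Hardy's inequality for sums** (Lemma 2.1): for `0 < p < ∞` and `σ > 0` there is a
constant `c > 0`, depending only on `p` and `σ`, such that for every sequence of
nonnegative reals `(a_j)`,
`Σ_{j} 2^{σj} (Σ_{i=j}^∞ a_i)^p ≤ c Σ_{j} 2^{σj} a_j^p` (in `[0,∞]`). -/
theorem hardy_inequality_sums (p σ : ℝ) (hp : 0 < p) (hσ : 0 < σ) :
    ∃ c > 0, ∀ a : ℕ → ℝ≥0,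
      ∑' j : ℕ, (2 : ℝ≥0∞) ^ (σ * j) * (∑' i : ℕ, (a (j + i) : ℝ≥0∞)) ^ p ≤
        ENNReal.ofReal c * ∑' j : ℕ, (2 : ℝ≥0∞) ^ (σ * j) * (a j : ℝ≥0∞) ^ p := by
  set W := (∑' i : ℕ, (2 : ℝ≥0∞) ^ (-(σ / (2 * p)) * (i : ℝ))) ^ p with hW
  set V := ∑' i : ℕ, (2 : ℝ≥0∞) ^ (-(σ / 2) * (i : ℝ)) with hV
  have hWt : W ≠ ⊤ := ENNReal.rpow_ne_top_of_nonneg hp.le (hardy_geom _ (by positivity))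
  have hVt : V ≠ ⊤ := hardy_geom _ (by positivity)
  have hC : W * V ≠ ⊤ := ENNReal.mul_ne_top hWt hVt
  refine ⟨(W * V).toReal + 1, by positivity, fun a => ?_⟩
  set T := ∑' j : ℕ, (2 : ℝ≥0∞) ^ (σ * j) * (a j : ℝ≥0∞) ^ p with hT
  have hle : W * V ≤ ENNReal.ofReal ((W * V).toReal + 1) :=
    (ENNReal.le_ofReal_iff_toReal_le hC (by positivity)).2 (by linarith)
  calc ∑' j : ℕ, (2 : ℝ≥0∞) ^ (σ * j) * (∑' i : ℕ, (a (j + i) : ℝ≥0∞)) ^ p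
      ≤ ∑' j : ℕ, (2 : ℝ≥0∞) ^ (σ * j) *
          (W * ∑' i : ℕ, (2 : ℝ≥0∞) ^ (σ / 2 * (i : ℝ)) * (a (j + i) : ℝ≥0∞) ^ p) := by
        refine ENNReal.tsum_le_tsum fun j => ?_
        gcongr
        exact hardy_pow p σ hp fun i => (a (j + i) : ℝ≥0∞)
    _ = W * ∑' j : ℕ, ∑' i : ℕ, (2 : ℝ≥0∞) ^ (-(σ / 2) * (i : ℝ)) *
          ((2 : ℝ≥0∞) ^ (σ * ((j + i : ℕ) : ℝ)) * (a (j + i) : ℝ≥0∞) ^ p) := by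
        rw [← ENNReal.tsum_mul_left]
        refine tsum_congr fun j => ?_
        rw [mul_left_comm, ← ENNReal.tsum_mul_left]
        congr 1
        refine tsum_congr fun i => ?_
        rw [← mul_assoc, ← mul_assoc, ← hardy_two_add, ← hardy_two_add]
        congr 2
        push_cast
        ring
    _ = W * ∑' i : ℕ, (2 : ℝ≥0∞) ^ (-(σ / 2) * (i : ℝ)) *
          ∑' j : ℕ, ((2 : ℝ≥0∞) ^ (σ * ((j + i : ℕ) : ℝ)) * (a (j + i) : ℝ≥0∞) ^ p) := by
        rw [ENNReal.tsum_comm]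
        simp_rw [ENNReal.tsum_mul_left]
    _ ≤ W * ∑' i : ℕ, (2 : ℝ≥0∞) ^ (-(σ / 2) * (i : ℝ)) * T := by
        gcongr with i
        exact ENNReal.tsum_comp_le_tsum_of_injective (add_left_injective i)
          (fun k : ℕ => (2 : ℝ≥0∞) ^ (σ * (k : ℝ)) * (a k : ℝ≥0∞) ^ p)
    _ = W * V * T := by rw [ENNReal.tsum_mul_right, mul_assoc]
    _ ≤ _ := by gcongr
end

section
/- Let S ⊆ ℝⁿ be a d-set with n−1 < d ≤ n, let k ∈ ℕ, 1 ≤ u, r < ∞, and R > 1. Then there is a constant C (depending on S, R, n, u, r, k) such that: whenever Q = Q(x_Q, r_Q) and Q' = Q(x_{Q'}, r_{Q'}) are cubes in ℝⁿ with x_{Q'} ∈ S, Q' ⊆ Q, and 0 < r_Q ≤ R·r_{Q'} ≤ R², then for every polynomial p on ℝⁿ of degree at most k, ((1/|Q|) ∫_Q |p|^r dx)^{1/r} ≤ C ((1/ℋᵈ(Q' ∩ S)) ∫_{Q'∩S} |p|^u dℋᵈ)^{1/u}. -/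
open MeasureTheory Metric Set Filter
open scoped ENNReal NNReal Topology

noncomputable section

lemma rz_pderiv_degree {n : ℕ} (p : MvPolynomial (Fin n) ℝ) (i : Fin n) (k : ℕ)
    (hp : p.totalDegree ≤ k + 1) : (MvPolynomial.pderiv i p).totalDegree ≤ k := by
  rw [MvPolynomial.totalDegree]
  refine Finset.sup_le fun s hs => ?_
  rw [MvPolynomial.mem_support_iff, MvPolynomial.coeff_pderiv] at hs
  have h1 : s + Finsupp.single i 1 ∈ p.support := by
    rw [MvPolynomial.mem_support_iff]
    exact fun h => hs (by simp [h])
  have h2 := MvPolynomial.le_totalDegree h1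
  rw [Finsupp.sum_add_index' (by simp) (by simp), Finsupp.sum_single_index rfl] at h2
  omega

lemma rz_hasDerivAt {n : ℕ} (p : MvPolynomial (Fin n) ℝ) (i : Fin n) (y : Rn n) (t : ℝ) :
    HasDerivAt (fun t => MvPolynomial.eval (Function.update y i t) p)
      (MvPolynomial.eval (Function.update y i t) (MvPolynomial.pderiv i p)) t := by
  induction p using MvPolynomial.induction_on with
  | C a => simpa using hasDerivAt_const t a
  | add p q hp hq =>
    simp only [map_add]
    exact hp.add hq
  | mul_X p j hp =>
    have hj : HasDerivAt (fun t => Function.update y i t j)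
        (MvPolynomial.eval (Function.update y i t) (MvPolynomial.pderiv i (MvPolynomial.X j))) t := by
      by_cases h : j = i
      · subst h
        simpa using hasDerivAt_id' t
      · simpa [Function.update_of_ne h, MvPolynomial.pderiv_X_of_ne h] using
          hasDerivAt_const t (y j)
    have := hp.mul hj
    simp only [MvPolynomial.pderiv_mul, map_mul, map_add, MvPolynomial.eval_X]
    exact this

lemma rz_const_dir {n : ℕ} (p : MvPolynomial (Fin n) ℝ) (i : Fin n)
    (h : MvPolynomial.pderiv i p = 0) (y : Rn n) (s t : ℝ) :
    MvPolynomial.eval (Function.update y i s) p = MvPolynomial.eval (Function.update y i t) p := by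
  have hd := fun t => rz_hasDerivAt p i y t
  simp only [h, map_zero] at hd
  exact is_const_of_deriv_eq_zero (fun t => (hd t).differentiableAt) (fun t => (hd t).deriv) s t

lemma rz_const {n : ℕ} (p : MvPolynomial (Fin n) ℝ)
    (h : ∀ i, MvPolynomial.pderiv i p = 0) (x y : Rn n) :
    MvPolynomial.eval x p = MvPolynomial.eval y p := by
  classical
  have key : ∀ T : Finset (Fin n),
      MvPolynomial.eval (fun i => if i ∈ T then y i else x i) p = MvPolynomial.eval x p := by
    intro T
    induction T using Finset.induction_on with
    | empty => simp
    | insert a T ha ih =>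
      rw [← ih]
      have e1 : (fun i => if i ∈ insert a T then y i else x i) =
          Function.update (fun i => if i ∈ T then y i else x i) a (y a) := by
        ext i
        by_cases hi : i = a
        · subst hi; simp
        · simp [hi]
      have e2 : (fun i => if i ∈ T then y i else x i) =
          Function.update (fun i => if i ∈ T then y i else x i) a (x a) := by
        ext i
        by_cases hi : i = a
        · subst hi; simp [ha]
        · simp [hi]
      rw [e1]
      conv_rhs => rw [e2]
      exact rz_const_dir p a (h a) _ _ _
  have := key Finset.univ
  simpa using this.symm

/-- the unit cube with integer corner `j`. -/
def rzCube {n m : ℕ} (j : Fin n → Fin m) : Set (Rn n) :=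
  Set.Icc (fun i => ((j i : ℕ) : ℝ)) (fun i => ((j i : ℕ) : ℝ) + 1)

/-- corner points. -/
def rzCorner {n m : ℕ} (j : Fin n → Fin m) (σ : Fin n → Bool) : Rn n :=
  fun i => ((j i : ℕ) : ℝ) + if σ i then 1 else 0

lemma rz_mem_cube {n m : ℕ} (j : Fin n → Fin m) (y : Rn n) :
    y ∈ rzCube j ↔ ∀ i, ((j i : ℕ) : ℝ) ≤ y i ∧ y i ≤ ((j i : ℕ) : ℝ) + 1 := by
  simp [rzCube, Set.mem_Icc, Pi.le_def, forall_and]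

lemma rz_corner_mem {n m : ℕ} (j : Fin n → Fin m) (σ : Fin n → Bool) :
    rzCorner j σ ∈ rzCube j := by
  rw [rz_mem_cube]
  intro i
  unfold rzCorner
  split_ifs <;> constructor <;> linarith

lemma rz_update_mem {n m : ℕ} (j : Fin n → Fin m) (y : Rn n) (hy : y ∈ rzCube j) (i : Fin n)
    (t : ℝ) (h1 : ((j i : ℕ) : ℝ) ≤ t) (h2 : t ≤ ((j i : ℕ) : ℝ) + 1) :
    Function.update y i t ∈ rzCube j := by
  rw [rz_mem_cube] at hy ⊢
  intro l
  by_cases h : l = i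
  · subst h; simp [h1, h2]
  · simpa [h] using hy l

/-- moving one coordinate to an end point, keeping `p ≤ 0`. -/
lemma rz_move {n m : ℕ} (p : MvPolynomial (Fin n) ℝ) (j : Fin n → Fin m) (i : Fin n)
    (hi : MvPolynomial.pderiv i p = 0 ∨
      ∀ y ∈ rzCube j, MvPolynomial.eval y (MvPolynomial.pderiv i p) ≠ 0)
    (y : Rn n) (hy : y ∈ rzCube j) (h : MvPolynomial.eval y p ≤ 0) :
    ∃ b : Bool, MvPolynomial.eval
      (Function.update y i (((j i : ℕ) : ℝ) + if b then 1 else 0)) p ≤ 0 := by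
  rcases hi with hi | hi
  · refine ⟨true, ?_⟩
    rw [rz_const_dir p i hi y _ (y i)]
    simpa using h
  · by_contra! hcon
    have hf := hcon false
    have ht := hcon true
    simp only [Bool.false_eq_true, if_false, if_true, add_zero] at hf ht
    set a : ℝ := ((j i : ℕ) : ℝ)
    set f : ℝ → ℝ := fun t => MvPolynomial.eval (Function.update y i t) p with hfdef
    have hd := fun t => rz_hasDerivAt p i y t
    have hc : Continuous f := continuous_iff_continuousAt.2 fun t => (hd t).continuousAt
    have hyi := (rz_mem_cube j y).1 hy i
    obtain ⟨c, hc1, hc2⟩ := isCompact_Icc.exists_isMinOn (s := Set.Icc a (a + 1))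
      ⟨y i, hyi.1, hyi.2⟩ hc.continuousOn
    have h0 : f c ≤ 0 := by
      refine (hc2 (show y i ∈ Set.Icc a (a+1) from ⟨hyi.1, hyi.2⟩)).trans ?_
      simpa [hfdef] using h
    have hca : a < c := lt_of_le_of_ne hc1.1 (by rintro rfl; exact absurd hf (not_lt.2 h0))
    have hcb : c < a + 1 := lt_of_le_of_ne hc1.2 (by rintro rfl; exact absurd ht (not_lt.2 h0))
    have hm : IsLocalMin f c := hc2.isLocalMin (Icc_mem_nhds hca hcb)
    exact hi _ (rz_update_mem j y hy i c hc1.1 hc1.2) (hm.hasDerivAt_eq_zero (hd c))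

lemma rz_corner_le {n m : ℕ} (p : MvPolynomial (Fin n) ℝ) (j : Fin n → Fin m)
    (hi : ∀ i, MvPolynomial.pderiv i p = 0 ∨
      ∀ y ∈ rzCube j, MvPolynomial.eval y (MvPolynomial.pderiv i p) ≠ 0)
    (y : Rn n) (hy : y ∈ rzCube j) (h : MvPolynomial.eval y p ≤ 0) :
    ∃ σ, MvPolynomial.eval (rzCorner j σ) p ≤ 0 := by
  classical
  have key : ∀ T : Finset (Fin n), ∃ z ∈ rzCube j, ∃ σ : Fin n → Bool,
      (∀ i ∈ T, z i = rzCorner j σ i) ∧ MvPolynomial.eval z p ≤ 0 := by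
    intro T
    induction T using Finset.induction_on with
    | empty => exact ⟨y, hy, fun _ => true, by simp, h⟩
    | insert a T ha ih =>
      obtain ⟨z, hz, σ, hσ, hp⟩ := ih
      obtain ⟨b, hb⟩ := rz_move p j a (hi a) z hz hp
      refine ⟨_, rz_update_mem j z hz a _ ?_ ?_, Function.update σ a b, ?_, hb⟩
      · split_ifs <;> linarith
      · split_ifs <;> linarith
      · intro i hi
        by_cases hia : i = a
        · subst hia; simp [rzCorner]
        · have := hσ i (by simpa [hia] using hi)
          simpa [hia, rzCorner] using this
  obtain ⟨z, hz, σ, hσ, hp⟩ := key Finset.univ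
  refine ⟨σ, ?_⟩
  rwa [← show z = rzCorner j σ from funext fun i => hσ i (Finset.mem_univ i)]

lemma rz_edge {n m : ℕ} (p : MvPolynomial (Fin n) ℝ) (hp : p ≠ 0) (j : Fin n → Fin m)
    (hi : ∀ i, MvPolynomial.pderiv i p = 0 ∨
      ∀ y ∈ rzCube j, MvPolynomial.eval y (MvPolynomial.pderiv i p) ≠ 0)
    (y : Rn n) (hy : y ∈ rzCube j) (h : MvPolynomial.eval y p = 0) :
    ∃ i σ, MvPolynomial.pderiv i p ≠ 0 ∧ ∃ t : ℝ, ((j i : ℕ) : ℝ) ≤ t ∧ t ≤ ((j i : ℕ) : ℝ) + 1 ∧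
      MvPolynomial.eval (Function.update (rzCorner j σ) i t) p = 0 := by
  classical
  obtain ⟨σ, hσ⟩ := rz_corner_le p j hi y hy h.le
  obtain ⟨τ, hτ⟩ := rz_corner_le (-p) j (by simpa using hi) y hy (by simp [h])
  simp only [map_neg, Left.neg_nonpos_iff] at hτ
  rcases hσ.eq_or_lt with h0 | hneg
  · have : ∃ i, MvPolynomial.pderiv i p ≠ 0 := by
      by_contra! hcon
      apply hp
      refine MvPolynomial.funext fun x => ?_
      rw [rz_const p hcon x y, h, map_zero]
    obtain ⟨i, hi'⟩ := this
    have hm := (rz_mem_cube j _).1 (rz_corner_mem j σ) i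
    exact ⟨i, σ, hi', rzCorner j σ i, hm.1, hm.2, by simpa using h0⟩
  · by_contra! hcon
    have key : ∀ T : Finset (Fin n),
        MvPolynomial.eval (rzCorner j (fun i => if i ∈ T then τ i else σ i)) p < 0 := by
      intro T
      induction T using Finset.induction_on with
      | empty => simpa using hneg
      | insert a T ha ih =>
        set ρ := (fun i => if i ∈ T then τ i else σ i) with hρ
        have e1 : rzCorner j (fun i => if i ∈ insert a T then τ i else σ i) =
          Function.update (rzCorner j ρ) a (rzCorner j τ a) := by
          ext i
          by_cases hi : i = a
          · subst hi; simp [rzCorner]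
          · simp [hi, rzCorner, hρ]
        rw [e1]
        by_cases hd0 : MvPolynomial.pderiv a p = 0
        · rw [rz_const_dir p a hd0 _ _ (rzCorner j ρ a)]
          simpa using ih
        · by_contra! hge
          have hd := fun t => rz_hasDerivAt p a (rzCorner j ρ) t
          have hc : Continuous (fun t => MvPolynomial.eval (Function.update (rzCorner j ρ) a t) p) :=
            continuous_iff_continuousAt.2 fun t => (hd t).continuousAt
          have hs1 := (rz_mem_cube j _).1 (rz_corner_mem j ρ) a
          have hs2 := (rz_mem_cube j _).1 (rz_corner_mem j τ) a
          have := (convex_Icc (((j a : ℕ) : ℝ)) (((j a : ℕ) : ℝ) + 1)).isPreconnected.intermediate_value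
            (a := rzCorner j ρ a) (b := rzCorner j τ a) hs1 hs2 hc.continuousOn
          have h0 := this (a := 0) ⟨by simpa using ih.le, hge⟩
          obtain ⟨t, ht, ht0⟩ := h0
          exact hcon a ρ hd0 t ht.1 ht.2 ht0
    have := key Finset.univ
    simp only [Finset.mem_univ, if_true] at this
    linarith

lemma rz_card_fin (m : ℕ) (t : ℝ) :
    (Finset.univ.filter fun v : Fin m => ((v : ℕ) : ℝ) ≤ t ∧ t ≤ ((v : ℕ) : ℝ) + 1).card ≤ 2 := by
  have : (Finset.Icc (⌊t⌋ - 1) ⌊t⌋).card = 2 := by simp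
  rw [← this]
  refine Finset.card_le_card_of_injOn (fun v : Fin m => ((v : ℕ) : ℤ)) ?_ ?_
  · intro v hv
    simp only [Finset.coe_filter, Finset.mem_univ, true_and, Set.mem_ofPred_eq] at hv
    simp only [Finset.coe_Icc, Set.mem_Icc]
    constructor
    · have : ⌊t⌋ ≤ ⌊(((v : ℕ) : ℤ) : ℝ) + 1⌋ := Int.floor_le_floor (by simpa using hv.2)
      simp at this
      omega
    · exact Int.le_floor.2 (by simpa using hv.1)
  · intro a _ b _ hab
    simpa [Fin.ext_iff] using hab

open Classical in
/-- the cubes having a zero on a given type of edge. -/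
def rzE {n : ℕ} (m : ℕ) (p : MvPolynomial (Fin n) ℝ) (i : Fin n) (σ : Fin n → Bool) :
    Finset (Fin n → Fin m) :=
  Finset.univ.filter fun j => (∃ t : ℝ, ((j i : ℕ) : ℝ) ≤ t ∧ t ≤ ((j i : ℕ) : ℝ) + 1 ∧
      MvPolynomial.eval (Function.update (rzCorner j σ) i t) p = 0) ∧
      ∃ t, MvPolynomial.eval (Function.update (rzCorner j σ) i t) p ≠ 0

lemma rz_line {n : ℕ} (p : MvPolynomial (Fin n) ℝ) (i : Fin n) (k : ℕ)
    (hp : p.totalDegree ≤ k) (y : Rn n) :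
    ∃ q : Polynomial ℝ, q.natDegree ≤ k ∧
      ∀ t, q.eval t = MvPolynomial.eval (Function.update y i t) p := by
  classical
  refine ⟨MvPolynomial.aeval (fun l => if l = i then Polynomial.X else Polynomial.C (y l)) p,
    ?_, ?_⟩
  · have := MvPolynomial.aeval_natDegree_le p hp
      (fun l => if l = i then Polynomial.X else Polynomial.C (y l)) (n := 1) (by
        intro l
        split_ifs <;> simp)
    simpa using this
  · intro t
    clear hp
    induction p using MvPolynomial.induction_on with
    | C a => simp
    | add p q hp hq => simp [hp, hq]
    | mul_X p j hp =>
      by_cases hj : j = i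
      · subst hj; simp [hp]
      · simp [hp, hj]

lemma rz_E_card {n : ℕ} (m : ℕ) (p : MvPolynomial (Fin n) ℝ) (i : Fin n) (σ : Fin n → Bool)
    (k : ℕ) (hp : p.totalDegree ≤ k) : m * (rzE m p i σ).card ≤ (k * 2) * m ^ n := by
  classical
  have h := Finset.card_le_mul_card_image_of_maps_to
    (f := fun a : (Fin n → Fin m) × Fin m => Function.update a.1 i a.2)
    (s := (rzE m p i σ) ×ˢ (Finset.univ : Finset (Fin m))) (t := Finset.univ)
    (fun _ _ => Finset.mem_univ _) (k * 2) ?_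
  · simpa [mul_comm] using h
  intro b _
  obtain ⟨q, hq, hqe⟩ := rz_line p i k hp (rzCorner b σ)
  have hupd : ∀ a : (Fin n → Fin m) × Fin m, Function.update a.1 i a.2 = b → ∀ t : ℝ,
      Function.update (rzCorner a.1 σ) i t = Function.update (rzCorner b σ) i t := by
    rintro a rfl t
    ext l
    by_cases hl : l = i
    · subst hl; simp
    · simp [hl, rzCorner]
  have hroots : (q.roots.toFinset.biUnion fun t =>
      Finset.univ.filter fun v : Fin m => ((v : ℕ) : ℝ) ≤ t ∧ t ≤ ((v : ℕ) : ℝ) + 1).card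
        ≤ k * 2 := by
    refine (Finset.card_biUnion_le_card_mul _ _ 2 fun t _ => rz_card_fin m t).trans ?_
    exact Nat.mul_le_mul_right _
      ((Multiset.toFinset_card_le _).trans ((Polynomial.card_roots' q).trans hq))
  refine le_trans (Finset.card_le_card_of_injOn (fun a => a.1 i) ?_ ?_) hroots
  · intro a ha
    simp only [Finset.coe_filter, Finset.mem_product, Finset.mem_univ, and_true, Set.mem_ofPred_eq,
      rzE, Finset.mem_filter, true_and] at ha
    obtain ⟨⟨⟨t, ht1, ht2, ht3⟩, s, hs⟩, hab⟩ := ha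
    rw [hupd a hab, ← hqe] at ht3 hs
    have hq0 : q ≠ 0 := by rintro rfl; simp at hs
    simp only [Finset.coe_biUnion, Set.mem_iUnion, Finset.mem_coe]
    refine ⟨t, ?_, ?_⟩
    · simpa [hq0] using ht3
    · simpa using ⟨ht1, ht2⟩
  · rintro ⟨a, v⟩ ha ⟨a', v'⟩ ha' haa
    simp only [Finset.coe_filter, Set.mem_ofPred_eq] at ha ha' haa
    have h1 := ha.2.trans ha'.2.symm
    have hv : v = v' := by simpa using congrFun h1 i
    refine Prod.ext (funext fun l => ?_) hv
    by_cases hl : l = i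
    · subst hl; exact haa
    · simpa [hl] using congrFun h1 l

open Classical in
/-- the cubes meeting `{|p| ≤ ε}`. -/
def rzBad {n : ℕ} (m : ℕ) (p : MvPolynomial (Fin n) ℝ) (ε : ℝ) : Finset (Fin n → Fin m) :=
  Finset.univ.filter fun j => ∃ y ∈ rzCube j, |MvPolynomial.eval y p| ≤ ε

lemma rz_bad_card (n k : ℕ) : ∃ K : ℕ, ∀ p : MvPolynomial (Fin n) ℝ, p ≠ 0 → p.totalDegree ≤ k →
    ∀ m : ℕ, m * (rzBad m p 0).card ≤ K * m ^ n := by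
  classical
  induction k with
  | zero =>
    refine ⟨0, fun p hp hk m => ?_⟩
    have : rzBad m p 0 = ∅ := by
      have hC := MvPolynomial.totalDegree_eq_zero_iff_eq_C.1 (Nat.le_zero.1 hk)
      have h0 : MvPolynomial.coeff 0 p ≠ 0 := by
        intro h; rw [h] at hC; simp at hC; exact hp hC
      rw [rzBad, Finset.filter_eq_empty_iff]
      rintro j - ⟨y, -, hy⟩
      rw [hC] at hy
      simp [h0] at hy
    simp [this]
  | succ k ih =>
    obtain ⟨K, hK⟩ := ih
    refine ⟨n * K + n * (2 ^ n * ((k + 1) * 2)), fun p hp hk m => ?_⟩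
    have hsub : rzBad m p 0 ⊆
        ((Finset.univ.filter fun i : Fin n => MvPolynomial.pderiv i p ≠ 0).biUnion
          fun i => rzBad m (MvPolynomial.pderiv i p) 0) ∪
        ((Finset.univ : Finset (Fin n × (Fin n → Bool))).biUnion fun a => rzE m p a.1 a.2) := by
      intro j hj
      rw [Finset.mem_union]
      by_contra! hcon
      obtain ⟨h1, h2⟩ := hcon
      simp only [rzBad, Finset.mem_biUnion, Finset.mem_filter, Finset.mem_univ, true_and, not_exists,
        not_and, abs_nonpos_iff] at h1 hj h2
      obtain ⟨y, hy, hy0⟩ := hj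
      obtain ⟨i, σ, hi, t, ht1, ht2, ht3⟩ := rz_edge p hp j (fun i => by
        by_cases h : MvPolynomial.pderiv i p = 0
        · exact Or.inl h
        · exact Or.inr (h1 i h)) y hy hy0
      refine h2 (i, σ) ?_
      simp only [rzE, Finset.mem_filter, Finset.mem_univ, true_and]
      refine ⟨⟨t, ht1, ht2, ht3⟩, ?_⟩
      by_contra! hz
      refine h1 i hi _ (rz_update_mem j _ (rz_corner_mem j σ) i t ht1 ht2) ?_
      have hd := rz_hasDerivAt p i (rzCorner j σ) t
      simp only [hz] at hd
      exact hd.unique (hasDerivAt_const t 0)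
    have hA : ((Finset.univ.filter fun i : Fin n => MvPolynomial.pderiv i p ≠ 0).biUnion
          fun i => rzBad m (MvPolynomial.pderiv i p) 0).card * m ≤ n * (K * m ^ n) := by
      refine (Nat.mul_le_mul_right _ Finset.card_biUnion_le).trans ?_
      rw [Finset.sum_mul]
      refine (Finset.sum_le_card_nsmul _ _ (K * m ^ n) fun i hi => ?_).trans ?_
      · rw [mul_comm]
        exact hK _ (Finset.mem_filter.1 hi).2 (rz_pderiv_degree p i k hk) m
      · rw [smul_eq_mul]
        exact Nat.mul_le_mul_right _ ((Finset.card_le_univ _).trans (by simp))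
    have hB : ((Finset.univ : Finset (Fin n × (Fin n → Bool))).biUnion
        fun a => rzE m p a.1 a.2).card * m ≤ (n * 2 ^ n) * (((k + 1) * 2) * m ^ n) := by
      refine (Nat.mul_le_mul_right _ Finset.card_biUnion_le).trans ?_
      rw [Finset.sum_mul]
      refine (Finset.sum_le_card_nsmul _ _ (((k + 1) * 2) * m ^ n) fun i hi => ?_).trans ?_
      · rw [mul_comm]
        exact rz_E_card m p i.1 i.2 (k + 1) hk
      · simp
    have hC := (Finset.card_le_card hsub).trans (Finset.card_union_le _ _)
    calc m * (rzBad m p 0).card ≤ m * _ := Nat.mul_le_mul_left _ hC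
      _ = _ * m + _ * m := by rw [mul_comm, add_mul]
      _ ≤ _ := add_le_add hA hB
      _ = _ := by ring

/-- polynomial with prescribed coefficients. -/
def rzPoly {n : ℕ} (s : Finset (Fin n →₀ ℕ)) (c : s → ℝ) : MvPolynomial (Fin n) ℝ :=
  ∑ α : s, MvPolynomial.monomial (α : Fin n →₀ ℕ) (c α)

lemma rzPoly_eval {n : ℕ} (s : Finset (Fin n →₀ ℕ)) (c : s → ℝ) (y : Rn n) :
    MvPolynomial.eval y (rzPoly s c) = ∑ α : s, c α * ∏ i, y i ^ ((α : Fin n →₀ ℕ) i) := by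
  simp [rzPoly, MvPolynomial.eval_monomial, Finsupp.prod_fintype]

lemma rzPoly_coeff {n : ℕ} (s : Finset (Fin n →₀ ℕ)) (c : s → ℝ) (α : s) :
    MvPolynomial.coeff (α : Fin n →₀ ℕ) (rzPoly s c) = c α := by
  classical
  rw [rzPoly, MvPolynomial.coeff_sum, Finset.sum_eq_single α]
  · simp
  · intro β _ hβ
    rw [MvPolynomial.coeff_monomial, if_neg]
    exact fun h => hβ (Subtype.ext h)
  · simp

lemma rzPoly_of_support {n : ℕ} (s : Finset (Fin n →₀ ℕ)) (p : MvPolynomial (Fin n) ℝ)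
    (h : p.support ⊆ s) : rzPoly s (fun α => MvPolynomial.coeff (α : Fin n →₀ ℕ) p) = p := by
  conv_rhs => rw [← MvPolynomial.support_sum_monomial_coeff p]
  rw [rzPoly, Finset.sum_coe_sort s (fun α => MvPolynomial.monomial α (MvPolynomial.coeff α p))]
  symm
  refine Finset.sum_subset h fun α _ hα => ?_
  simp [MvPolynomial.notMem_support_iff.1 hα]

lemma rzPoly_degree {n : ℕ} (s : Finset (Fin n →₀ ℕ)) (c : s → ℝ) :
    (rzPoly s c).totalDegree ≤ s.sup fun α => α.sum fun _ e => e := by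
  refine MvPolynomial.totalDegree_finsetSum_le fun α _ => ?_
  by_cases h : c α = 0
  · simp [h]
  · rw [MvPolynomial.totalDegree_monomial _ h]
    exact Finset.le_sup (f := fun α : Fin n →₀ ℕ => α.sum fun _ e => e) α.2

lemma rzPoly_cont {n : ℕ} (s : Finset (Fin n →₀ ℕ)) :
    Continuous fun z : (s → ℝ) × Rn n => MvPolynomial.eval z.2 (rzPoly s z.1) := by
  simp only [rzPoly_eval]
  fun_prop

lemma rz_compact {n : ℕ} (s : Finset (Fin n →₀ ℕ)) (m : ℕ) (B : ℕ)
    (hB : ∀ c : s → ℝ, c ≠ 0 → (rzBad m (rzPoly s c) 0).card ≤ B) :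
    ∃ ε > 0, ∀ c ∈ sphere (0 : s → ℝ) 1, (rzBad m (rzPoly s c) ε).card ≤ B := by
  classical
  have hmono : ∀ (p : MvPolynomial (Fin n) ℝ) (a b : ℝ), a ≤ b →
      (rzBad m p a).card ≤ (rzBad m p b).card := by
    intro p a b hab
    refine Finset.card_le_card fun j hj => ?_
    simp only [rzBad, Finset.mem_filter, Finset.mem_univ, true_and] at hj ⊢
    obtain ⟨y, hy, hy'⟩ := hj
    exact ⟨y, hy, hy'.trans hab⟩
  refine (isCompact_sphere (0 : s → ℝ) 1).induction_on
    (p := fun T => ∃ ε > 0, ∀ c ∈ T, (rzBad m (rzPoly s c) ε).card ≤ B) ⟨1, one_pos, by simp⟩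
    ?_ ?_ ?_
  · rintro T T' hT ⟨ε, hε, h⟩
    exact ⟨ε, hε, fun c hc => h c (hT hc)⟩
  · rintro T T' ⟨ε, hε, h⟩ ⟨ε', hε', h'⟩
    refine ⟨min ε ε', lt_min hε hε', ?_⟩
    rintro c (hc | hc)
    · exact (hmono _ _ _ (min_le_left _ _)).trans (h c hc)
    · exact (hmono _ _ _ (min_le_right _ _)).trans (h' c hc)
  · intro c hc
    have hc0 : c ≠ 0 := by
      rintro rfl; simp at hc
    have hev : ∀ j : Fin n → Fin m, j ∉ rzBad m (rzPoly s c) 0 →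
        ∀ᶠ x : (s → ℝ) × ℝ in 𝓝 (c, 0), ∀ y ∈ rzCube j,
          x.2 < |MvPolynomial.eval y (rzPoly s x.1)| := by
      intro j hj
      refine IsCompact.eventually_forall_of_forall_eventually (isCompact_Icc)
        (P := fun (x : (s → ℝ) × ℝ) (y : Rn n) => x.2 < |MvPolynomial.eval y (rzPoly s x.1)|) ?_
      intro y hy
      have h1 : Continuous fun z : ((s → ℝ) × ℝ) × Rn n =>
          |MvPolynomial.eval z.2 (rzPoly s z.1.1)| :=
        ((rzPoly_cont s).comp (by fun_prop :
          Continuous fun z : ((s → ℝ) × ℝ) × Rn n => (z.1.1, z.2))).abs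
      have h2 : Continuous fun z : ((s → ℝ) × ℝ) × Rn n => z.1.2 := by fun_prop
      refine (isOpen_lt h2 h1).mem_nhds ?_
      simp only [rzBad, Finset.mem_filter, Finset.mem_univ, true_and, not_exists, not_and,
        not_le] at hj
      exact hj y hy
    have hev2 : ∀ᶠ x : (s → ℝ) × ℝ in 𝓝 (c, 0), ∀ j : Fin n → Fin m,
        j ∉ rzBad m (rzPoly s c) 0 → ∀ y ∈ rzCube j,
          x.2 < |MvPolynomial.eval y (rzPoly s x.1)| := by
      rw [Filter.eventually_all]
      intro j
      by_cases hj : j ∈ rzBad m (rzPoly s c) 0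
      · exact Filter.Eventually.of_forall fun x h => absurd hj h
      · exact (hev j hj).mono fun x hx _ => hx
    rw [Metric.eventually_nhds_iff] at hev2
    obtain ⟨δ, hδ, h⟩ := hev2
    refine ⟨ball c δ, mem_nhdsWithin_of_mem_nhds (ball_mem_nhds c hδ), δ / 2, half_pos hδ, ?_⟩
    intro c' hc'
    refine le_trans (Finset.card_le_card fun j hj => ?_) (hB c hc0)
    by_contra hj'
    simp only [rzBad, Finset.mem_filter, Finset.mem_univ, true_and] at hj
    obtain ⟨y, hy, hy'⟩ := hj
    have := h (y := (c', δ / 2)) (by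
      rw [Prod.dist_eq]
      refine max_lt hc' ?_
      simp [abs_of_pos hδ, hδ]) j hj' y hy
    exact absurd hy' (not_le.2 this)

lemma rz_main_poly (n k : ℕ) : ∃ K : ℕ, ∀ m : ℕ, ∃ ε > 0, ∃ M > 0,
    ∀ p : MvPolynomial (Fin n) ℝ, p.totalDegree ≤ k → ∃ N : ℝ, 0 ≤ N ∧
      (∀ y : Rn n, (∀ i, 0 ≤ y i ∧ y i ≤ m) → |MvPolynomial.eval y p| ≤ M * N) ∧
      (0 < N → m * (rzBad m p (ε * N)).card ≤ K * m ^ n) := by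
  classical
  set s : Finset (Fin n →₀ ℕ) := Finset.Iic (Finsupp.equivFunOnFinite.symm fun _ => k) with hs
  obtain ⟨K, hK⟩ := rz_bad_card n (s.sup fun α => α.sum fun _ e => e)
  refine ⟨K, fun m => ?_⟩
  have hB : ∃ B : ℕ, m * B ≤ K * m ^ n ∧
      ∀ c : s → ℝ, c ≠ 0 → (rzBad m (rzPoly s c) 0).card ≤ B := by
    have hh : ∀ c : s → ℝ, c ≠ 0 → m * (rzBad m (rzPoly s c) 0).card ≤ K * m ^ n := by
      intro c hc
      refine hK _ (fun h => hc (funext fun α => ?_)) (rzPoly_degree s c) m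
      rw [← rzPoly_coeff s c α, h]; simp
    rcases Nat.eq_zero_or_pos m with rfl | hm
    · refine ⟨(Finset.univ : Finset (Fin n → Fin 0)).card, by simp, fun c _ => Finset.card_le_univ _⟩
    · refine ⟨K * m ^ n / m, Nat.mul_div_le _ _, fun c hc => ?_⟩
      rw [Nat.le_div_iff_mul_le hm, mul_comm]
      exact hh c hc
  obtain ⟨B, hB1, hB2⟩ := hB
  obtain ⟨ε, hε, hεB⟩ := rz_compact s m B hB2
  obtain ⟨M, hM⟩ := ((isCompact_sphere (0 : s → ℝ) 1).prod
    (isCompact_Icc (a := (fun _ => 0 : Rn n)) (b := fun _ => (m : ℝ)))).exists_bound_of_continuousOn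
    (rzPoly_cont s).continuousOn
  refine ⟨ε, hε, max M 1, by positivity, fun p hp => ?_⟩
  have hsupp : p.support ⊆ s := by
    intro α hα
    rw [hs, Finset.mem_Iic]
    intro i
    have h1 := MvPolynomial.le_totalDegree hα
    have h2 : α i ≤ α.sum fun _ e => e := by
      rw [Finsupp.sum_fintype _ _ (by simp)]
      exact Finset.single_le_sum (f := fun i => α i) (by simp) (Finset.mem_univ i)
    simpa using h2.trans (h1.trans hp)
  set c : s → ℝ := fun α => MvPolynomial.coeff (α : Fin n →₀ ℕ) p with hc
  have hcp : rzPoly s c = p := rzPoly_of_support s p hsupp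
  refine ⟨‖c‖, norm_nonneg _, ?_, ?_⟩
  all_goals
    have hscale : ∀ y : Rn n, MvPolynomial.eval y p =
        ‖c‖ * MvPolynomial.eval y (rzPoly s (‖c‖⁻¹ • c)) := by
      intro y
      rw [← hcp, rzPoly_eval, rzPoly_eval, Finset.mul_sum]
      refine Finset.sum_congr rfl fun α _ => ?_
      by_cases h0 : ‖c‖ = 0
      · rw [norm_eq_zero] at h0; simp [h0]
      · simp only [Pi.smul_apply, smul_eq_mul]
        field_simp
    have hsph : 0 < ‖c‖ → ‖c‖⁻¹ • c ∈ sphere (0 : s → ℝ) 1 := by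
      intro h
      rw [mem_sphere_zero_iff_norm, norm_smul, norm_inv, norm_norm, inv_mul_cancel₀ h.ne']
  · intro y hy
    rw [hscale, abs_mul, abs_norm, mul_comm]
    rcases (norm_nonneg c).eq_or_lt with h0 | h0
    · simp [← h0]
    · refine mul_le_mul_of_nonneg_right ?_ h0.le
      refine le_trans ?_ (le_max_left _ _)
      exact hM (‖c‖⁻¹ • c, y) ⟨hsph h0, fun i => (hy i).1, fun i => (hy i).2⟩
  · intro h0
    refine le_trans (Nat.mul_le_mul_left _ (le_trans (Finset.card_le_card ?_) (hεB _ (hsph h0)))) hB1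
    intro j hj
    simp only [rzBad, Finset.mem_filter, Finset.mem_univ, true_and] at hj ⊢
    obtain ⟨y, hy, hy'⟩ := hj
    refine ⟨y, hy, ?_⟩
    rw [hscale, abs_mul, abs_norm, mul_comm] at hy'
    exact le_of_mul_le_mul_right hy' h0

lemma rz_affine {n : ℕ} (p : MvPolynomial (Fin n) ℝ) (k : ℕ) (hp : p.totalDegree ≤ k)
    (a : Rn n) (s : ℝ) : ∃ q : MvPolynomial (Fin n) ℝ, q.totalDegree ≤ k ∧
      ∀ y, MvPolynomial.eval y q = MvPolynomial.eval (fun i => a i + s * y i) p := by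
  refine ⟨∑ α ∈ p.support, MvPolynomial.C (MvPolynomial.coeff α p) *
    ∏ i, (MvPolynomial.C (a i) + MvPolynomial.C s * MvPolynomial.X i) ^ (α i), ?_, ?_⟩
  · refine MvPolynomial.totalDegree_finsetSum_le fun α hα => ?_
    refine (MvPolynomial.totalDegree_mul _ _).trans ?_
    rw [MvPolynomial.totalDegree_C, zero_add]
    refine (MvPolynomial.totalDegree_finsetProd _ _).trans ?_
    refine le_trans ?_ ((MvPolynomial.le_totalDegree hα).trans hp)
    rw [Finsupp.sum_fintype _ _ (by simp)]
    refine Finset.sum_le_sum fun i _ => ?_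
    refine (MvPolynomial.totalDegree_pow _ _).trans ?_
    refine (Nat.mul_le_mul_left _ (m := 1) ?_).trans (by simp)
    refine (MvPolynomial.totalDegree_add _ _).trans (max_le (by simp) ?_)
    refine (MvPolynomial.totalDegree_mul _ _).trans ?_
    simp
  · intro y
    rw [MvPolynomial.eval_eq' _ p]
    simp

lemma rz_exists_cube {n m : ℕ} (hm : 1 ≤ m) (z : Rn n) (hz : ∀ i, 0 ≤ z i ∧ z i ≤ m) :
    ∃ j : Fin n → Fin m, z ∈ rzCube j := by
  have : ∀ i, ∃ v : Fin m, ((v : ℕ) : ℝ) ≤ z i ∧ z i ≤ ((v : ℕ) : ℝ) + 1 := by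
    intro i
    by_cases h : ⌊z i⌋₊ < m
    · exact ⟨⟨⌊z i⌋₊, h⟩, Nat.floor_le (hz i).1, (Nat.lt_floor_add_one (z i)).le⟩
    · have h1 : (m : ℝ) ≤ z i := (Nat.le_floor_iff (hz i).1).1 (not_lt.1 h)
      refine ⟨⟨m - 1, by omega⟩, ?_, ?_⟩
      · simp only [Nat.cast_sub hm, Nat.cast_one]; linarith
      · simp only [Nat.cast_sub hm, Nat.cast_one]; linarith [(hz i).2]
  choose j hj using this
  exact ⟨j, (rz_mem_cube j z).2 hj⟩

lemma rz_arith (c K m n : ℕ) (hm : 1 ≤ m) (C₀ d ρ R : ℝ) (hC : 1 < C₀) (hρ : 0 < ρ) (hR : 1 < R)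
    (h1 : m * c ≤ K * m ^ n)
    (h2 : 2 * K * C₀ ^ 2 * (2 * R ^ 2) ^ d ≤ (m : ℝ) ^ (d - ((n : ℝ) - 1))) :
    c * (C₀ * (2 * ρ / m) ^ d) ≤ (C₀⁻¹ * (ρ / R ^ 2) ^ d) / 2 := by
  have hm0 : (0 : ℝ) < m := by exact_mod_cast hm
  have hR0 : (0 : ℝ) < R ^ 2 := by positivity
  have hC0 : 0 < C₀ := by linarith
  have h1' : (m : ℝ) * c ≤ K * (m : ℝ) ^ n := by exact_mod_cast h1
  have e : (m : ℝ) ^ (d - ((n : ℝ) - 1)) = (m : ℝ) ^ d * m / (m : ℝ) ^ n := by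
    rw [show d - ((n : ℝ) - 1) = d + 1 - n by ring, Real.rpow_sub hm0, Real.rpow_add hm0,
      Real.rpow_one, Real.rpow_natCast]
  rw [e, le_div_iff₀ (by positivity)] at h2
  have hA : (0 : ℝ) < (2 * R ^ 2) ^ d := by positivity
  have h3 : 2 * c * C₀ ^ 2 * (2 * R ^ 2) ^ d ≤ (m : ℝ) ^ d := by
    refine le_of_mul_le_mul_right ?_ hm0
    calc 2 * c * C₀ ^ 2 * (2 * R ^ 2) ^ d * m = (2 * C₀ ^ 2 * (2 * R ^ 2) ^ d) * (m * c) := by ring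
      _ ≤ (2 * C₀ ^ 2 * (2 * R ^ 2) ^ d) * (K * (m : ℝ) ^ n) :=
        mul_le_mul_of_nonneg_left h1' (by positivity)
      _ = 2 * K * C₀ ^ 2 * (2 * R ^ 2) ^ d * (m : ℝ) ^ n := by ring
      _ ≤ _ := h2
  rw [Real.div_rpow (by positivity) hm0.le, Real.div_rpow hρ.le hR0.le,
    Real.mul_rpow (by norm_num) hρ.le]
  rw [Real.mul_rpow (by norm_num) hR0.le] at h3
  have p1 : 0 < ρ ^ d := by positivity
  have p2 : 0 < (R ^ 2) ^ d := by positivity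
  have p3 : 0 < (m : ℝ) ^ d := by positivity
  have p4 : (0 : ℝ) < (2 : ℝ) ^ d := by positivity
  generalize ρ ^ d = A at *
  generalize (R ^ 2) ^ d = B at *
  generalize (m : ℝ) ^ d = D at *
  generalize (2 : ℝ) ^ d = E at *
  have : c * (C₀ * (E * A / D)) = (2 * c * C₀ ^ 2 * (E * B)) * (A / (2 * C₀ * D * B)) := by
    field_simp
  rw [this]
  calc _ ≤ D * (A / (2 * C₀ * D * B)) := mul_le_mul_of_nonneg_right h3 (by positivity)
    _ = _ := by field_simp

/-- **Remez type inequality on `d`-sets** (Theorem 2.4). Let `S ⊆ ℝⁿ` be a `d`-set,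
`n−1 < d ≤ n`, `k ∈ ℕ`, `1 ≤ u, r < ∞` and `R > 1`. There is `C > 0` such that for all
cubes `Q = Q(x_Q,r_Q)`, `Q' = Q(x_{Q'},r_{Q'})` with `x_{Q'} ∈ S`, `Q' ⊆ Q` and
`0 < r_Q ≤ R r_{Q'} ≤ R²`, and every polynomial `p` of degree at most `k`,
`((1/|Q|)∫_Q |p|^r)^{1/r} ≤ C ((1/ℋᵈ(Q'∩S)) ∫_{Q'∩S} |p|^u dℋᵈ)^{1/u}`. -/
theorem remez_inequality {n : ℕ} (S : Set (Rn n)) (d C₀ : ℝ) (hS : IsDSet S d C₀)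
    (hd1 : (n : ℝ) - 1 < d) (hd2 : d ≤ n) (k : ℕ) (u r R : ℝ)
    (hu : 1 ≤ u) (hr : 1 ≤ r) (hR : 1 < R) :
    ∃ C > 0, ∀ (xQ xQ' : Rn n) (rQ rQ' : ℝ), xQ' ∈ S →
      closedBall xQ' rQ' ⊆ closedBall xQ rQ →
      0 < rQ → rQ ≤ R * rQ' → R * rQ' ≤ R ^ 2 →
      ∀ P : MvPolynomial (Fin n) ℝ, P.totalDegree ≤ k →
        ((volume (closedBall xQ rQ))⁻¹ *
            ∫⁻ y in closedBall xQ rQ, ENNReal.ofReal |MvPolynomial.eval y P| ^ r) ^ (1 / r)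
          ≤ ENNReal.ofReal C *
            ((μH[d] (closedBall xQ' rQ' ∩ S))⁻¹ *
              ∫⁻ y in closedBall xQ' rQ' ∩ S,
                ENNReal.ofReal |MvPolynomial.eval y P| ^ u ∂μH[d]) ^ (1 / u) := by
  classical
  obtain ⟨-, hC1, hS⟩ := hS
  obtain ⟨K, hK⟩ := rz_main_poly n k
  obtain ⟨m, hm1, hmR, hmK⟩ : ∃ m : ℕ, 1 ≤ m ∧ 2 * R ^ 2 ≤ m ∧
      2 * K * C₀ ^ 2 * (2 * R ^ 2) ^ d ≤ (m : ℝ) ^ (d - ((n : ℝ) - 1)) := by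
    have h1 := (tendsto_rpow_atTop (show 0 < d - ((n : ℝ) - 1) by linarith)).comp
      (tendsto_natCast_atTop_atTop (R := ℝ))
    have h2 := h1.eventually_ge_atTop (2 * K * C₀ ^ 2 * (2 * R ^ 2) ^ d)
    have h3 := (tendsto_natCast_atTop_atTop (R := ℝ)).eventually_ge_atTop (2 * R ^ 2)
    obtain ⟨m, hm⟩ := ((eventually_ge_atTop 1).and (h3.and h2)).exists
    exact ⟨m, hm⟩
  obtain ⟨ε, hε, M, hM, hKm⟩ := hK m
  have hm0 : (0 : ℝ) < m := by exact_mod_cast hm1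
  have hu0 : 0 < u := by linarith
  have hr0 : 0 < r := by linarith
  refine ⟨M / ε * 2 ^ (1 / u), by positivity, ?_⟩
  intro xQ xQ' rQ rQ' hx hsub hrQ hrQ1 hrQ2 P hP
  set s : ℝ := 2 * rQ / m with hs
  have hs0 : 0 < s := by positivity
  have hs1 : s ≤ 1 := by
    rw [hs, div_le_one hm0]; linarith
  obtain ⟨q, hq, hqe⟩ := rz_affine P k hP (fun i => xQ i - rQ) s
  obtain ⟨N, hN0, hNM, hNε⟩ := hKm q hq
  set z : Rn n → Rn n := fun y i => (y i - (xQ i - rQ)) / s with hz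
  have hzP : ∀ y, MvPolynomial.eval (z y) q = MvPolynomial.eval y P := by
    intro y
    rw [hqe]
    congr 2
    ext i
    simp only [hz]
    field_simp
    ring
  have hzm : ∀ y ∈ closedBall xQ rQ, ∀ i, 0 ≤ z y i ∧ z y i ≤ m := by
    intro y hy i
    rw [mem_closedBall, dist_pi_le_iff hrQ.le] at hy
    have := hy i
    rw [Real.dist_eq, abs_le] at this
    simp only [hz]
    constructor
    · exact div_nonneg (by linarith) hs0.le
    · rw [div_le_iff₀ hs0, hs, mul_div_cancel₀ _ hm0.ne']
      linarith
  have hup : ∀ y ∈ closedBall xQ rQ, |MvPolynomial.eval y P| ≤ M * N := by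
    intro y hy
    rw [← hzP]
    exact hNM _ (hzm y hy)
  -- left-hand side
  have hL : ((volume (closedBall xQ rQ))⁻¹ *
      ∫⁻ y in closedBall xQ rQ, ENNReal.ofReal |MvPolynomial.eval y P| ^ r) ^ (1 / r)
      ≤ ENNReal.ofReal (M * N) := by
    have h1 : ∫⁻ y in closedBall xQ rQ, ENNReal.ofReal |MvPolynomial.eval y P| ^ r ≤
        ENNReal.ofReal (M * N) ^ r * volume (closedBall xQ rQ) := by
      rw [← setLIntegral_const]
      refine setLIntegral_mono measurable_const fun y hy => ?_
      exact ENNReal.rpow_le_rpow (ENNReal.ofReal_le_ofReal (hup y hy)) hr0.le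
    have hv0 : volume (closedBall xQ rQ) ≠ 0 := (measure_closedBall_pos volume xQ hrQ).ne'
    have hvt : volume (closedBall xQ rQ) ≠ ∞ := measure_closedBall_lt_top.ne
    calc _ ≤ ((volume (closedBall xQ rQ))⁻¹ *
          (ENNReal.ofReal (M * N) ^ r * volume (closedBall xQ rQ))) ^ (1 / r) :=
        ENNReal.rpow_le_rpow (by gcongr) (by positivity)
      _ = (ENNReal.ofReal (M * N) ^ r) ^ (1 / r) := by
        rw [mul_comm, mul_assoc, ENNReal.mul_inv_cancel hv0 hvt, mul_one]
      _ = ENNReal.ofReal (M * N) := by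
        rw [← ENNReal.rpow_mul, mul_one_div_cancel hr0.ne', ENNReal.rpow_one]
  refine hL.trans ?_
  rcases hN0.eq_or_lt with h0 | hN
  · simp [← h0]
  have hcard := hNε hN
  set A := closedBall xQ' rQ' ∩ S with hA
  -- small cubes
  set D : (Fin n → Fin m) → Set (Rn n) := fun j => {y | z y ∈ rzCube j} ∩ S with hD
  have hDμ : ∀ j, μH[d] (D j) ≤ ENNReal.ofReal (C₀ * s ^ d) := by
    intro j
    rcases (D j).eq_empty_or_nonempty with he | ⟨w, hw⟩
    · simp [he]
    · refine le_trans (measure_mono ?_) (hS w hw.2 s hs0 hs1).2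
      intro y hy
      refine ⟨?_, hy.2⟩
      rw [mem_closedBall, dist_pi_le_iff hs0.le]
      intro i
      have a1 := (rz_mem_cube j _).1 hy.1 i
      have a2 := (rz_mem_cube j _).1 hw.1 i
      simp only [hz] at a1 a2
      rw [le_div_iff₀ hs0, div_le_iff₀ hs0] at a1 a2
      rw [Real.dist_eq, abs_le]
      constructor <;> linarith [a1.1, a1.2, a2.1, a2.2]
  have hcov : ∀ J : Finset (Fin n → Fin m), ∀ T : Set (Rn n), (∀ y ∈ T, ∃ j ∈ J, y ∈ D j) →
      μH[d] T ≤ ENNReal.ofReal (J.card * (C₀ * s ^ d)) := by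
    intro J T hT
    calc μH[d] T ≤ μH[d] (⋃ j ∈ J, D j) := measure_mono fun y hy => by
          simpa using hT y hy
      _ ≤ ∑ j ∈ J, μH[d] (D j) := measure_biUnion_finset_le J D
      _ ≤ ∑ j ∈ J, ENNReal.ofReal (C₀ * s ^ d) := Finset.sum_le_sum fun j _ => hDμ j
      _ = _ := by
        rw [Finset.sum_const, nsmul_eq_mul, ENNReal.ofReal_mul (p := (J.card : ℝ)) (by positivity),
          ENNReal.ofReal_natCast]
  have hAt : μH[d] A ≠ ∞ := by
    refine ne_top_of_le_ne_top ENNReal.ofReal_ne_top (hcov Finset.univ A fun y hy => ?_)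
    obtain ⟨j, hj⟩ := rz_exists_cube hm1 (z y) (hzm y (hsub hy.1))
    exact ⟨j, Finset.mem_univ j, hj, hy.2⟩
  have hlow : ENNReal.ofReal (C₀⁻¹ * (rQ / R ^ 2) ^ d) ≤ μH[d] A := by
    have hR2 : 0 < R ^ 2 := by positivity
    have hr' : 0 < rQ' := by
      by_contra! h
      nlinarith
    refine le_trans (hS xQ' hx (rQ / R ^ 2) (by positivity) ?_).1 (measure_mono ?_)
    · rw [div_le_one hR2]; linarith
    · refine inter_subset_inter_left _ (closedBall_subset_closedBall ?_)
      rw [div_le_iff₀ hR2]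
      nlinarith [mul_pos hr' (mul_pos (by linarith : 0 < R) (by linarith : 0 < R - 1))]
  have hA0 : μH[d] A ≠ 0 := by
    have : 0 < C₀⁻¹ * (rQ / R ^ 2) ^ d := by
      have : 0 < C₀ := by linarith
      positivity
    exact (lt_of_lt_of_le (ENNReal.ofReal_pos.2 this) hlow).ne'
  set G : Set (Rn n) := {y | ε * N < |MvPolynomial.eval y P|} with hG
  have hGm : MeasurableSet G :=
    (isOpen_lt continuous_const (MvPolynomial.continuous_eval P).abs).measurableSet
  have hbad : μH[d] (A \ G) ≤ μH[d] A / 2 := by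
    have h1 := hcov (rzBad m q (ε * N)) (A \ G) fun y hy => by
      obtain ⟨j, hj⟩ := rz_exists_cube hm1 (z y) (hzm y (hsub hy.1.1))
      refine ⟨j, ?_, hj, hy.1.2⟩
      simp only [rzBad, Finset.mem_filter, Finset.mem_univ, true_and]
      refine ⟨z y, hj, ?_⟩
      rw [hzP]
      exact not_lt.1 hy.2
    have h2 := rz_arith _ K m n hm1 C₀ d rQ R hC1 hrQ hR hcard hmK
    refine h1.trans ((ENNReal.ofReal_le_ofReal h2).trans ?_)
    rw [ENNReal.ofReal_div_of_pos two_pos, ENNReal.ofReal_ofNat]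
    exact ENNReal.div_le_div_right hlow 2
  have hgood : μH[d] A / 2 ≤ μH[d] (A ∩ G) := by
    have h1 := measure_inter_add_sdiff (μ := μH[d]) A hGm
    have h2 : μH[d] A / 2 + μH[d] A / 2 ≤ μH[d] (A ∩ G) + μH[d] A / 2 := by
      rw [ENNReal.add_halves]
      calc μH[d] A = _ := h1.symm
        _ ≤ _ := by gcongr
    exact (ENNReal.add_le_add_iff_right (ENNReal.div_ne_top hAt two_ne_zero)).1 h2
  have hint : ENNReal.ofReal (ε * N) ^ u * (μH[d] A / 2) ≤
      ∫⁻ y in A, ENNReal.ofReal |MvPolynomial.eval y P| ^ u ∂μH[d] := by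
    calc _ ≤ ENNReal.ofReal (ε * N) ^ u * μH[d] (A ∩ G) := by gcongr
      _ = ∫⁻ y in A ∩ G, ENNReal.ofReal (ε * N) ^ u ∂μH[d] := (setLIntegral_const _ _).symm
      _ ≤ ∫⁻ y in A ∩ G, ENNReal.ofReal |MvPolynomial.eval y P| ^ u ∂μH[d] := by
        refine setLIntegral_mono ?_ fun y hy => ?_
        · exact ((MvPolynomial.continuous_eval P).abs.measurable.ennreal_ofReal).pow_const u
        · exact ENNReal.rpow_le_rpow (ENNReal.ofReal_le_ofReal (le_of_lt hy.2)) hu0.le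
      _ ≤ _ := lintegral_mono_set inter_subset_left
  have hfin : ENNReal.ofReal (ε * N) ^ u * 2⁻¹ ≤ (μH[d] A)⁻¹ *
      ∫⁻ y in A, ENNReal.ofReal |MvPolynomial.eval y P| ^ u ∂μH[d] := by
    calc _ = (μH[d] A)⁻¹ * (ENNReal.ofReal (ε * N) ^ u * (μH[d] A / 2)) := by
          rw [div_eq_mul_inv]
          calc _ = ((μH[d] A)⁻¹ * μH[d] A) * (ENNReal.ofReal (ε * N) ^ u * 2⁻¹) := by
                rw [ENNReal.inv_mul_cancel hA0 hAt, one_mul]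
            _ = _ := by ring
      _ ≤ _ := by gcongr
  calc ENNReal.ofReal (M * N) = ENNReal.ofReal (M / ε * 2 ^ (1 / u)) *
        (ENNReal.ofReal (ε * N) ^ u * 2⁻¹) ^ (1 / u) := by
        have hεN : 0 < ε * N := by positivity
        rw [ENNReal.mul_rpow_of_nonneg _ _ (by positivity), ← ENNReal.rpow_mul,
          mul_one_div_cancel hu0.ne', ENNReal.rpow_one,
          show (2⁻¹ : ℝ≥0∞) = ENNReal.ofReal 2⁻¹ by
            rw [ENNReal.ofReal_inv_of_pos two_pos, ENNReal.ofReal_ofNat],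
          ENNReal.ofReal_rpow_of_pos (by norm_num), ← ENNReal.ofReal_mul (by positivity),
          ← ENNReal.ofReal_mul (by positivity), Real.inv_rpow (by norm_num)]
        congr 1
        field_simp
    _ ≤ _ := by gcongr
end
end

section
/- Let S ⊆ ℝⁿ be a d-set with n−1 < d < n. Suppose 1 < r < ∞ and 0 < ω < 1 satisfy ωr > n−d, let r' be the conjugate exponent (1/r + 1/r' = 1), and fix T > 0. Then there is a constant C (depending on S, n, d, r, ω, T) such that for every x ∈ S and every 0 < t ≤ T, (∫_{Q(x,t)} (∫_{Q(y,t)∩S} dℋᵈ(z)/|y−z|^{n−ω})^{r'} dy)^{1/r'} ≤ C t^{d+ω−n/r}, where |y−z| is the Euclidean distance. -/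
open MeasureTheory Metric Set Filter
open scoped ENNReal NNReal Topology

noncomputable section

/-- The Euclidean distance on `Rn n`. -/
def euclDist {n : ℕ} (x y : Rn n) : ℝ := Real.sqrt (∑ i, (x i - y i) ^ 2)

lemma rpow_anti {x y : ℝ≥0∞} {c : ℝ} (h : x ≤ y) (hc : c ≤ 0) : y ^ c ≤ x ^ c := by
  obtain ⟨b, rfl⟩ : ∃ b, c = -b := ⟨-c, by ring⟩
  rw [ENNReal.rpow_neg, ENNReal.rpow_neg]
  exact ENNReal.inv_le_inv.2 (ENNReal.rpow_le_rpow h (by linarith))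

lemma dist_le_eucl {n : ℕ} (x y : Rn n) : dist x y ≤ euclDist x y := by
  unfold euclDist
  rw [dist_pi_le_iff (Real.sqrt_nonneg _)]
  intro b
  rw [Real.dist_eq, ← Real.sqrt_sq_eq_abs]
  apply Real.sqrt_le_sqrt
  exact Finset.single_le_sum (f := fun i => (x i - y i) ^ 2) (fun i _ => sq_nonneg _)
    (Finset.mem_univ b)

lemma ker_bound {d s : ℝ} (hs : 0 < s) (hsd : s < d) : ∃ K > 0,
    ∀ (n : ℕ) (μ : Measure (Rn n)) (y : Rn n) (t M : ℝ), 0 < t → 0 ≤ M →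
      (∀ ρ, 0 < ρ → ρ ≤ t → μ (closedBall y ρ) ≤ ENNReal.ofReal (M * ρ ^ d)) →
      ∫⁻ z in closedBall y t, ENNReal.ofReal (dist y z) ^ (-s) ∂μ
        ≤ ENNReal.ofReal (K * M * t ^ (d - s)) := by
  set θ : ℝ := (1 / 2 : ℝ) ^ (d - s) with hθ
  have hθ0 : 0 < θ := by positivity
  have hθ1 : θ < 1 := Real.rpow_lt_one (by norm_num) (by norm_num) (by linarith)
  have hsum : Summable (fun k : ℕ => θ ^ k) := summable_geometric_of_lt_one hθ0.le hθ1
  refine ⟨2 ^ s * (1 - θ)⁻¹, mul_pos (by positivity) (inv_pos.2 (by linarith)), ?_⟩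
  intro n μ y t M ht hM hμ
  set ρ : ℕ → ℝ := fun k => t * (1 / 2) ^ k with hρ
  have hρ0 : ∀ k, 0 < ρ k := fun k => by positivity
  have hρt : ∀ k, ρ k ≤ t := fun k => by
    have : (1 / 2 : ℝ) ^ k ≤ 1 := pow_le_one₀ (by norm_num) (by norm_num)
    simp only [hρ]; nlinarith
  set c : ℕ → ℝ := fun k => (ρ (k + 1)) ^ (-s) with hc
  have hc0 : ∀ k, 0 < c k := fun k => Real.rpow_pos_of_pos (hρ0 _) _
  have key : ∀ z ∈ closedBall y t, ENNReal.ofReal (dist y z) ^ (-s) ≤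
      ∑' k, (closedBall y (ρ k)).indicator (fun _ => ENNReal.ofReal (c k)) z := by
    intro z hz
    rw [mem_closedBall, dist_comm] at hz
    rcases (dist_nonneg (x := y) (y := z)).eq_or_lt with h0 | h0
    · have hyz : z = y := (dist_eq_zero.1 h0.symm).symm
      subst hyz
      have : (∑' k, (closedBall z (ρ k)).indicator (fun _ => ENNReal.ofReal (c k)) z) = ⊤ := by
        rw [← top_le_iff]
        calc (⊤ : ℝ≥0∞) = ∑' _ : ℕ, ENNReal.ofReal (t ^ (-s)) :=
              (ENNReal.tsum_const_eq_top_of_ne_zero (by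
                simpa using Real.rpow_pos_of_pos ht (-s))).symm
          _ ≤ _ := by
            apply ENNReal.tsum_le_tsum
            intro k
            rw [indicator_of_mem (mem_closedBall_self (hρ0 k).le)]
            apply ENNReal.ofReal_le_ofReal
            exact Real.rpow_le_rpow_of_nonpos (hρ0 _) (hρt _) (by linarith)
      rw [this]; exact le_top
    · obtain ⟨k, hk1, hk2⟩ := exists_nat_pow_near_of_lt_one (x := dist y z / t)
        (y := (1 / 2 : ℝ)) (by positivity) (by rwa [div_le_one ht]) (by norm_num) (by norm_num)
      rw [lt_div_iff₀ ht] at hk1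
      rw [div_le_iff₀ ht] at hk2
      refine le_trans ?_ (ENNReal.le_tsum k)
      rw [indicator_of_mem (by rw [mem_closedBall, dist_comm]; simp only [hρ]; linarith),
        ENNReal.ofReal_rpow_of_pos h0]
      apply ENNReal.ofReal_le_ofReal
      exact Real.rpow_le_rpow_of_nonpos (hρ0 _) (by simp only [hρ]; linarith) (by linarith)
  have hterm : ∀ k, c k * (M * ρ k ^ d) = 2 ^ s * M * t ^ (d - s) * θ ^ k := by
    intro k
    have e1 : ρ (k + 1) = ρ k * 2⁻¹ := by simp only [hρ]; rw [pow_succ]; ring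
    have e2 : ρ k ^ (-s) * ρ k ^ d = t ^ (d - s) * θ ^ k := by
      rw [← Real.rpow_add (hρ0 k), hθ, show -s + d = d - s by ring]
      simp only [hρ]
      rw [Real.mul_rpow ht.le (by positivity), ← Real.rpow_natCast, ← Real.rpow_natCast,
        ← Real.rpow_mul (by norm_num), ← Real.rpow_mul (by norm_num), mul_comm (k : ℝ)]
    have e3 : (2⁻¹ : ℝ) ^ (-s) = 2 ^ s := by
      rw [Real.inv_rpow (by norm_num), Real.rpow_neg (by norm_num), inv_inv]
    calc c k * (M * ρ k ^ d) = (ρ k * 2⁻¹) ^ (-s) * (M * ρ k ^ d) := by simp only [hc, e1]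
      _ = 2 ^ s * M * (ρ k ^ (-s) * ρ k ^ d) := by
        rw [Real.mul_rpow (hρ0 k).le (by norm_num), e3]; ring
      _ = _ := by rw [e2]; ring
  calc ∫⁻ z in closedBall y t, ENNReal.ofReal (dist y z) ^ (-s) ∂μ
      ≤ ∫⁻ z in closedBall y t,
        ∑' k, (closedBall y (ρ k)).indicator (fun _ => ENNReal.ofReal (c k)) z ∂μ :=
        setLIntegral_mono' isClosed_closedBall.measurableSet key
    _ ≤ ∫⁻ z, ∑' k, (closedBall y (ρ k)).indicator (fun _ => ENNReal.ofReal (c k)) z ∂μ :=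
        setLIntegral_le_lintegral _ _
    _ = ∑' k, ENNReal.ofReal (c k) * μ (closedBall y (ρ k)) := by
        rw [lintegral_tsum (fun k => (measurable_const.indicator
          isClosed_closedBall.measurableSet).aemeasurable)]
        congr 1; ext k
        rw [lintegral_indicator_const isClosed_closedBall.measurableSet]
    _ ≤ ∑' k, ENNReal.ofReal (2 ^ s * M * t ^ (d - s) * θ ^ k) := by
        apply ENNReal.tsum_le_tsum
        intro k
        rw [← hterm, ENNReal.ofReal_mul (hc0 k).le]
        gcongr
        exact hμ _ (hρ0 k) (hρt k)
    _ = ENNReal.ofReal (2 ^ s * (1 - θ)⁻¹ * M * t ^ (d - s)) := by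
        rw [← ENNReal.ofReal_tsum_of_nonneg (fun k => by positivity) (hsum.mul_left _),
          tsum_mul_left, tsum_geometric_of_lt_one hθ0.le hθ1]
        congr 1; ring

lemma growth {n : ℕ} {S : Set (Rn n)} {d C₀ : ℝ} (hS : IsDSet S d C₀) (hd : 0 < d) (R : ℝ) :
    ∃ M > 0, ∀ (y : Rn n) (ρ : ℝ), 0 < ρ → ρ ≤ R →
      μH[d] (closedBall y ρ ∩ S) ≤ ENNReal.ofReal (M * ρ ^ d) := by
  obtain ⟨_, hC, hS⟩ := hS
  have small : ∀ (y : Rn n) (ρ : ℝ), 0 < ρ → ρ ≤ 1 / 2 →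
      μH[d] (closedBall y ρ ∩ S) ≤ ENNReal.ofReal (C₀ * 2 ^ d * ρ ^ d) := by
    intro y ρ h0 h1
    rcases (closedBall y ρ ∩ S).eq_empty_or_nonempty with h | ⟨w, hw, hwS⟩
    · rw [h]; simp
    · have := (hS w hwS (2 * ρ) (by linarith) (by linarith)).2
      rw [Real.mul_rpow (by norm_num) h0.le, ← mul_assoc] at this
      refine le_trans (measure_mono ?_) this
      apply inter_subset_inter_left
      apply closedBall_subset_closedBall'
      rw [mem_closedBall, dist_comm] at hw
      linarith
  obtain ⟨s, -, hfin, hcov⟩ := finite_cover_balls_of_compact (isCompact_closedBall (0 : Rn n) R)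
    (e := 1 / 2) (by norm_num)
  refine ⟨(hfin.toFinset.card + 1) * (C₀ * 2 ^ d), by positivity, ?_⟩
  intro y ρ h0 hR
  rcases le_or_gt ρ (1 / 2) with h | h
  · refine (small y ρ h0 h).trans (ENNReal.ofReal_le_ofReal ?_)
    have : 0 ≤ C₀ * 2 ^ d * ρ ^ d := by positivity
    have h2 : (0 : ℝ) ≤ hfin.toFinset.card := by positivity
    nlinarith
  · have hsub : closedBall y ρ ∩ S ⊆ ⋃ x ∈ hfin.toFinset, (closedBall (y + x) (1 / 2) ∩ S) := by
      rintro z ⟨hz, hzS⟩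
      have hz' : z - y ∈ closedBall (0 : Rn n) R := by
        rw [mem_closedBall, dist_eq_norm] at hz
        rw [mem_closedBall_zero_iff]; linarith
      have := hcov hz'
      simp only [mem_iUnion] at this ⊢
      obtain ⟨x, hx, hx2⟩ := this
      refine ⟨x, by simpa using hx, ?_, hzS⟩
      rw [mem_ball, dist_eq_norm] at hx2
      rw [mem_closedBall, dist_eq_norm, ← sub_sub]
      exact hx2.le
    calc μH[d] (closedBall y ρ ∩ S) ≤ _ := measure_mono hsub
      _ ≤ ∑ x ∈ hfin.toFinset, μH[d] (closedBall (y + x) (1 / 2) ∩ S) :=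
        measure_biUnion_finset_le _ _
      _ ≤ ∑ x ∈ hfin.toFinset, ENNReal.ofReal (C₀ * 2 ^ d * ρ ^ d) := by
        apply Finset.sum_le_sum
        intro x _
        refine (small _ _ (by norm_num) le_rfl).trans (ENNReal.ofReal_le_ofReal ?_)
        gcongr
      _ = ENNReal.ofReal (hfin.toFinset.card * (C₀ * 2 ^ d * ρ ^ d)) := by
        rw [Finset.sum_const, nsmul_eq_mul, ENNReal.ofReal_mul (Nat.cast_nonneg _),
          ENNReal.ofReal_natCast]
      _ ≤ _ := by
        apply ENNReal.ofReal_le_ofReal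
        have : 0 ≤ C₀ * 2 ^ d * ρ ^ d := by positivity
        nlinarith

/-- **Energy type estimate** (Lemma 2.5). Let `S ⊆ ℝⁿ` be a `d`-set with `n−1 < d < n`,
let `1 < r < ∞` and `0 < ω < 1` satisfy `ωr > n−d`, let `r'` be the conjugate exponent
and `T > 0`. Then there is `C > 0` such that for every `x ∈ S` and `0 < t ≤ T`,
`(∫_{Q(x,t)} (∫_{Q(y,t)∩S} dℋᵈ(z)/|y−z|^{n−ω})^{r'} dy)^{1/r'} ≤ C t^{d+ω−n/r}`,
with `|y−z|` the Euclidean distance. (Note `1/|y−z|^{n−ω} = |y−z|^{ω−n}`.) -/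
theorem energy_estimate {n : ℕ} (S : Set (Rn n)) (d C₀ : ℝ) (hS : IsDSet S d C₀)
    (hd1 : (n : ℝ) - 1 < d) (hd2 : d < n) (r ω r' T : ℝ)
    (hr : 1 < r) (hω0 : 0 < ω) (hω1 : ω < 1) (hωr : (n : ℝ) - d < ω * r)
    (hr' : 1 / r + 1 / r' = 1) (hT : 0 < T) :
    ∃ C > 0, ∀ x ∈ S, ∀ t : ℝ, 0 < t → t ≤ T →
      (∫⁻ y in closedBall x t,
          (∫⁻ z in closedBall y t ∩ S,
            ENNReal.ofReal (euclDist y z) ^ (ω - n) ∂μH[d]) ^ r') ^ (1 / r')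
        ≤ ENNReal.ofReal C * ENNReal.ofReal (t ^ (d + ω - n / r)) := by
  have hr0 : 0 < r := by linarith
  have hri : 1 / r < 1 := by rw [div_lt_one hr0]; exact hr
  have hr'i : 0 < 1 / r' := by linarith
  have hr'0 : 0 < r' := by simpa using hr'i
  rcases Nat.eq_zero_or_pos n with hn | hn
  · subst hn
    refine ⟨1, one_pos, ?_⟩
    intro x _ t _ _
    have h0 : ∀ y z : Rn 0, ENNReal.ofReal (euclDist y z) ^ (ω - (0 : ℕ)) = 0 := by
      intro y z
      simp [euclDist, hω0]
    simp only [h0]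
    simp [hr'0]
  have hn1 : (1 : ℝ) ≤ n := by exact_mod_cast hn
  have hd : 0 < d := by linarith
  have hα : 0 < (n : ℝ) - ω := by linarith
  have hconj : r'.HolderConjugate r := by
    have h2 : r'⁻¹ + r⁻¹ = 1 := by rw [← one_div, ← one_div]; linarith
    refine Real.holderConjugate_iff.2 ⟨?_, h2⟩
    have h3 : 0 < r⁻¹ := by positivity
    exact (inv_lt_one₀ hr'0).1 (by linarith)
  -- choice of the exponents
  obtain ⟨p, q, hp0, hq0, hpq, hp, hq⟩ : ∃ p q : ℝ, 0 < p ∧ 0 < q ∧ p + q = n - ω ∧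
      p * r' < n ∧ q * r < d := by
    set D : ℝ := n * (1 / r') + d * (1 / r) with hD
    have hD0 : 0 < D := by positivity
    have hDα : n - ω < D := by
      have h1 : (n - d) * (1 / r) < ω := by
        rw [mul_one_div, div_lt_iff₀ hr0]; exact hωr
      have h2 : 1 / r' = 1 - 1 / r := by linarith
      rw [hD, h2]; nlinarith
    set θ := (n - ω) / D with hθ
    have hθ0 : 0 < θ := by positivity
    have hθ1 : θ < 1 := by rw [hθ, div_lt_one hD0]; exact hDα
    refine ⟨θ * (n * (1 / r')), θ * (d * (1 / r)), by positivity, by positivity, ?_, ?_, ?_⟩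
    · rw [← mul_add, ← hD, hθ]; field_simp
    · have : θ * (n * (1 / r')) * r' = θ * n := by field_simp
      rw [this]; nlinarith
    · have : θ * (d * (1 / r)) * r = θ * d := by field_simp
      rw [this]; nlinarith
  obtain ⟨K₁, hK₁, H₁⟩ := ker_bound (d := n) (s := p * r') (by positivity) hp
  obtain ⟨K₂, hK₂, H₂⟩ := ker_bound (d := d) (s := q * r) (by positivity) hq
  obtain ⟨M, hM, HM⟩ := growth hS hd (2 * T)
  have hSc : MeasurableSet S := hS.1.measurableSet
  set a : ℝ := K₂ * M with ha
  set b : ℝ := K₁ * 2 ^ n * (M * 2 ^ d) with hb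
  have ha0 : 0 < a := by positivity
  have hb0 : 0 < b := by positivity
  refine ⟨(a ^ (r' / r) * b) ^ (1 / r'), by positivity, ?_⟩
  intro x _ t ht htT
  set μ : Measure (Rn n) := (μH[d]).restrict (closedBall x (2 * t) ∩ S) with hμ
  have hμu : μ univ ≤ ENNReal.ofReal (M * (2 * t) ^ d) := by
    rw [hμ, Measure.restrict_apply_univ]
    exact HM x (2 * t) (by linarith) (by linarith)
  haveI : IsFiniteMeasure μ := ⟨hμu.trans_lt ENNReal.ofReal_lt_top⟩
  have hμb : ∀ (y : Rn n) (ρ : ℝ), 0 < ρ → ρ ≤ t →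
      μ (closedBall y ρ) ≤ ENNReal.ofReal (M * ρ ^ d) := by
    intro y ρ h0 h1
    rw [hμ, Measure.restrict_apply isClosed_closedBall.measurableSet]
    refine (measure_mono ?_).trans (HM y ρ h0 (by linarith))
    exact fun z hz => ⟨hz.1, hz.2.2⟩
  set A : ℝ := a * t ^ (d - q * r) with hA
  have hA0 : 0 < A := by positivity
  set B : ℝ := b * t ^ (n - p * r' + d) with hB
  have hB0 : 0 < B := by positivity
  set k : ℝ → Rn n → Rn n → ℝ≥0∞ := fun s y z => ENNReal.ofReal (dist y z) ^ (-s) with hk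
  have hkm : ∀ s, Measurable (Function.uncurry (k s)) := by
    intro s
    simp only [hk, Function.uncurry_def]
    exact (ENNReal.measurable_ofReal.comp (measurable_fst.dist measurable_snd)).pow_const _
  have hkm' : ∀ s y, Measurable (k s y) := fun s y => (hkm s).of_uncurry_left
  have hkle : ∀ y z, ENNReal.ofReal (euclDist y z) ^ (ω - n) ≤ (k p y * k q y) z := by
    intro y z
    have h1 : ENNReal.ofReal (euclDist y z) ^ (ω - n) ≤ ENNReal.ofReal (dist y z) ^ (ω - n) :=
      rpow_anti (ENNReal.ofReal_le_ofReal (dist_le_eucl y z)) (by linarith)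
    refine h1.trans ?_
    simp only [Pi.mul_apply, hk]
    rw [show ω - n = -p + -q by linarith]
    by_cases h0 : ENNReal.ofReal (dist y z) = 0
    · rw [h0, ENNReal.zero_rpow_of_neg (by linarith : -p < 0),
        ENNReal.zero_rpow_of_neg (by linarith : -q < 0)]
      simp
    · rw [ENNReal.rpow_add _ _ h0 ENNReal.ofReal_ne_top]
  set G : Rn n → Rn n → ℝ≥0∞ := fun y z =>
    {w : Rn n × Rn n | dist w.1 w.2 ≤ t}.indicator (Function.uncurry (k (p * r'))) (y, z) with hG
  have hGset : MeasurableSet {w : Rn n × Rn n | dist w.1 w.2 ≤ t} :=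
    (isClosed_le (by fun_prop) (by fun_prop)).measurableSet
  have hGm : Measurable (Function.uncurry G) := (hkm _).indicator hGset
  have hGy : ∀ y, ∫⁻ z in closedBall y t, k (p * r') y z ∂μ = ∫⁻ z, G y z ∂μ := by
    intro y
    rw [← lintegral_indicator isClosed_closedBall.measurableSet]
    congr 1; ext z
    simp only [hG, indicator, mem_closedBall, mem_setOf_eq, Function.uncurry, dist_comm z y]
  have hGz : ∀ z, ∫⁻ y, G y z ≤ ENNReal.ofReal (K₁ * 2 ^ n * t ^ (n - p * r')) := by
    intro z
    have : ∫⁻ y, G y z = ∫⁻ y in closedBall z t, ENNReal.ofReal (dist z y) ^ (-(p * r')) := by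
      rw [← lintegral_indicator isClosed_closedBall.measurableSet]
      congr 1; ext y
      simp only [hG, hk, indicator, mem_closedBall, mem_setOf_eq, Function.uncurry, dist_comm z y]
    rw [this]
    refine H₁ n volume z t (2 ^ n) ht (by positivity) ?_
    intro ρ h0 _
    rw [Real.volume_pi_closedBall _ h0.le, Fintype.card_fin, mul_pow, Real.rpow_natCast]
  have inner : ∀ y ∈ closedBall x t,
      (∫⁻ z in closedBall y t ∩ S, ENNReal.ofReal (euclDist y z) ^ (ω - n) ∂μH[d]) ^ r'
        ≤ ENNReal.ofReal (A ^ (r' / r)) * ∫⁻ z, G y z ∂μ := by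
    intro y hy
    have hset : (μH[d]).restrict (closedBall y t ∩ S) = μ.restrict (closedBall y t) := by
      rw [hμ, Measure.restrict_restrict isClosed_closedBall.measurableSet]
      congr 1
      ext z
      simp only [mem_inter_iff, mem_closedBall] at hy ⊢
      constructor
      · rintro ⟨h1, h2⟩
        exact ⟨h1, by linarith [dist_triangle z y x], h2⟩
      · rintro ⟨h1, _, h2⟩
        exact ⟨h1, h2⟩
    have hh := ENNReal.lintegral_mul_le_Lp_mul_Lq (μ.restrict (closedBall y t)) hconj
      (hkm' p y).aemeasurable (hkm' q y).aemeasurable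
    have e : ∀ (s u : ℝ) (z : Rn n), k s y z ^ u = k (s * u) y z := by
      intro s u z
      simp only [hk]
      rw [← ENNReal.rpow_mul, neg_mul]
    simp only [e] at hh
    rw [hGy] at hh
    have h2 := H₂ n μ y t M ht hM.le (hμb y)
    calc (∫⁻ z in closedBall y t ∩ S, ENNReal.ofReal (euclDist y z) ^ (ω - n) ∂μH[d]) ^ r'
        ≤ ((∫⁻ z, G y z ∂μ) ^ (1 / r') * (ENNReal.ofReal A) ^ (1 / r)) ^ r' := by
          apply ENNReal.rpow_le_rpow _ hr'0.le
          rw [hset]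
          refine (lintegral_mono (hkle y)).trans (hh.trans ?_)
          gcongr
      _ = _ := by
          rw [ENNReal.mul_rpow_of_nonneg _ _ hr'0.le, ← ENNReal.rpow_mul, ← ENNReal.rpow_mul,
            one_div_mul_cancel hr'0.ne', ENNReal.rpow_one, mul_comm,
            ENNReal.ofReal_rpow_of_pos hA0, one_div_mul_eq_div]
  have outer : ∫⁻ y in closedBall x t,
      (∫⁻ z in closedBall y t ∩ S, ENNReal.ofReal (euclDist y z) ^ (ω - n) ∂μH[d]) ^ r'
        ≤ ENNReal.ofReal (A ^ (r' / r) * B) := by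
    calc _ ≤ ∫⁻ y in closedBall x t, ENNReal.ofReal (A ^ (r' / r)) * ∫⁻ z, G y z ∂μ :=
          setLIntegral_mono' isClosed_closedBall.measurableSet inner
      _ ≤ ∫⁻ y, ENNReal.ofReal (A ^ (r' / r)) * ∫⁻ z, G y z ∂μ := setLIntegral_le_lintegral _ _
      _ = ENNReal.ofReal (A ^ (r' / r)) * ∫⁻ y, ∫⁻ z, G y z ∂μ :=
          lintegral_const_mul' _ _ ENNReal.ofReal_ne_top
      _ = ENNReal.ofReal (A ^ (r' / r)) * ∫⁻ z, ∫⁻ y, G y z ∂volume ∂μ := by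
          rw [lintegral_lintegral_swap hGm.aemeasurable]
      _ ≤ ENNReal.ofReal (A ^ (r' / r)) *
          ∫⁻ z, ENNReal.ofReal (K₁ * 2 ^ n * t ^ (n - p * r')) ∂μ := by
          gcongr with z
          exact hGz z
      _ ≤ ENNReal.ofReal (A ^ (r' / r)) * (ENNReal.ofReal (K₁ * 2 ^ n * t ^ (n - p * r')) *
          ENNReal.ofReal (M * (2 * t) ^ d)) := by
          rw [lintegral_const]
          gcongr
      _ = _ := by
          rw [← ENNReal.ofReal_mul (by positivity), ← ENNReal.ofReal_mul (by positivity)]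
          congr 2
          rw [hB, hb, Real.rpow_add ht, Real.mul_rpow (by norm_num) ht.le]
          ring
  refine (ENNReal.rpow_le_rpow outer hr'i.le).trans (le_of_eq ?_)
  rw [ENNReal.ofReal_rpow_of_pos (by positivity), ← ENNReal.ofReal_mul (by positivity)]
  congr 1
  rw [hA, hB, Real.mul_rpow ha0.le (by positivity), ← Real.rpow_mul ht.le,
    show a ^ (r' / r) * t ^ ((d - q * r) * (r' / r)) * (b * t ^ (n - p * r' + d)) =
      (a ^ (r' / r) * b) * (t ^ ((d - q * r) * (r' / r)) * t ^ (n - p * r' + d)) by ring,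
    ← Real.rpow_add ht, Real.mul_rpow (by positivity) (by positivity), ← Real.rpow_mul ht.le]
  congr 2
  have h2 : 1 / r' = 1 - 1 / r := by linarith
  have h3 : ((d - q * r) * (r' / r) + (n - p * r' + d)) * (1 / r') =
      d * (1 / r) - q + n * (1 / r') - p + d * (1 / r') := by
    field_simp
    ring
  rw [h3, h2, show ω = n - (p + q) by linarith]
  ring
end
end
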